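/- arXiv:math/0111182 — 6 statements merged into one kernel-verified Lean document; each statement's English description precedes it below -/
import Mathlib

section
/- Let X be a compact, second countable, Hausdorff, totally disconnected space, let R = ∪_n R_n be an AF equivalence relation on X (with (R_n) an increasing sequence of proper equivalence relations), let A be a locally compact, second countable, Hausdorff topological group, and let c : R → A be a continuous cocycle. Then c is continuously cohomologous to a continuous cocycle taking finitely many values on the graph of each R_n: there exists a continuous map ψ : X → A such that the map (x,y) ↦ ψ(x) c(x,y) ψ(y)^{-1} is a continuous cocycle on R which takes only finitely many values on the graph of each R_n. -/
/-- An equivalence relation `r` on a topological space `X` is proper if its graph is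
closed in `X × X` and the quotient map onto the quotient space (with the quotient
topology) is a local homeomorphism. -/
def IsProperEquivRel {X : Type*} [TopologicalSpace X] (r : X → X → Prop) : Prop :=
  Equivalence r ∧ IsClosed {p : X × X | r p.1 p.2} ∧ IsLocalHomeomorph (Quot.mk r)

/-!
Each `R n` admits a continuous map `s n : X → X` picking one point in every class, so on `R n` the
cocycle is a coboundary: `c x y = b n x * (b n y)⁻¹` with `b n x = c x (s n x)`. For a locally
constant `f n`, the map `f n * (b n)⁻¹` therefore turns `c` into `(x, y) ↦ f n x * (f n y)⁻¹` on
`R n`, which has finitely many values by compactness. Replacing `f n` by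
`f (n + 1) = f n * (g ∘ s n)` does not affect these values, because `g ∘ s n` is `R n`-invariant.
Since `b (n + 1) = b n * (b (n + 1) ∘ s n)` and locally constant maps are dense in `C(X, A)`,
choosing `g` close to `b (n + 1)` makes `f (n + 1) * (b (n + 1))⁻¹` as close as desired to
`f n * (b n)⁻¹`. The sequence then converges uniformly, and its limit is `ψ`.
-/

open Filter Function Set TopologicalSpace Topology

section ContinuousSections

variable {X Y : Type*} [TopologicalSpace X] [CompactSpace X] [T2Space X]
  [TotallyDisconnectedSpace X] [TopologicalSpace Y] [T2Space Y] {π : X → Y}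

theorem exists_isClopen_injOn_image_eq_range (hπ : IsLocalHomeomorph π) :
    ∃ T : Set X, IsClopen T ∧ InjOn π T ∧ π '' T = range π := by
  suffices h : ∃ T : Set X, IsClopen T ∧ InjOn π T ∧ π '' univ ⊆ π '' T by
    obtain ⟨T, hT, hinj, hsub⟩ := h
    exact ⟨T, hT, hinj, (image_subset_range π T).antisymm (image_univ ▸ hsub)⟩
  refine isCompact_univ.induction_on
    (p := fun S ↦ ∃ T : Set X, IsClopen T ∧ InjOn π T ∧ π '' S ⊆ π '' T) ?_ ?_ ?_ ?_
  · exact ⟨∅, isClopen_empty, injOn_empty π, subset_rfl⟩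
  · rintro S S' hSS' ⟨T, hT, hinj, hS'T⟩
    exact ⟨T, hT, hinj, (image_mono hSS').trans hS'T⟩
  · rintro S S' ⟨T, hT, hinj, hST⟩ ⟨T', hT', hinj', hST'⟩
    have hsat : IsClopen (π ⁻¹' (π '' T)) :=
      ⟨(hπ.continuous.isClosedMap T hT.isClosed).preimage hπ.continuous,
        (hπ.isOpenMap T hT.isOpen).preimage hπ.continuous⟩
    refine ⟨T ∪ T' \ π ⁻¹' (π '' T), hT.union (hT'.diff hsat), ?_, ?_⟩
    · refine (injOn_union (disjoint_sdiff_right.mono_left (subset_preimage_image π T))).2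
        ⟨hinj, hinj'.mono sdiff_subset, ?_⟩
      rintro x hx y ⟨-, hy⟩ hxy
      exact hy ⟨x, hx, hxy⟩
    · rw [image_union, image_union, image_sdiff_preimage, union_sdiff_self]
      exact union_subset_union hST hST'
  · intro x _
    obtain ⟨e, hxe, rfl⟩ := hπ x
    obtain ⟨W, hW, hxW, hWe⟩ := compact_exists_isClopen_in_isOpen e.open_source hxe
    exact ⟨W, mem_nhdsWithin_of_mem_nhds (hW.isOpen.mem_nhds hxW), W, hW, e.injOn.mono hWe,
      subset_rfl⟩

theorem exists_continuousMap_rightInverse_of_isLocalHomeomorph (hπ : IsLocalHomeomorph π)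
    (hsurj : Surjective π) : ∃ σ : C(Y, X), RightInverse σ π := by
  obtain ⟨T, hT, hinj, himage⟩ := exists_isClopen_injOn_image_eq_range hπ
  have : CompactSpace T := isCompact_iff_compactSpace.1 hT.isClosed.isCompact
  have hbij : Bijective (T.domRestrict π) :=
    ⟨hinj.injective, by rw [← range_eq_univ, range_domRestrict, himage, hsurj.range_eq]⟩
  let e : T ≃ₜ Y := Continuous.homeoOfEquivCompactToT2 (f := Equiv.ofBijective _ hbij)
    (hπ.continuous.comp continuous_subtype_val)
  exact ⟨⟨fun y ↦ e.symm y, by fun_prop⟩, e.apply_symm_apply⟩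

end ContinuousSections

/-- `s` picks one point in each class of `r`: it moves points inside their class and is constant on
classes. -/
structure IsSelector {X : Type*} (r : X → X → Prop) (s : X → X) : Prop where
  rel (x : X) : r x (s x)
  eq_of_rel {x y : X} : r x y → s x = s y

theorem IsProperEquivRel.t2Space_quot {X : Type*} [TopologicalSpace X] {r : X → X → Prop}
    (hr : IsProperEquivRel r) : T2Space (Quot r) := by
  obtain ⟨hequiv, hclosed, hlocal⟩ := hr
  have hquot : IsOpenQuotientMap (Quot.mk r) :=
    ⟨Quot.mk_surjective, hlocal.continuous, hlocal.isOpenMap⟩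
  simpa only [t2Space_iff_of_isOpenQuotientMap hquot, hequiv.quot_mk_eq_iff] using hclosed

theorem IsProperEquivRel.exists_isSelector {X : Type*} [TopologicalSpace X] [CompactSpace X]
    [T2Space X] [TotallyDisconnectedSpace X] {r : X → X → Prop} (hr : IsProperEquivRel r) :
    ∃ s : C(X, X), IsSelector r s := by
  have := hr.t2Space_quot
  obtain ⟨hequiv, -, hlocal⟩ := hr
  obtain ⟨σ, hσ⟩ :=
    exists_continuousMap_rightInverse_of_isLocalHomeomorph hlocal Quot.mk_surjective
  refine ⟨σ.comp ⟨Quot.mk r, hlocal.continuous⟩, fun x ↦ ?_, fun hxy ↦ ?_⟩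
  · exact (hequiv.quot_mk_eq_iff _ _).1 (hσ (Quot.mk r x)).symm
  · exact congrArg σ (Quot.sound hxy)

section Cocycles

variable {X A : Type*} [Group A] {r r' : X → X → Prop} {s s' : X → X} {c : X → X → A}

/-- `c` is a cocycle on `r` with values in `A`. It is encoded as a function on all pairs, whose
values outside `r` are irrelevant. -/
def IsCocycleOn (r : X → X → Prop) (c : X → X → A) : Prop :=
  ∀ x y z, r x y → r y z → c x y * c y z = c x z

theorem IsCocycleOn.mono (hc : IsCocycleOn r' c) (hr : r ≤ r') : IsCocycleOn r c :=
  fun x y z hxy hyz ↦ hc x y z (hr x y hxy) (hr y z hyz)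

theorem IsCocycleOn.conj (hc : IsCocycleOn r c) (ψ : X → A) :
    IsCocycleOn r fun x y ↦ ψ x * c x y * (ψ y)⁻¹ := by
  intro x y z hxy hyz
  simp only [← hc x y z hxy hyz]
  group

theorem IsCocycleOn.eq_mul_inv_of_isSelector (hc : IsCocycleOn r c) (hs : IsSelector r s) {x y : X}
    (hxy : r x y) : c x y = c x (s x) * (c y (s y))⁻¹ := by
  rw [eq_mul_inv_iff_mul_eq, hc x y (s y) hxy (hs.rel y), hs.eq_of_rel hxy]

theorem IsCocycleOn.mul_apply_selector (hc : IsCocycleOn r' c) (hr : r ≤ r') (hs : IsSelector r s)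
    (hs' : IsSelector r' s') (x : X) : c x (s x) * c (s x) (s' (s x)) = c x (s' x) := by
  have hx : r' x (s x) := hr _ _ (hs.rel x)
  rw [hc _ _ _ hx (hs'.rel (s x)), hs'.eq_of_rel hx]

theorem conj_eq_mul_inv_of_tendsto [TopologicalSpace A] [IsTopologicalGroup A] [T2Space A]
    {R : ℕ → X → X → Prop} (hR : Monotone R) {s : ℕ → X → X} (hs : ∀ n, IsSelector (R n) (s n))
    (hc : ∀ n, IsCocycleOn (R n) c) {f : ℕ → X → A}
    (hf : ∀ n x y, s n x = s n y → f (n + 1) x * (f (n + 1) y)⁻¹ = f n x * (f n y)⁻¹)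
    {ψ : X → A} (hψ : ∀ x, Tendsto (fun n ↦ f n x * (c x (s n x))⁻¹) atTop (𝓝 (ψ x)))
    {n : ℕ} {x y : X} (hxy : R n x y) : ψ x * c x y * (ψ y)⁻¹ = f n x * (f n y)⁻¹ := by
  have hconst : ∀ m ≥ n, f m x * (f m y)⁻¹ = f n x * (f n y)⁻¹ :=
    Nat.le_induction rfl fun m hm ih ↦ (hf m x y ((hs m).eq_of_rel (hR hm x y hxy))).trans ih
  refine tendsto_nhds_unique (((hψ x).mul_const (c x y)).mul (hψ y).inv)
    (tendsto_const_nhds.congr' ?_)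
  filter_upwards [eventually_ge_atTop n] with m hm
  rw [← hconst m hm, (hc m).eq_mul_inv_of_isSelector (hs m) (hR hm x y hxy)]
  group

end Cocycles

theorem denseRange_locallyConstant_toContinuousMap {X V : Type*} [TopologicalSpace X]
    [CompactSpace X] [T2Space X] [TotallyDisconnectedSpace X] [PseudoMetricSpace V] :
    DenseRange ((↑) : LocallyConstant X V → C(X, V)) := by
  refine Metric.denseRange_iff.2 fun f ε hε ↦ ?_
  obtain ⟨n, g, h, hg, hfg⟩ := f.exists_finite_approximation_of_mem_nhds_diagonal
    (nhdsSet_diagonal_le_uniformity (Metric.dist_mem_uniformity hε))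
  let g' : LocallyConstant X (Fin n) := ⟨g, (IsLocallyConstant.iff_continuous g).2 hg⟩
  exact ⟨g'.map h, (ContinuousMap.dist_lt_iff hε).2 hfg⟩

section Approximation

variable {X A : Type*} [TopologicalSpace X] [CompactSpace X] [T2Space X]
  [TotallyDisconnectedSpace X] [Group A]

theorem exists_locallyConstant_dist_lt [PseudoMetricSpace A] [IsTopologicalGroup A]
    {s : C(X, X)} {b b' : C(X, A)} (hb : b * b'.comp s = b') (f : LocallyConstant X A)
    {ε : ℝ} (hε : 0 < ε) :
    ∃ f' : LocallyConstant X A,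
      (∀ x y, s x = s y → f' x * (f' y)⁻¹ = f x * (f y)⁻¹) ∧
      dist ((f : C(X, A)) * b⁻¹) (f' * b'⁻¹) < ε := by
  let Φ : C(X, A) → C(X, A) := fun g ↦ f * g.comp s * b'⁻¹
  have hΦ : Continuous Φ :=
    (continuous_const.mul (ContinuousMap.continuous_precomp s)).mul continuous_const
  have hΦb' : Φ b' = f * b⁻¹ := by
    simp only [Φ, eq_inv_mul_of_mul_eq hb]
    group
  obtain ⟨g, hg⟩ := denseRange_locallyConstant_toContinuousMap.exists_mem_open
    (Metric.isOpen_ball.preimage hΦ) ⟨b', Metric.mem_ball_self (x := Φ b') hε⟩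
  refine ⟨f * g.comap s, fun x y hxy ↦ ?_, ?_⟩
  · simp [hxy, mul_assoc]
  · rw [← hΦb', dist_comm]
    exact hg

theorem exists_locallyConstant_seq_tendsto [TopologicalSpace A] [IsTopologicalGroup A]
    [IsCompletelyMetrizableSpace A] (s : ℕ → C(X, X)) (b : ℕ → C(X, A))
    (hb : ∀ n, b n * (b (n + 1)).comp (s n) = b (n + 1)) :
    ∃ (f : ℕ → LocallyConstant X A) (ψ : C(X, A)),
      (∀ n x y, s n x = s n y → f (n + 1) x * (f (n + 1) y)⁻¹ = f n x * (f n y)⁻¹) ∧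
      Tendsto (fun n ↦ (f n : C(X, A)) * (b n)⁻¹) atTop (𝓝 ψ) := by
  let := upgradeIsCompletelyMetrizable A
  choose next hnext_eq hnext_dist using fun (n : ℕ) (f : LocallyConstant X A) ↦
    exists_locallyConstant_dist_lt (hb n) f (ε := 1 / 2 / 2 ^ n) (by positivity)
  let f : ℕ → LocallyConstant X A := fun n ↦ Nat.rec 1 next n
  obtain ⟨ψ, hψ⟩ := cauchySeq_tendsto_of_complete
    (cauchySeq_of_le_geometric_two fun n ↦ (hnext_dist n (f n)).le)
  exact ⟨f, ψ, fun n ↦ hnext_eq n (f n), hψ⟩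

end Approximation

theorem isCompletelyMetrizableSpace_of_weaklyLocallyCompactSpace (A : Type*) [Group A]
    [TopologicalSpace A] [IsTopologicalGroup A] [WeaklyLocallyCompactSpace A]
    [FirstCountableTopology A] [T0Space A] : IsCompletelyMetrizableSpace A := by
  let := IsTopologicalGroup.rightUniformSpace A
  have : IsRightUniformGroup A := ⟨rfl⟩
  have : CompleteSpace A := IsRightUniformGroup.completeSpace_of_weaklyLocallyCompactSpace
  have : (uniformity A).IsCountablyGenerated := by
    rw [uniformity_eq_comap_mul_inv_nhds_one]
    infer_instance
  infer_instance

theorem continuous_cocycle_cohomologous_finitely_many_values_general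
    {X : Type*} [TopologicalSpace X] [CompactSpace X] [T2Space X] [TotallyDisconnectedSpace X]
    {A : Type*} [Group A] [TopologicalSpace A] [IsTopologicalGroup A]
    [IsCompletelyMetrizableSpace A]
    (R : ℕ → X → X → Prop)
    (hproper : ∀ n, IsProperEquivRel (R n))
    (hmono : ∀ n x y, R n x y → R (n + 1) x y)
    (c : X → X → A)
    (hcoc : ∀ x y z, (∃ n, R n x y) → (∃ n, R n y z) → c x y * c y z = c x z)
    (hcont : ∀ n, ContinuousOn (fun p : X × X => c p.1 p.2) {p | R n p.1 p.2}) :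
    ∃ ψ : X → A, Continuous ψ ∧
      (∀ x y z, (∃ n, R n x y) → (∃ n, R n y z) →
        (ψ x * c x y * (ψ y)⁻¹) * (ψ y * c y z * (ψ z)⁻¹) = ψ x * c x z * (ψ z)⁻¹) ∧
      (∀ n, ContinuousOn (fun p : X × X => ψ p.1 * c p.1 p.2 * (ψ p.2)⁻¹)
        {p | R n p.1 p.2}) ∧
      (∀ n, {a : A | ∃ x y, R n x y ∧ ψ x * c x y * (ψ y)⁻¹ = a}.Finite) := by
  have hR : Monotone R := monotone_nat_of_le_succ hmono
  have hcocR (n : ℕ) : IsCocycleOn (R n) c := IsCocycleOn.mono hcoc fun _ _ h ↦ ⟨n, h⟩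
  choose s hs using fun n ↦ (hproper n).exists_isSelector
  let b (n : ℕ) : C(X, A) := ⟨fun x ↦ c x (s n x),
    (hcont n).comp_continuous (f := fun x ↦ (x, s n x)) (by fun_prop) (hs n).rel⟩
  have hb (n : ℕ) : b n * (b (n + 1)).comp (s n) = b (n + 1) :=
    ContinuousMap.ext ((hcocR (n + 1)).mul_apply_selector (hmono n) (hs n) (hs (n + 1)))
  obtain ⟨f, ψ, hf, hψ⟩ := exists_locallyConstant_seq_tendsto s b hb
  have hψx (x : X) : Tendsto (fun n ↦ f n x * (c x (s n x))⁻¹) atTop (𝓝 (ψ x)) :=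
    ((continuous_eval_const x).tendsto ψ).comp hψ
  refine ⟨ψ, ψ.continuous, IsCocycleOn.conj hcoc ψ, fun n ↦ ?_, fun n ↦ ?_⟩
  · exact ContinuousOn.mul (ContinuousOn.mul (by fun_prop) (hcont n)) (by fun_prop)
  · refine ((f n).range_finite.image2 (· * ·⁻¹) (f n).range_finite).subset ?_
    rintro _ ⟨x, y, hxy, rfl⟩
    exact ⟨f n x, mem_range_self x, f n y, mem_range_self y,
      (conj_eq_mul_inv_of_tendsto hR hs hcocR (f := fun n ↦ f n) hf hψx hxy).symm⟩

/-- **Every continuous cocycle on an AF equivalence relation is continuously cohomologous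
to one taking finitely many values on each finite stage.** Let `X` be a compact, second
countable, Hausdorff, totally disconnected space, let `R = ⋃ n, R n` be an AF equivalence
relation on `X` (with `(R n)` an increasing sequence of proper equivalence relations),
let `A` be a locally compact second countable Hausdorff topological group and let `c` be
a continuous cocycle on `R` with values in `A`. Then there is a continuous `ψ : X → A`
such that `(x, y) ↦ ψ x * c (x, y) * (ψ y)⁻¹` is a continuous cocycle on `R` taking only
finitely many values on (the graph of) each `R n`. -/
theorem continuous_cocycle_cohomologous_finitely_many_values
    {X : Type*} [TopologicalSpace X] [CompactSpace X] [T2Space X]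
    [SecondCountableTopology X] [TotallyDisconnectedSpace X]
    {A : Type*} [Group A] [TopologicalSpace A] [IsTopologicalGroup A]
    [LocallyCompactSpace A] [SecondCountableTopology A] [T2Space A]
    (R : ℕ → X → X → Prop)
    (hproper : ∀ n, IsProperEquivRel (R n))
    (hmono : ∀ n x y, R n x y → R (n + 1) x y)
    (c : X → X → A)
    (hcoc : ∀ x y z, (∃ n, R n x y) → (∃ n, R n y z) → c x y * c y z = c x z)
    (hcont : ∀ n, ContinuousOn (fun p : X × X => c p.1 p.2) {p | R n p.1 p.2}) :
    ∃ ψ : X → A, Continuous ψ ∧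
      (∀ x y z, (∃ n, R n x y) → (∃ n, R n y z) →
        (ψ x * c x y * (ψ y)⁻¹) * (ψ y * c y z * (ψ z)⁻¹) = ψ x * c x z * (ψ z)⁻¹) ∧
      (∀ n, ContinuousOn (fun p : X × X => ψ p.1 * c p.1 p.2 * (ψ p.2)⁻¹)
        {p | R n p.1 p.2}) ∧
      (∀ n, {a : A | ∃ x y, R n x y ∧ ψ x * c x y * (ψ y)⁻¹ = a}.Finite) := by
  have := isCompletelyMetrizableSpace_of_weaklyLocallyCompactSpace A
  exact continuous_cocycle_cohomologous_finitely_many_values_general R hproper hmono c hcoc hcont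
end

section
/- Let T be a surjective local homeomorphism of a compact metric space X onto itself and let φ ∈ C(X,ℝ). A Borel probability measure μ on X satisfies the Radon–Nikodym equation D_μ = e^{c_φ} if and only if ∫_X L_φ f dμ = ∫_X f dμ for every continuous function f : X → ℝ. -/
open MeasureTheory

/-- The Birkhoff sum `∑_{k < n} φ(T^k x)`. -/
def birkhoff {X : Type*} (T : X → X) (φ : X → ℝ) (n : ℕ) (x : X) : ℝ :=
  ∑ k ∈ Finset.range n, φ (T^[k] x)

/-- The Ruelle transfer operator `L_φ f (x) = ∑_{T y = x} e^{φ(y)} f(y)` associated to a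
map `T` with finite fibers and a potential `φ`. -/
noncomputable def ruelle {X : Type*} (T : X → X) (φ : X → ℝ) (f : X → ℝ) (x : X) : ℝ :=
  ∑ᶠ y ∈ {y | T y = x}, Real.exp (φ y) * f y

/-- A Borel probability measure `μ` on `X` satisfies the Radon–Nikodym equation
`D_μ = e^{c_φ}` for the groupoid `G(X, T)` if for all `m, n ∈ ℕ`, every Borel set `A`
and every injective Borel map `h` on `A` with `T^m (h x) = T^n x` on `A`, one has
`μ(h(A)) = ∫_A e^{c_φ(h x, m - n, x)} dμ(x)`, where
`c_φ(h x, m - n, x) = ∑_{k < m} φ(T^k (h x)) - ∑_{k < n} φ(T^k x)`. -/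
def SatisfiesRN {X : Type*} [MeasurableSpace X] (T : X → X) (φ : X → ℝ)
    (μ : Measure X) : Prop :=
  ∀ (m n : ℕ) (A : Set X) (h : X → X), MeasurableSet A → Measurable h →
    Set.InjOn h A → (∀ x ∈ A, T^[m] (h x) = T^[n] x) →
    μ (h '' A) =
      ∫⁻ x in A, ENNReal.ofReal (Real.exp (birkhoff T φ m (h x) - birkhoff T φ n x)) ∂μ

open ProbabilityTheory Set Function
open scoped ENNReal

/-!
For every measurable `f ≥ 0`, `L_φ f` is a sum over fibers, so `L_φ` extends to `[0, ∞]`-valued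
functions and its transpose acts on measures through a kernel. Testing against continuous functions
shows that `∫ L_φ f dμ = ∫ f dμ` for continuous `f` amounts to `L_φ^t μ = μ`.

If `D_μ = e^{c_φ}`, the equation for the inverse branch `T(B) → B` of `T` on a set `B` where `T` is
injective reads `∫ L_φ 1_B dμ = μ(B)`, and countably many such sets cover `X`. Conversely, if
`L_φ^t μ = μ`, then `L_φ^n f (x) = ∑_{T^n y = x} e^{S_n φ(y)} f(y)` has the same integral as `f` for
all `n`; the bijection `h : A → h(A)` matches the fibers of `T^n` in `A` with those of `T^m` in
`h(A)`, so `L_φ^m 1_{h(A)} = L_φ^n (1_A e^{c_φ})`, and integrating gives `D_μ = e^{c_φ}`.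
-/

section Indicator

variable {X : Type*}

lemma mul_indicator_right {M : Type*} [MulZeroClass M] (w f : X → M) (A : Set X) :
    w * A.indicator f = A.indicator (w * f) :=
  funext fun _ => (indicator_mul_right A w f).symm

lemma tsum_indicator_disjointed {M : Type*} [AddCommMonoid M] [TopologicalSpace M]
    {A : ℕ → Set X} (hA : ⋃ n, A n = univ) (f : X → M) (x : X) :
    ∑' n, (disjointed A n).indicator f x = f x := by
  obtain ⟨n, hn⟩ : ∃ n, x ∈ disjointed A n := by
    rw [← mem_iUnion, iUnion_disjointed, hA]
    exact mem_univ x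
  rw [tsum_eq_single n, indicator_of_mem hn]
  exact fun m hm => indicator_of_notMem
    (fun hx => disjoint_left.1 (disjoint_disjointed A hm) hx hn) f

end Indicator

section FiberSum

variable {X Y Z : Type*}

/-- The sum of an extended nonnegative function over the fiber of `T` above `y`; the operator
`L_φ` is `f ↦ fiberSum T (e^φ f)`. -/
noncomputable def fiberSum (T : X → Y) (f : X → ℝ≥0∞) (y : Y) : ℝ≥0∞ :=
  ∑' x : T ⁻¹' {y}, f x

lemma fiberSum_of_injective {e : X → Y} (he : Injective e) (f : X → ℝ≥0∞) :
    fiberSum e f = extend e f 0 := by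
  funext y
  by_cases hy : ∃ x, e x = y
  · obtain ⟨x, rfl⟩ := hy
    have fiber_eq : e ⁻¹' {e x} = {x} := by
      ext x'
      exact he.eq_iff
    rw [he.extend_apply, fiberSum, fiber_eq, tsum_singleton]
  · have : IsEmpty (e ⁻¹' {y}) := ⟨fun x => hy ⟨x, x.2⟩⟩
    rw [extend_apply' _ _ _ hy, fiberSum, tsum_empty, Pi.zero_apply]

lemma fiberSum_id (f : X → ℝ≥0∞) : fiberSum id f = f := by
  rw [fiberSum_of_injective injective_id, extend_id]

lemma fiberSum_comp (S : Y → Z) (T : X → Y) (f : X → ℝ≥0∞) :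
    fiberSum (S ∘ T) f = fiberSum S (fiberSum T f) := by
  funext z
  let e : (S ∘ T) ⁻¹' {z} ≃ (y : S ⁻¹' {z}) × T ⁻¹' {(y : Y)} :=
    { toFun := fun x => ⟨⟨T x, x.2⟩, ⟨x, rfl⟩⟩
      invFun := fun p => ⟨p.2, (congrArg S p.2.2).trans p.1.2⟩
      left_inv := fun _ => rfl
      right_inv := by
        rintro ⟨⟨y, hy⟩, ⟨x, hx⟩⟩
        change T x = y at hx
        subst hx
        rfl }
  calc fiberSum (S ∘ T) f z
      = ∑' p : (y : S ⁻¹' {z}) × T ⁻¹' {(y : Y)}, f p.2 := e.tsum_eq fun p => f p.2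
    _ = fiberSum S (fiberSum T f) z :=
      ENNReal.tsum_sigma' fun p : (y : S ⁻¹' {z}) × T ⁻¹' {(y : Y)} => f p.2

lemma fiberSum_mul_comp (T : X → Y) (g : Y → ℝ≥0∞) (f : X → ℝ≥0∞) :
    fiberSum T (g ∘ T * f) = g * fiberSum T f := by
  funext y
  simp only [fiberSum, Pi.mul_apply, ← ENNReal.tsum_mul_left]
  exact tsum_congr fun ⟨x, hx⟩ => congrArg (g · * f x) hx

lemma fiberSum_tsum {ι : Type*} (T : X → Y) (f : ι → X → ℝ≥0∞) (y : Y) :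
    fiberSum T (fun x => ∑' i, f i x) y = ∑' i, fiberSum T (f i) y :=
  ENNReal.tsum_comm

lemma fiberSum_domRestrict_of_injOn {h : X → Y} {A : Set X} (hinj : InjOn h A) (f : Y → ℝ≥0∞) :
    fiberSum (A.domRestrict h) (A.domRestrict (f ∘ h)) = (h '' A).indicator f := by
  rw [fiberSum_of_injective (injOn_iff_injective.1 hinj)]
  funext y
  by_cases hy : y ∈ h '' A
  · rw [indicator_of_mem hy]
    obtain ⟨x, hx, rfl⟩ := hy
    exact (injOn_iff_injective.1 hinj).extend_apply _ _ ⟨x, hx⟩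
  · rw [indicator_of_notMem hy, extend_apply', Pi.zero_apply]
    rintro ⟨x, rfl⟩
    exact hy ⟨x, x.2, rfl⟩

lemma fiberSum_indicator (T : X → Y) (A : Set X) (f : X → ℝ≥0∞) :
    fiberSum T (A.indicator f) = fiberSum (A.domRestrict T) (A.domRestrict f) := by
  have h := fiberSum_domRestrict_of_injOn (injOn_id A) f
  rw [image_id] at h
  rw [← h, ← fiberSum_comp]
  rfl

lemma fiberSum_indicator_image {h : X → Y} {A : Set X} (hinj : InjOn h A) {S : Y → Z} {R : X → Z}
    (hSR : ∀ x ∈ A, S (h x) = R x) (f : Y → ℝ≥0∞) :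
    fiberSum S ((h '' A).indicator f) = fiberSum R (A.indicator (f ∘ h)) := by
  have hSR' : S ∘ A.domRestrict h = A.domRestrict R := funext fun x => hSR x x.2
  rw [← fiberSum_domRestrict_of_injOn hinj, ← fiberSum_comp, hSR', fiberSum_indicator]

end FiberSum

section FiberMeasure

variable {X Y : Type*} [MeasurableSpace X]

/-- The measure `∑_{T x = y} w(x) δ_x` on the fiber of `T` above `y`. -/
noncomputable def fiberMeasure (T : X → Y) (w : X → ℝ≥0∞) (y : Y) : Measure X :=
  Measure.sum fun x : T ⁻¹' {y} => w x • Measure.dirac (x : X)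

lemma lintegral_fiberMeasure (T : X → Y) (w : X → ℝ≥0∞) {f : X → ℝ≥0∞} (hf : Measurable f)
    (y : Y) : ∫⁻ x, f x ∂fiberMeasure T w y = fiberSum T (w * f) y := by
  simp only [fiberMeasure, lintegral_sum_measure, lintegral_smul_measure, lintegral_dirac' _ hf]
  rfl

lemma fiberMeasure_apply (T : X → Y) (w : X → ℝ≥0∞) {B : Set X} (hB : MeasurableSet B) (y : Y) :
    fiberMeasure T w y B = fiberSum T (B.indicator w) y := by
  rw [← lintegral_indicator_one hB, lintegral_fiberMeasure T w (measurable_one.indicator hB),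
    mul_indicator_right, mul_one]

end FiberMeasure

section FiberKernel

variable {X Y : Type*} [MeasurableSpace X]

/-- `X` is a countable union of measurable sets on each of which `T` is injective. This is the
measurable trace of local injectivity that makes sums over the fibers of `T` measurable. -/
def IsCountablyPiecewiseInjective (T : X → Y) : Prop :=
  ∃ A : ℕ → Set X, (∀ n, MeasurableSet (A n) ∧ InjOn T (A n)) ∧ ⋃ n, A n = univ

variable [MeasurableSpace Y]

lemma measurableEmbedding_domRestrict [StandardBorelSpace X] [MeasurableSpace.CountablySeparated Y]
    {T : X → Y} (hT : Measurable T) {A : Set X} (hA : MeasurableSet A) (hinj : InjOn T A) :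
    MeasurableEmbedding (A.domRestrict T) :=
  have : StandardBorelSpace A := hA.standardBorel
  (hT.comp measurable_subtype_coe).measurableEmbedding (injOn_iff_injective.1 hinj)

lemma exists_measurable_leftInvOn [StandardBorelSpace X] [MeasurableSpace.CountablySeparated Y]
    [Nonempty X] {T : X → Y} (hT : Measurable T) {A : Set X} (hA : MeasurableSet A)
    (hinj : InjOn T A) : ∃ h : Y → X, Measurable h ∧ LeftInvOn h T A := by
  obtain ⟨h, hm, hcomp⟩ := (measurableEmbedding_domRestrict hT hA hinj).exists_measurable_extend
    measurable_subtype_coe fun _ => ‹Nonempty X›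
  exact ⟨h, hm, fun x hx => congrFun hcomp ⟨x, hx⟩⟩

lemma measurable_fiberSum [StandardBorelSpace X] [MeasurableSpace.CountablySeparated Y]
    {T : X → Y} (hT : Measurable T) (hTinj : IsCountablyPiecewiseInjective T)
    {f : X → ℝ≥0∞} (hf : Measurable f) : Measurable (fiberSum T f) := by
  obtain ⟨A, hA, hcover⟩ := hTinj
  have piece (n : ℕ) : Measurable (fiberSum T ((disjointed A n).indicator f)) := by
    have hinj : InjOn T (disjointed A n) := (hA n).2.mono (disjointed_subset A n)
    have hemb := measurableEmbedding_domRestrict hT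
      (MeasurableSet.disjointed (fun i => (hA i).1) n) hinj
    rw [fiberSum_indicator, fiberSum_of_injective hemb.injective]
    exact hemb.measurable_extend (hf.comp measurable_subtype_coe) measurable_zero
  have decomposition :
      fiberSum T f = fun y => ∑' n, fiberSum T ((disjointed A n).indicator f) y := by
    funext y
    simp only [← fiberSum_tsum, tsum_indicator_disjointed hcover]
  rw [decomposition]
  exact Measurable.tsum piece

variable [StandardBorelSpace X] [MeasurableSpace.CountablySeparated Y] {T : X → Y} {w : X → ℝ≥0∞}

/-- The measures `fiberMeasure T w y` as a kernel in `y`; with `w = e^φ`, the transposed Ruelle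
operator is `μ ↦ μ.bind (fiberKernel ..)`, and `L_φ^t μ = μ` says that `μ` is invariant. -/
noncomputable def fiberKernel (hT : Measurable T) (hTinj : IsCountablyPiecewiseInjective T)
    (hw : Measurable w) : Kernel Y X where
  toFun := fiberMeasure T w
  measurable' := Measure.measurable_of_measurable_coe _ fun B hB => by
    simp only [fiberMeasure_apply T w hB]
    exact measurable_fiberSum hT hTinj (hw.indicator hB)

lemma lintegral_bind_fiberKernel (hT : Measurable T) (hTinj : IsCountablyPiecewiseInjective T)
    (hw : Measurable w) (μ : Measure Y) {f : X → ℝ≥0∞} (hf : Measurable f) :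
    ∫⁻ x, f x ∂μ.bind (fiberKernel hT hTinj hw) = ∫⁻ y, fiberSum T (w * f) y ∂μ := by
  rw [Measure.lintegral_bind (Kernel.aemeasurable _) hf.aemeasurable]
  exact lintegral_congr (lintegral_fiberMeasure T w hf)

lemma bind_fiberKernel_apply (hT : Measurable T) (hTinj : IsCountablyPiecewiseInjective T)
    (hw : Measurable w) (μ : Measure Y) {B : Set X} (hB : MeasurableSet B) :
    μ.bind (fiberKernel hT hTinj hw) B = ∫⁻ y, fiberSum T (B.indicator w) y ∂μ := by
  rw [Measure.bind_apply hB (Kernel.aemeasurable _)]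
  exact lintegral_congr (fiberMeasure_apply T w hB)

lemma isFiniteKernel_fiberKernel (hT : Measurable T) (hTinj : IsCountablyPiecewiseInjective T)
    (hw : Measurable w) {N : ℕ} (hN : ∀ y, (T ⁻¹' {y}).encard ≤ N) {C : ℝ≥0∞} (hC : C ≠ ∞)
    (hwC : ∀ x, w x ≤ C) : IsFiniteKernel (fiberKernel hT hTinj hw) := by
  refine ⟨N * C, ENNReal.mul_lt_top (ENNReal.natCast_lt_top N) hC.lt_top, fun y => ?_⟩
  calc fiberMeasure T w y univ
      = ∑' x : T ⁻¹' {y}, w x := by rw [fiberMeasure_apply T w .univ, indicator_univ, fiberSum]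
    _ ≤ ∑' _ : T ⁻¹' {y}, C := ENNReal.tsum_le_tsum fun x => hwC x
    _ = (T ⁻¹' {y}).encard * C := ENNReal.tsum_set_const _ C
    _ ≤ N * C := by gcongr; exact_mod_cast hN y

end FiberKernel

section ExpWeight

variable {X : Type*}

/-- The weight `e^φ`, valued in `[0, ∞]`. -/
noncomputable def expWeight (φ : X → ℝ) (x : X) : ℝ≥0∞ :=
  ENNReal.ofReal (Real.exp (φ x))

lemma expWeight_zero : expWeight (0 : X → ℝ) = 1 := by
  funext x
  simp [expWeight]

lemma expWeight_add (φ ψ : X → ℝ) : expWeight (φ + ψ) = expWeight φ * expWeight ψ := by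
  funext x
  simp only [expWeight, Pi.add_apply, Pi.mul_apply, Real.exp_add,
    ENNReal.ofReal_mul (Real.exp_pos _).le]

lemma birkhoff_zero (T : X → X) (φ : X → ℝ) : birkhoff T φ 0 = 0 := by
  funext x
  exact Finset.sum_range_zero _

lemma birkhoff_succ (T : X → X) (φ : X → ℝ) (n : ℕ) :
    birkhoff T φ (n + 1) = birkhoff T φ n ∘ T + φ := by
  funext x
  exact Finset.sum_range_succ' _ n

lemma birkhoff_one (T : X → X) (φ : X → ℝ) : birkhoff T φ 1 = φ := by
  rw [birkhoff_succ, birkhoff_zero, Pi.zero_comp, zero_add]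

variable [MeasurableSpace X]

lemma measurable_expWeight {φ : X → ℝ} (hφ : Measurable φ) : Measurable (expWeight φ) :=
  hφ.exp.ennreal_ofReal

lemma measurable_birkhoff {T : X → X} (hT : Measurable T) {φ : X → ℝ} (hφ : Measurable φ)
    (n : ℕ) : Measurable (birkhoff T φ n) :=
  Finset.measurable_sum _ fun k _ => hφ.comp (hT.iterate k)

lemma integral_fiberMeasure_expWeight [MeasurableSingletonClass X] {T : X → X} (φ f : X → ℝ) {x : X}
    (hfin : (T ⁻¹' {x}).Finite) :
    ∫ y, f y ∂fiberMeasure T (expWeight φ) x = ruelle T φ f x := by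
  have : Fintype (T ⁻¹' {x}) := hfin.fintype
  have integrable (y : T ⁻¹' {x}) :
      Integrable f (expWeight φ y • Measure.dirac (y : X)) :=
    (integrable_dirac (by simp)).smul_measure ENNReal.ofReal_ne_top
  rw [fiberMeasure, Measure.sum_fintype, integral_finsetSum_measure fun y _ => integrable y]
  simp only [integral_smul_measure, integral_dirac, expWeight,
    ENNReal.toReal_ofReal (Real.exp_pos _).le, smul_eq_mul]
  rw [← finsum_eq_sum_of_fintype]
  exact finsum_set_coe_eq_finsum_mem (f := fun y => Real.exp (φ y) * f y) (T ⁻¹' {x})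

end ExpWeight

section RadonNikodym

variable {X : Type*} [MeasurableSpace X] [StandardBorelSpace X] {T : X → X} {φ : X → ℝ}
  {μ : Measure X}

lemma SatisfiesRN.lintegral_fiberSum_indicator (hRN : SatisfiesRN T φ μ) (hT : Measurable T)
    {B : Set X} (hB : MeasurableSet B) (hinj : InjOn T B) :
    ∫⁻ x, fiberSum T (B.indicator (expWeight φ)) x ∂μ = μ B := by
  rcases isEmpty_or_nonempty X with _ | _
  · simp [μ.eq_zero_of_isEmpty]
  obtain ⟨h, hm, hleft⟩ := exists_measurable_leftInvOn hT hB hinj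
  have image_eq : h '' (T '' B) = B := hleft.image_image
  have hright : ∀ x ∈ T '' B, T (h x) = x := by
    rintro _ ⟨y, hy, rfl⟩
    rw [hleft hy]
  have hinj_h : InjOn h (T '' B) := fun x hx y hy hxy => by
    rw [← hright x hx, hxy, hright y hy]
  have hTB : MeasurableSet (T '' B) := hB.image_of_measurable_injOn hT hinj
  calc ∫⁻ x, fiberSum T (B.indicator (expWeight φ)) x ∂μ
      = ∫⁻ x, (T '' B).indicator (expWeight φ ∘ h) x ∂μ := by
        rw [← fiberSum_id ((T '' B).indicator _),
          ← fiberSum_indicator_image (R := id) hinj_h hright, image_eq]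
    _ = ∫⁻ x in T '' B, expWeight φ (h x) ∂μ := lintegral_indicator hTB _
    _ = μ (h '' (T '' B)) := by
        rw [hRN 1 0 (T '' B) h hTB hm hinj_h hright, birkhoff_one, birkhoff_zero]
        simp only [Pi.zero_apply, sub_zero, expWeight]
    _ = μ B := by rw [image_eq]

lemma SatisfiesRN.invariant_fiberKernel (hRN : SatisfiesRN T φ μ) (hT : Measurable T)
    (hTinj : IsCountablyPiecewiseInjective T) (hφ : Measurable φ) :
    (fiberKernel hT hTinj (measurable_expWeight hφ)).Invariant μ := by
  obtain ⟨A, hA, hcover⟩ := id hTinj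
  refine Measure.ext_of_iUnion_eq_univ hcover fun n => Measure.ext fun B hB => ?_
  have hBA : MeasurableSet (B ∩ A n) := hB.inter (hA n).1
  rw [Measure.restrict_apply hB, Measure.restrict_apply hB, bind_fiberKernel_apply _ _ _ _ hBA,
    hRN.lintegral_fiberSum_indicator hT hBA ((hA n).2.mono inter_subset_right)]

lemma lintegral_fiberSum_iterate (hT : Measurable T) (hTinj : IsCountablyPiecewiseInjective T)
    (hφ : Measurable φ) (hinv : (fiberKernel hT hTinj (measurable_expWeight hφ)).Invariant μ)
    (n : ℕ) {f : X → ℝ≥0∞} (hf : Measurable f) :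
    ∫⁻ x, fiberSum T^[n] (expWeight (birkhoff T φ n) * f) x ∂μ = ∫⁻ x, f x ∂μ := by
  induction n generalizing f with
  | zero => rw [iterate_zero, fiberSum_id, birkhoff_zero, expWeight_zero, one_mul]
  | succ n ih =>
    have weight_succ : expWeight (birkhoff T φ (n + 1)) * f =
        expWeight (birkhoff T φ n) ∘ T * (expWeight φ * f) := by
      rw [birkhoff_succ, expWeight_add, mul_assoc]
      rfl
    have hLf : Measurable (fiberSum T (expWeight φ * f)) :=
      measurable_fiberSum hT hTinj ((measurable_expWeight hφ).mul hf)
    rw [weight_succ, iterate_succ, fiberSum_comp, fiberSum_mul_comp, ih hLf,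
      ← lintegral_bind_fiberKernel hT hTinj (measurable_expWeight hφ) μ hf, hinv.def]

lemma satisfiesRN_of_invariant_fiberKernel (hT : Measurable T)
    (hTinj : IsCountablyPiecewiseInjective T) (hφ : Measurable φ)
    (hinv : (fiberKernel hT hTinj (measurable_expWeight hφ)).Invariant μ) :
    SatisfiesRN T φ μ := by
  intro m n A h hA hh hinj hTh
  let c : X → ℝ := birkhoff T φ m ∘ h - birkhoff T φ n
  have hc : Measurable c :=
    ((measurable_birkhoff hT hφ m).comp hh).sub (measurable_birkhoff hT hφ n)
  have hhA : MeasurableSet (h '' A) := hA.image_of_measurable_injOn hh hinj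
  have weight_comp : expWeight (birkhoff T φ m) ∘ h = expWeight (birkhoff T φ n) * expWeight c := by
    rw [← expWeight_add, add_sub_cancel]
    rfl
  calc μ (h '' A)
      = ∫⁻ x, (h '' A).indicator 1 x ∂μ := (lintegral_indicator_one hhA).symm
    _ = ∫⁻ x, fiberSum T^[m] ((h '' A).indicator (expWeight (birkhoff T φ m))) x ∂μ := by
        rw [← lintegral_fiberSum_iterate hT hTinj hφ hinv m (measurable_one.indicator hhA),
          mul_indicator_right, mul_one]
    _ = ∫⁻ x, fiberSum T^[n] (expWeight (birkhoff T φ n) * A.indicator (expWeight c)) x ∂μ := by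
        rw [fiberSum_indicator_image hinj hTh, weight_comp, mul_indicator_right]
    _ = ∫⁻ x, A.indicator (expWeight c) x ∂μ :=
        lintegral_fiberSum_iterate hT hTinj hφ hinv n ((measurable_expWeight hc).indicator hA)
    _ = ∫⁻ x in A, expWeight c x ∂μ := lintegral_indicator hA _

theorem satisfiesRN_iff_invariant_fiberKernel (hT : Measurable T)
    (hTinj : IsCountablyPiecewiseInjective T) (hφ : Measurable φ) :
    SatisfiesRN T φ μ ↔ (fiberKernel hT hTinj (measurable_expWeight hφ)).Invariant μ :=
  ⟨fun hRN => hRN.invariant_fiberKernel hT hTinj hφ,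
    satisfiesRN_of_invariant_fiberKernel hT hTinj hφ⟩

end RadonNikodym

section LocallyInjective

variable {X Y : Type*} [TopologicalSpace X]

lemma isCountablyPiecewiseInjective_of_isLocallyInjective [SecondCountableTopology X]
    [MeasurableSpace X] [OpensMeasurableSpace X] {T : X → Y}
    (hT : IsLocallyInjective T) : IsCountablyPiecewiseInjective T := by
  choose U hUo hxU hinj using hT
  obtain ⟨s, hs, hcover⟩ :=
    TopologicalSpace.countable_cover_nhds fun x => (hUo x).mem_nhds (hxU x)
  refine (exists_seq_cover_iff_countable (p := fun A => MeasurableSet A ∧ InjOn T A)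
    ⟨∅, .empty, injOn_empty T⟩).2
    ⟨U '' s, hs.image U, ?_, by rwa [sUnion_image]⟩
  rintro _ ⟨x, -, rfl⟩
  exact ⟨(hUo x).measurableSet, hinj x⟩

lemma exists_forall_encard_fiber_le [CompactSpace X] {T : X → Y} (hT : IsLocallyInjective T) :
    ∃ N : ℕ, ∀ y, (T ⁻¹' {y}).encard ≤ N := by
  choose U hUo hxU hinj using hT
  obtain ⟨t, -, hcover⟩ :=
    isCompact_univ.elim_nhds_subcover U fun x _ => (hUo x).mem_nhds (hxU x)
  have mem_cover (x : X) : ∃ c ∈ t, x ∈ U c := by simpa using hcover (mem_univ x)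
  choose c hct hxc using mem_cover
  refine ⟨t.card, fun y => ?_⟩
  rw [← encard_coe_eq_coe_finsetCard]
  refine encard_le_encard_of_injOn (f := c) (fun x _ => hct x) fun x hx x' hx' hcc => ?_
  exact hinj (c x) (hxc x) (hcc ▸ hxc x') (hx.trans hx'.symm)

end LocallyInjective

section Invariant

variable {X : Type*} [MeasurableSpace X]

lemma integral_bind_kernel {Y E : Type*} [MeasurableSpace Y] [NormedAddCommGroup E]
    [NormedSpace ℝ E] {κ : Kernel Y X} {μ : Measure Y} {f : X → E}
    (hf : Integrable f (μ.bind κ)) : ∫ x, f x ∂μ.bind κ = ∫ y, ∫ x, f x ∂κ y ∂μ := by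
  rw [Measure.comp_eq_comp_const_apply] at hf ⊢
  rw [Kernel.integral_comp hf, Kernel.const_apply]

lemma invariant_iff_forall_continuous_integral [TopologicalSpace X] [CompactSpace X]
    [HasOuterApproxClosed X] [BorelSpace X] (κ : Kernel X X) [IsFiniteKernel κ] (μ : Measure X)
    [IsFiniteMeasure μ] :
    κ.Invariant μ ↔ ∀ f : X → ℝ, Continuous f → ∫ x, ∫ y, f y ∂κ x ∂μ = ∫ x, f x ∂μ := by
  have integral_bind (f : X → ℝ) (hf : Continuous f) :
      ∫ x, ∫ y, f y ∂κ x ∂μ = ∫ x, f x ∂μ.bind κ :=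
    (integral_bind_kernel
      (hf.integrable_of_hasCompactSupport (HasCompactSupport.of_compactSpace f))).symm
  constructor
  · intro hinv f hf
    rw [integral_bind f hf, hinv.def]
  · intro hfix
    refine ext_of_forall_integral_eq_of_IsFiniteMeasure fun f => ?_
    rw [← integral_bind f f.continuous, hfix f f.continuous]

end Invariant

theorem satisfiesRN_iff_ruelle_fixed_general
    {X : Type*} [TopologicalSpace X] [PolishSpace X] [CompactSpace X] [MeasurableSpace X]
    [BorelSpace X] {T : X → X} (hT : Measurable T) (hTloc : IsLocallyInjective T)
    {φ : X → ℝ} (hφ : Measurable φ) (hφ_bdd : BddAbove (range φ))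
    (μ : Measure X) [IsFiniteMeasure μ] :
    SatisfiesRN T φ μ ↔
      ∀ f : X → ℝ, Continuous f → ∫ x, ruelle T φ f x ∂μ = ∫ x, f x ∂μ := by
  have hTinj := isCountablyPiecewiseInjective_of_isLocallyInjective hTloc
  obtain ⟨N, hN⟩ := exists_forall_encard_fiber_le hTloc
  obtain ⟨C, hC⟩ := hφ_bdd
  have weight_le (x : X) : expWeight φ x ≤ ENNReal.ofReal (Real.exp C) :=
    ENNReal.ofReal_le_ofReal (Real.exp_le_exp.2 (hC ⟨x, rfl⟩))
  have := isFiniteKernel_fiberKernel hT hTinj (measurable_expWeight hφ) hN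
    ENNReal.ofReal_ne_top weight_le
  have ruelle_eq (f : X → ℝ) (x : X) :
      ∫ y, f y ∂fiberKernel hT hTinj (measurable_expWeight hφ) x = ruelle T φ f x :=
    integral_fiberMeasure_expWeight φ f (finite_of_encard_le_coe (hN x))
  rw [satisfiesRN_iff_invariant_fiberKernel hT hTinj hφ, invariant_iff_forall_continuous_integral]
  simp only [ruelle_eq]

/-- **The Radon–Nikodym equation `D_μ = e^{c_φ}` is equivalent to the eigenvalue
equation `L_φ^t μ = μ`.** Let `T` be a surjective local homeomorphism of a compact
metric space `X` onto itself and let `φ : X → ℝ` be continuous. A Borel probability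
measure `μ` on `X` satisfies `D_μ = e^{c_φ}` if and only if
`∫ L_φ f dμ = ∫ f dμ` for every continuous `f : X → ℝ`. -/
theorem satisfiesRN_iff_ruelle_fixed
    {X : Type*} [MetricSpace X] [CompactSpace X] [MeasurableSpace X] [BorelSpace X]
    (T : X → X) (hT : Function.Surjective T) (hTloc : IsLocalHomeomorph T)
    (φ : X → ℝ) (hφ : Continuous φ)
    (μ : Measure X) (hμ : IsProbabilityMeasure μ) :
    SatisfiesRN T φ μ ↔
      ∀ f : X → ℝ, Continuous f → ∫ x, ruelle T φ f x ∂μ = ∫ x, f x ∂μ :=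
  satisfiesRN_iff_ruelle_fixed_general hTloc.continuous.measurable hTloc.isLocallyInjective
    hφ.measurable (isCompact_range hφ).bddAbove μ
end

section
/- Let T be a surjective local homeomorphism of a compact metric space X onto itself, let φ ∈ C(X,ℝ), and let μ be a Borel probability measure on X with ∫_X L_φ f dμ = ∫_X f dμ for every continuous f : X → ℝ. Then the pushforward measure T_*μ (defined by T_*μ(A) = μ(T^{-1}A)) equals the measure with density L_φ 1 with respect to μ, i.e. T_*μ(A) = ∫_A L_φ 1 dμ for every Borel set A; consequently, for every Borel set A with μ(A) = 0 one has μ(T^{-1}A) = 0 and μ(T(A)) = 0. -/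
open MeasureTheory

/-!
Let `T^*μ` be the measure `A ↦ ∫ #(A ∩ T⁻¹{x}) dμ(x)`, so that `∫ g d(T^*μ)` is the `μ`-integral
of the fiber sums of `g`. The hypothesis on `μ` says that `∫ e^φ f d(T^*μ) = ∫ f dμ` for bounded
continuous `f`, hence `μ = e^φ · T^*μ`. Summing `e^φ` along the fibers over `A` gives the density
of `T_*μ`. As `e^φ > 0`, a `μ`-null set `A` is also `T^*μ`-null, i.e. almost every fiber misses
`A`, which says that `T(A)` is `μ`-null.
-/

open Set Measure Topology
open scoped BoundedContinuousFunction ENNReal NNReal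

section FiberCount

variable {X Y : Type*} [MeasurableSpace X] {T : X → Y}

/-- The counting measure on the fiber of `T` over `y`, as a measure on the whole domain of `T`;
integrals against it are fiber sums. -/
noncomputable def fiberCount (T : X → Y) (y : Y) : Measure X :=
  count.restrict (T ⁻¹' {y})

lemma fiberCount_apply {A : Set X} (hA : MeasurableSet A) (y : Y) :
    fiberCount T y A = count (A ∩ T ⁻¹' {y}) :=
  restrict_apply hA

lemma lintegral_fiberCount [MeasurableSingletonClass X] {y : Y} (hfin : (T ⁻¹' {y}).Finite)
    (g : X → ℝ≥0∞) : ∫⁻ x, g x ∂fiberCount T y = ∑ᶠ x ∈ T ⁻¹' {y}, g x := by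
  rw [finsum_mem_eq_finite_toFinset_sum _ hfin]
  simpa [fiberCount] using lintegral_finset (μ := count) hfin.toFinset g

lemma lintegral_indicator_preimage_fiberCount {y : Y} (hy : MeasurableSet (T ⁻¹' {y}))
    (A : Set Y) (g : X → ℝ≥0∞) :
    ∫⁻ x, (T ⁻¹' A).indicator g x ∂fiberCount T y =
      A.indicator (fun z ↦ ∫⁻ x, g x ∂fiberCount T z) y := by
  have hfiber : ∫⁻ x, (T ⁻¹' A).indicator g x ∂fiberCount T y =
      ∫⁻ x, A.indicator (fun _ ↦ g x) y ∂fiberCount T y :=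
    setLIntegral_congr_fun hy fun x hx ↦ by
      obtain rfl : T x = y := hx
      rfl
  rw [hfiber]
  by_cases hyA : y ∈ A <;> simp [hyA]

lemma fiberCount_apply_of_injOn [MeasurableSingletonClass X] {A : Set X} (hA : MeasurableSet A)
    (hinj : InjOn T A) (y : Y) : fiberCount T y A = (T '' A).indicator 1 y := by
  rw [fiberCount_apply hA]
  by_cases hy : y ∈ T '' A
  · obtain ⟨x, hx, rfl⟩ := hy
    have hsingleton : A ∩ T ⁻¹' {T x} = {x} :=
      Subset.antisymm (fun z hz ↦ hinj hz.1 hx hz.2) (singleton_subset_iff.2 ⟨hx, rfl⟩)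
    rw [hsingleton, count_singleton, indicator_of_mem (mem_image_of_mem T hx), Pi.one_apply]
  · have hempty : A ∩ T ⁻¹' {y} = ∅ :=
      eq_empty_of_forall_notMem fun x hx ↦ hy ⟨x, hx⟩
    rw [hempty, measure_empty, indicator_of_notMem hy]

lemma measurable_fiberCount_of_cover [MeasurableSingletonClass X] [MeasurableSpace Y]
    {B : ℕ → Set X} (hB : ∀ n, MeasurableSet (B n))
    (hemb : ∀ n, MeasurableEmbedding ((B n).domRestrict T)) (hcover : ⋃ n, B n = univ) :
    Measurable (fiberCount T) := by
  refine measurable_of_measurable_coe _ fun A hA ↦ ?_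
  let piece (n : ℕ) : Set X := A ∩ disjointed B n
  have hpiece (n) : MeasurableSet (piece n) := hA.inter (.disjointed hB n)
  have hpiece_subset (n) : piece n ⊆ B n := inter_subset_right.trans (disjointed_subset B n)
  have hinj (n) : InjOn T (piece n) :=
    (injOn_iff_injective.2 (hemb n).injective).mono (hpiece_subset n)
  have himage (n) : MeasurableSet (T '' piece n) := by
    have h := (hemb n).measurableSet_image.2 (measurable_subtype_coe (hpiece n))
    rwa [image_domRestrict, inter_eq_left.2 (hpiece_subset n)] at h
  have hsum (y : Y) : fiberCount T y A = ∑' n, (T '' piece n).indicator 1 y := by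
    have hA_eq : A = ⋃ n, piece n := by
      rw [← inter_iUnion, iUnion_disjointed, hcover, inter_univ]
    conv_lhs => rw [hA_eq]
    rw [measure_iUnion (fun m n hmn ↦ (disjoint_disjointed B hmn).mono inter_subset_right
      inter_subset_right) hpiece]
    exact tsum_congr fun n ↦ fiberCount_apply_of_injOn (hpiece n) (hinj n) y
  simp_rw [hsum]
  exact .tsum fun n ↦ measurable_one.indicator (himage n)

end FiberCount

section LocalHomeomorph

variable {X Y : Type*} [TopologicalSpace X] [TopologicalSpace Y] {T : X → Y}

lemma exists_seq_open_cover_isOpenEmbedding_domRestrict [LindelofSpace X]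
    (hT : IsLocalHomeomorph T) :
    ∃ B : ℕ → Set X, (∀ n, IsOpen (B n) ∧ IsOpenEmbedding ((B n).domRestrict T)) ∧
      ⋃ n, B n = univ := by
  refine (exists_seq_cover_iff_countable (p := fun U ↦ IsOpen U ∧ IsOpenEmbedding (U.domRestrict T))
    ⟨∅, isOpen_empty, .of_isEmpty _⟩).2 ?_
  choose e hxe he using hT
  obtain ⟨t, ht, hcover⟩ := LindelofSpace.elim_nhds_subcover (fun x ↦ (e x).source)
    fun x ↦ (e x).open_source.mem_nhds (hxe x)
  refine ⟨(fun x ↦ (e x).source) '' t, ht.image _, ?_, by rwa [sUnion_image]⟩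
  rintro _ ⟨x, -, rfl⟩
  exact ⟨(e x).open_source, by simpa only [← he x] using (e x).isOpenEmbedding_restrict⟩

lemma measurable_fiberCount_of_isLocalHomeomorph [LindelofSpace X] [T1Space X] [MeasurableSpace X]
    [BorelSpace X] [MeasurableSpace Y] [BorelSpace Y] (hT : IsLocalHomeomorph T) :
    Measurable (fiberCount T) := by
  obtain ⟨B, hB, hcover⟩ := exists_seq_open_cover_isOpenEmbedding_domRestrict hT
  exact measurable_fiberCount_of_cover (fun n ↦ (hB n).1.measurableSet)
    (fun n ↦ (hB n).2.measurableEmbedding) hcover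

lemma finite_fiber_of_isLocalHomeomorph [CompactSpace X] [T1Space Y] (hT : IsLocalHomeomorph T)
    (y : Y) : (T ⁻¹' {y}).Finite := by
  have hdiscrete : IsDiscrete (T ⁻¹' {y}) :=
    (hT.isLocalHomeomorphOn.mono (subset_univ _)).isDiscrete_of_image
      (subsingleton_singleton.anti (image_preimage_subset T {y})).isDiscrete
  exact (isClosed_singleton.preimage hT.continuous).isCompact.finite hdiscrete

end LocalHomeomorph

section FiberPullback

variable {X Y : Type*} [MeasurableSpace X] [MeasurableSpace Y] {T : X → Y} {μ : Measure Y}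

/-- The pullback `T^*μ` of `μ` along `T`, in which each point is counted once for every preimage:
`T^*μ (A) = ∫ #(A ∩ T⁻¹{y}) dμ(y)`. If `fiberCount T` is not `μ`-a.e. measurable, `Measure.bind`
takes the junk value `0`. -/
noncomputable def fiberPullback (T : X → Y) (μ : Measure Y) : Measure X :=
  μ.bind (fiberCount T)

lemma lintegral_fiberPullback (hT : Measurable (fiberCount T)) {g : X → ℝ≥0∞}
    (hg : Measurable g) :
    ∫⁻ x, g x ∂fiberPullback T μ = ∫⁻ y, ∫⁻ x, g x ∂fiberCount T y ∂μ :=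
  lintegral_bind hT.aemeasurable hg.aemeasurable

lemma measure_image_eq_zero_of_fiberPullback_eq_zero (hT : Measurable (fiberCount T))
    {A : Set X} (hA : MeasurableSet A) (hzero : fiberPullback T μ A = 0) : μ (T '' A) = 0 := by
  rw [fiberPullback, bind_apply hA hT.aemeasurable,
    lintegral_eq_zero_iff ((measurable_coe hA).fun_comp hT)] at hzero
  refine measure_mono_null ?_ hzero
  rintro _ ⟨x, hx, rfl⟩
  change fiberCount T (T x) A ≠ 0
  rw [fiberCount_apply hA, count_ne_zero_iff]
  exact ⟨x, hx, rfl⟩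

lemma map_withDensity_fiberPullback [MeasurableSingletonClass Y] (hTm : Measurable T)
    (hT : Measurable (fiberCount T)) {w : X → ℝ≥0∞} (hw : Measurable w) :
    ((fiberPullback T μ).withDensity w).map T =
      μ.withDensity fun y ↦ ∫⁻ x, w x ∂fiberCount T y := by
  ext A hA
  have hTA : MeasurableSet (T ⁻¹' A) := hTm hA
  rw [map_apply hTm hA, withDensity_apply _ hTA, withDensity_apply _ hA, ← lintegral_indicator hTA,
    ← lintegral_indicator hA, lintegral_fiberPullback hT (hw.indicator hTA)]
  exact lintegral_congr fun y ↦
    lintegral_indicator_preimage_fiberCount (hTm (measurableSet_singleton y)) A w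

end FiberPullback

section Ruelle

variable {X : Type*} {T : X → X} {φ f : X → ℝ}

lemma ruelle_nonneg (hf : 0 ≤ f) (x : X) : 0 ≤ ruelle T φ f x :=
  finsum_nonneg fun y ↦ finsum_nonneg fun _ ↦ mul_nonneg (Real.exp_nonneg _) (hf y)

variable [MeasurableSpace X] [MeasurableSingletonClass X]

lemma ofReal_ruelle {x : X} (hfin : (T ⁻¹' {x}).Finite) (hf : 0 ≤ f) :
    ENNReal.ofReal (ruelle T φ f x) =
      ∫⁻ y, ENNReal.ofReal (Real.exp (φ y)) * ENNReal.ofReal (f y) ∂fiberCount T x := by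
  have hruelle : ruelle T φ f x = ∑ y ∈ hfin.toFinset, Real.exp (φ y) * f y :=
    finsum_mem_eq_finite_toFinset_sum _ hfin
  rw [lintegral_fiberCount hfin, finsum_mem_eq_finite_toFinset_sum _ hfin, hruelle,
    ENNReal.ofReal_sum_of_nonneg fun y _ ↦ mul_nonneg (Real.exp_nonneg _) (hf y)]
  exact Finset.sum_congr rfl fun y _ ↦ ENNReal.ofReal_mul (Real.exp_nonneg _)

lemma measurable_ruelle (hT : Measurable (fiberCount T)) (hfin : ∀ x, (T ⁻¹' {x}).Finite)
    (hφ : Measurable φ) (hf : Measurable f) (hf₀ : 0 ≤ f) : Measurable (ruelle T φ f) := by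
  have hruelle : ruelle T φ f = fun x ↦
      (∫⁻ y, ENNReal.ofReal (Real.exp (φ y)) * ENNReal.ofReal (f y) ∂fiberCount T x).toReal :=
    funext fun x ↦ by rw [← ofReal_ruelle (hfin x) hf₀, ENNReal.toReal_ofReal (ruelle_nonneg hf₀ x)]
  rw [hruelle]
  exact ((measurable_lintegral (by fun_prop)).comp hT).ennreal_toReal

lemma lintegral_ruelle (hT : Measurable (fiberCount T)) (hfin : ∀ x, (T ⁻¹' {x}).Finite)
    (hφ : Measurable φ) (hf : Measurable f) (hf₀ : 0 ≤ f) (μ : Measure X) :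
    ∫⁻ x, ENNReal.ofReal (ruelle T φ f x) ∂μ =
      ∫⁻ y, ENNReal.ofReal (f y)
        ∂(fiberPullback T μ).withDensity fun y ↦ ENNReal.ofReal (Real.exp (φ y)) := by
  simp_rw [ofReal_ruelle (hfin _) hf₀]
  rw [← lintegral_fiberPullback hT (by fun_prop),
    lintegral_withDensity_eq_lintegral_mul _ (by fun_prop) hf.ennreal_ofReal]
  rfl

lemma integral_ruelle (hT : Measurable (fiberCount T)) (hfin : ∀ x, (T ⁻¹' {x}).Finite)
    (hφ : Measurable φ) (hf : Measurable f) (hf₀ : 0 ≤ f) (μ : Measure X) :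
    ∫ x, ruelle T φ f x ∂μ =
      ∫ y, f y ∂(fiberPullback T μ).withDensity fun y ↦ ENNReal.ofReal (Real.exp (φ y)) := by
  rw [integral_eq_lintegral_of_nonneg_ae (.of_forall (ruelle_nonneg hf₀))
      (measurable_ruelle hT hfin hφ hf hf₀).aestronglyMeasurable,
    integral_eq_lintegral_of_nonneg_ae (.of_forall hf₀) hf.aestronglyMeasurable,
    lintegral_ruelle hT hfin hφ hf hf₀]

lemma isFiniteMeasure_withDensity_fiberPullback (hT : Measurable (fiberCount T))
    (hfin : ∀ x, (T ⁻¹' {x}).Finite) (hφ : Measurable φ) {μ : Measure X} [IsFiniteMeasure μ]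
    (hone : ∫ x, ruelle T φ 1 x ∂μ = μ.real univ) :
    IsFiniteMeasure
      ((fiberPullback T μ).withDensity fun y ↦ ENNReal.ofReal (Real.exp (φ y))) := by
  rcases eq_zero_or_neZero μ with rfl | hμ
  · rw [fiberPullback, bind_zero_left, withDensity_zero_left]
    infer_instance
  -- A non-integrable `L_φ 1` would have Bochner integral `0`, but `μ(X) ≠ 0`.
  have hint : Integrable (ruelle T φ 1) μ :=
    .of_integral_ne_zero (hone.trans_ne measureReal_univ_ne_zero)
  refine ⟨?_⟩
  have hmass := lintegral_ruelle hT hfin hφ measurable_one zero_le_one μ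
  simp only [Pi.one_apply, ENNReal.ofReal_one, lintegral_one] at hmass
  exact hmass ▸ hint.lintegral_lt_top

theorem eq_withDensity_fiberPullback_of_ruelle_fixed [TopologicalSpace X] [HasOuterApproxClosed X]
    [BorelSpace X] (hT : Measurable (fiberCount T)) (hfin : ∀ x, (T ⁻¹' {x}).Finite)
    (hφ : Measurable φ) {μ : Measure X} [IsFiniteMeasure μ]
    (hfix : ∀ f : X →ᵇ ℝ, ∫ x, ruelle T φ f x ∂μ = ∫ x, f x ∂μ) :
    μ = (fiberPullback T μ).withDensity fun y ↦ ENNReal.ofReal (Real.exp (φ y)) := by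
  set ν := (fiberPullback T μ).withDensity fun y ↦ ENNReal.ofReal (Real.exp (φ y))
  have hone : ∫ x, ruelle T φ 1 x ∂μ = μ.real univ := by
    simpa using hfix 1
  have hν : IsFiniteMeasure ν := isFiniteMeasure_withDensity_fiberPullback hT hfin hφ hone
  refine ext_of_forall_lintegral_eq_of_IsFiniteMeasure fun f ↦ ?_
  let g : X →ᵇ ℝ := f.comp (fun r : ℝ≥0 ↦ (r : ℝ)) isometry_subtype_coe.lipschitz
  have hg₀ : 0 ≤ ⇑g := fun x ↦ (f x).coe_nonneg
  have hg : ∫ x, (f x : ℝ) ∂μ = ∫ x, (f x : ℝ) ∂ν :=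
    (hfix g).symm.trans (integral_ruelle hT hfin hφ g.continuous.measurable hg₀ μ)
  rwa [← f.toReal_lintegral_coe_eq_integral, ← f.toReal_lintegral_coe_eq_integral,
    ENNReal.toReal_eq_toReal_iff' (f.lintegral_lt_top_of_nnreal μ).ne
      (f.lintegral_lt_top_of_nnreal ν).ne] at hg

end Ruelle

theorem pushforward_of_ruelle_fixed_general
    {X : Type*} [TopologicalSpace X] [LindelofSpace X] [T1Space X] [HasOuterApproxClosed X]
    [MeasurableSpace X] [BorelSpace X]
    {T : X → X} (hTloc : IsLocalHomeomorph T) (hfin : ∀ x, (T ⁻¹' {x}).Finite)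
    {φ : X → ℝ} (hφ : Measurable φ) {μ : Measure X} [IsFiniteMeasure μ]
    (hfix : ∀ f : X →ᵇ ℝ, ∫ x, ruelle T φ f x ∂μ = ∫ x, f x ∂μ) :
    (∀ A : Set X, MeasurableSet A →
      Measure.map T μ A = ∫⁻ x in A, ENNReal.ofReal (ruelle T φ (fun _ => 1) x) ∂μ) ∧
    (∀ A : Set X, MeasurableSet A → μ A = 0 → μ (T ⁻¹' A) = 0 ∧ μ (T '' A) = 0) := by
  have hTm : Measurable T := hTloc.continuous.measurable
  have hT : Measurable (fiberCount T) := measurable_fiberCount_of_isLocalHomeomorph hTloc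
  have hw : Measurable fun y ↦ ENNReal.ofReal (Real.exp (φ y)) := by fun_prop
  have hμ_eq := eq_withDensity_fiberPullback_of_ruelle_fixed hT hfin hφ hfix
  have hmap : μ.map T = μ.withDensity fun x ↦ ENNReal.ofReal (ruelle T φ (fun _ ↦ 1) x) := by
    conv_lhs => rw [hμ_eq, map_withDensity_fiberPullback hTm hT hw]
    simp only [ofReal_ruelle (hfin _) fun _ ↦ zero_le_one, ENNReal.ofReal_one, mul_one]
  refine ⟨fun A hA ↦ by rw [hmap, withDensity_apply _ hA], fun A hA hzero ↦ ⟨?_, ?_⟩⟩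
  · rw [← map_apply hTm hA, hmap]
    exact withDensity_absolutelyContinuous _ _ hzero
  · have hac : fiberPullback T μ ≪ μ := by
      conv_rhs => rw [hμ_eq]
      exact withDensity_absolutelyContinuous' hw.aemeasurable
        (.of_forall fun y ↦ (ENNReal.ofReal_pos.2 (Real.exp_pos _)).ne')
    exact measure_image_eq_zero_of_fiberPullback_eq_zero hT hA (hac hzero)

/-- **Fixed points of the dual Ruelle operator push forward with density `L_φ 1`.**
Let `T` be a surjective local homeomorphism of a compact metric space `X` onto itself,
let `φ : X → ℝ` be continuous, and let `μ` be a Borel probability measure with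
`∫ L_φ f dμ = ∫ f dμ` for every continuous `f`. Then `T_* μ` is the measure with density
`L_φ 1` with respect to `μ`, i.e. `T_* μ (A) = ∫_A L_φ 1 dμ` for every Borel set `A`;
consequently, `μ(A) = 0` implies `μ(T⁻¹ A) = 0` and `μ(T(A)) = 0`. -/
theorem pushforward_of_ruelle_fixed
    {X : Type*} [MetricSpace X] [CompactSpace X] [MeasurableSpace X] [BorelSpace X]
    (T : X → X) (hT : Function.Surjective T) (hTloc : IsLocalHomeomorph T)
    (φ : X → ℝ) (hφ : Continuous φ)
    (μ : Measure X) (hμ : IsProbabilityMeasure μ)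
    (hfix : ∀ f : X → ℝ, Continuous f → ∫ x, ruelle T φ f x ∂μ = ∫ x, f x ∂μ) :
    (∀ A : Set X, MeasurableSet A →
      Measure.map T μ A = ∫⁻ x in A, ENNReal.ofReal (ruelle T φ (fun _ => 1) x) ∂μ) ∧
    (∀ A : Set X, MeasurableSet A → μ A = 0 → μ (T ⁻¹' A) = 0 ∧ μ (T '' A) = 0) := by
  exact pushforward_of_ruelle_fixed_general hTloc (finite_fiber_of_isLocalHomeomorph hTloc)
    hφ.measurable fun f ↦ hfix f f.continuous
end

section
/- Let T be a surjective local homeomorphism of a compact metric space X onto itself and let c : R(X,T) → ℝ be a cocycle (c(x,y) + c(y,z) = c(x,z) on R(X,T)) whose restriction to each R_n = {(x,y) : T^n x = T^n y} is continuous. Then the following are equivalent: (i) there exists φ ∈ C(X,ℝ) such that c(x,y) = Σ_{k<n} (φ(T^k x) − φ(T^k y)) whenever T^n x = T^n y (i.e. c extends to the continuous cocycle c_φ on G(X,T)); (ii) there exists φ ∈ C(X,ℝ) such that c(x,y) − c(Tx,Ty) = φ(x) − φ(y) for all (x,y) ∈ R(X,T). Moreover, the same function φ can be taken in (i) and (ii).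 -/
section

variable {X A : Type*} [AddCommGroup A] {T : X → X} {c : X → X → A} {φ : X → A} {x y : X} {n : ℕ}

theorem iterate_iterate_eq_of_iterate_eq (hxy : T^[n] x = T^[n] y) (k : ℕ) :
    T^[n] (T^[k] x) = T^[n] (T^[k] y) := by
  have hcomm := Function.Commute.iterate_iterate_self T n k
  rw [hcomm.eq x, hcomm.eq y, hxy]

theorem sub_map_eq_of_eq_sum_range
    (hsum : ∀ x y n, T^[n] x = T^[n] y →
      c x y = ∑ k ∈ Finset.range n, (φ (T^[k] x) - φ (T^[k] y)))
    (hxy : T^[n] x = T^[n] y) : c x y - c (T x) (T y) = φ x - φ y := by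
  have hmap : T^[n] (T x) = T^[n] (T y) := iterate_iterate_eq_of_iterate_eq hxy 1
  rw [hsum x y (n + 1) hmap, hsum (T x) (T y) n hmap, Finset.sum_range_succ']
  exact add_sub_cancel_left _ _

theorem eq_sum_range_of_sub_map_eq (hdiag : ∀ x, c x x = 0)
    (hsub : ∀ x y, (∃ n, T^[n] x = T^[n] y) → c x y - c (T x) (T y) = φ x - φ y)
    (hxy : T^[n] x = T^[n] y) :
    c x y = ∑ k ∈ Finset.range n, (φ (T^[k] x) - φ (T^[k] y)) := by
  calc c x y = c (T^[0] x) (T^[0] y) - c (T^[n] x) (T^[n] y) := by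
        rw [hxy, hdiag, sub_zero, Function.iterate_zero_apply, Function.iterate_zero_apply]
    _ = ∑ k ∈ Finset.range n,
          (c (T^[k] x) (T^[k] y) - c (T^[k + 1] x) (T^[k + 1] y)) :=
        (Finset.sum_range_sub' (fun k ↦ c (T^[k] x) (T^[k] y)) n).symm
    _ = ∑ k ∈ Finset.range n, (φ (T^[k] x) - φ (T^[k] y)) :=
        Finset.sum_congr rfl fun k _ ↦ by
          rw [Function.iterate_succ_apply', Function.iterate_succ_apply',
            hsub _ _ ⟨n, iterate_iterate_eq_of_iterate_eq hxy k⟩]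

end

theorem cocycle_extends_iff_general {X A : Type*} [AddCommGroup A] {T : X → X} {c : X → X → A}
    (hdiag : ∀ x, c x x = 0) (φ : X → A) :
    (∀ (x y : X) (n : ℕ), T^[n] x = T^[n] y →
        c x y = ∑ k ∈ Finset.range n, (φ (T^[k] x) - φ (T^[k] y))) ↔
      (∀ x y : X, (∃ n : ℕ, T^[n] x = T^[n] y) →
        c x y - c (T x) (T y) = φ x - φ y) :=
  ⟨fun hsum _ _ ⟨_, hxy⟩ ↦ sub_map_eq_of_eq_sum_range hsum hxy,
    fun hsub _ _ _ hxy ↦ eq_sum_range_of_sub_map_eq hdiag hsub hxy⟩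

/-- **Characterization of stationary cocycles on `R(X, T)`.** Let `T` be a surjective
local homeomorphism of a compact metric space `X` onto itself and let `c` be a cocycle
on `R(X, T) = {(x, y) : ∃ n, T^n x = T^n y}` with values in `ℝ` whose restriction to each
`R_n = {(x, y) : T^n x = T^n y}` is continuous. Then the following are equivalent:
(i) there is a continuous `φ : X → ℝ` with `c(x, y) = ∑_{k < n} (φ(T^k x) - φ(T^k y))`
whenever `T^n x = T^n y`, i.e. `c` extends to the continuous cocycle `c_φ` on `G(X, T)`;
(ii) there is a continuous `φ : X → ℝ` with `c(x, y) - c(Tx, Ty) = φ(x) - φ(y)` on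
`R(X, T)`. Moreover, the same function `φ` works in (i) and (ii). -/
theorem cocycle_extends_iff
    {X : Type*} [MetricSpace X] [CompactSpace X]
    (T : X → X) (hT : Function.Surjective T) (hTloc : IsLocalHomeomorph T)
    (c : X → X → ℝ)
    (hcoc : ∀ x y z : X, (∃ n : ℕ, T^[n] x = T^[n] y) → (∃ n : ℕ, T^[n] y = T^[n] z) →
      c x y + c y z = c x z)
    (hcont : ∀ n : ℕ, ContinuousOn (fun p : X × X => c p.1 p.2)
      {p : X × X | T^[n] p.1 = T^[n] p.2}) :
    ((∃ φ : X → ℝ, Continuous φ ∧ ∀ (x y : X) (n : ℕ), T^[n] x = T^[n] y →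
        c x y = ∑ k ∈ Finset.range n, (φ (T^[k] x) - φ (T^[k] y))) ↔
      (∃ φ : X → ℝ, Continuous φ ∧ ∀ x y : X, (∃ n : ℕ, T^[n] x = T^[n] y) →
        c x y - c (T x) (T y) = φ x - φ y)) ∧
    (∀ φ : X → ℝ, Continuous φ →
      ((∀ (x y : X) (n : ℕ), T^[n] x = T^[n] y →
          c x y = ∑ k ∈ Finset.range n, (φ (T^[k] x) - φ (T^[k] y))) ↔
        (∀ x y : X, (∃ n : ℕ, T^[n] x = T^[n] y) →
          c x y - c (T x) (T y) = φ x - φ y))) := by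
  have hdiag (x : X) : c x x = 0 := add_eq_left.mp (hcoc x x x ⟨0, rfl⟩ ⟨0, rfl⟩)
  exact ⟨exists_congr fun φ ↦ and_congr_right fun _ ↦ cocycle_extends_iff_general hdiag φ,
    fun φ _ ↦ cocycle_extends_iff_general hdiag φ⟩
end

section
/- Let T be a surjective local homeomorphism of a compact metric space X onto itself and let φ, ψ ∈ C(X,ℝ). Then Σ_{k<n} (φ−ψ)(T^k x) = Σ_{k<n} (φ−ψ)(T^k y) whenever T^n x = T^n y (i.e. the cocycles c_φ and c_ψ agree on R(X,T)) if and only if φ − ψ is constant on each R(X,T)-equivalence class. If moreover some R(X,T)-equivalence class is dense in X, then these conditions hold if and only if φ − ψ is a constant function. -/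
section TailRel

variable {X M : Type*}

/-- The equivalence relation `R(X, T)` identifying points whose forward orbits under `T` merge
after the same number of steps. -/
def TailRel (T : X → X) (x y : X) : Prop :=
  ∃ n : ℕ, T^[n] x = T^[n] y

theorem TailRel.iterate {T : X → X} {x y : X} (h : TailRel T x y) (k : ℕ) :
    TailRel T (T^[k] x) (T^[k] y) := by
  obtain ⟨n, hn⟩ := h
  refine ⟨n, ?_⟩
  calc
    T^[n] (T^[k] x) = T^[k] (T^[n] x) := Function.Commute.iterate_iterate_self T n k x
    _ = T^[k] (T^[n] y) := by rw [hn]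
    _ = T^[n] (T^[k] y) := Function.Commute.iterate_iterate_self T k n y

/-- Vanishing on `R(X, T)` of the cocycle `c_f(x, y) = ∑_{k < n} (f (T^k x) - f (T^k y))`, written
as an equality of Birkhoff sums so that no subtraction is needed. The cocycles of two potentials
`φ` and `ψ` agree exactly when that of `φ - ψ` vanishes. -/
def CocycleVanishes [AddCommMonoid M] (T : X → X) (f : X → M) : Prop :=
  ∀ (x y : X) (n : ℕ), T^[n] x = T^[n] y → birkhoffSum T f n x = birkhoffSum T f n y

theorem CocycleVanishes.eq_of_tailRel [AddCommMonoid M] [IsCancelAdd M] {T : X → X} {f : X → M}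
    (hf : CocycleVanishes T f) {x y : X} (h : TailRel T x y) : f x = f y := by
  obtain ⟨_ | n, hn⟩ := h
  · exact congrArg f hn
  -- The sums of length `n + 1` from `x` and of length `n` from `T x` differ by the term `f x`.
  · have tail_eq : birkhoffSum T f n (T x) = birkhoffSum T f n (T y) := hf (T x) (T y) n hn
    have sum_eq : f x + birkhoffSum T f n (T x) = f y + birkhoffSum T f n (T y) := by
      simpa only [birkhoffSum_succ'] using hf x y (n + 1) hn
    rw [tail_eq] at sum_eq
    exact add_right_cancel sum_eq

theorem cocycleVanishes_of_forall_tailRel [AddCommMonoid M] {T : X → X} {f : X → M}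
    (hf : ∀ x y, TailRel T x y → f x = f y) : CocycleVanishes T f :=
  fun _ _ n hn => Finset.sum_congr rfl fun k _ => hf _ _ (TailRel.iterate ⟨n, hn⟩ k)

theorem cocycleVanishes_iff_forall_tailRel [AddCommMonoid M] [IsCancelAdd M] {T : X → X}
    {f : X → M} : CocycleVanishes T f ↔ ∀ x y, TailRel T x y → f x = f y :=
  ⟨fun hf _ _ => hf.eq_of_tailRel, cocycleVanishes_of_forall_tailRel⟩

end TailRel

theorem forall_rel_eq_iff_exists_const_of_dense {X Y : Type*} [TopologicalSpace X]
    [TopologicalSpace Y] [T2Space Y] {r : X → X → Prop} {f : X → Y} (hf : Continuous f)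
    {x₀ : X} (hx₀ : Dense {y | r x₀ y}) :
    (∀ x y, r x y → f x = f y) ↔ ∃ C, ∀ x, f x = C := by
  constructor
  · intro hr
    have f_eq_const : f = fun _ => f x₀ :=
      hf.ext_on hx₀ continuous_const fun y hy => (hr x₀ y hy).symm
    exact ⟨f x₀, congrFun f_eq_const⟩
  · rintro ⟨C, hC⟩ x y _
    rw [hC x, hC y]

theorem cocycle_eq_iff_diff_invariant_general {X M : Type*} [TopologicalSpace X]
    [AddCommMonoid M] [IsCancelAdd M] [TopologicalSpace M] [T2Space M]
    (T : X → X) {f : X → M} (hf : Continuous f) :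
    (CocycleVanishes T f ↔ ∀ x y, TailRel T x y → f x = f y) ∧
      ((∃ x₀, Dense {y | TailRel T x₀ y}) →
        (CocycleVanishes T f ↔ ∃ C, ∀ x, f x = C)) := by
  refine ⟨cocycleVanishes_iff_forall_tailRel, ?_⟩
  rintro ⟨x₀, hx₀⟩
  exact cocycleVanishes_iff_forall_tailRel.trans (forall_rel_eq_iff_exists_const_of_dense hf hx₀)

/-- **When do two potentials define the same cocycle on `R(X, T)`?** Let `T` be a
surjective local homeomorphism of a compact metric space `X` onto itself and let
`φ, ψ : X → ℝ` be continuous. The cocycles `c_φ` and `c_ψ` agree on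
`R(X, T) = {(x, y) : ∃ n, T^n x = T^n y}`, i.e.
`∑_{k < n} (φ - ψ)(T^k x) = ∑_{k < n} (φ - ψ)(T^k y)` whenever `T^n x = T^n y`, if and
only if `φ - ψ` is constant on each `R(X, T)`-equivalence class. If moreover some
`R(X, T)`-class is dense in `X`, this holds if and only if `φ - ψ` is constant. -/
theorem cocycle_eq_iff_diff_invariant
    {X : Type*} [MetricSpace X] [CompactSpace X]
    (T : X → X) (hT : Function.Surjective T) (hTloc : IsLocalHomeomorph T)
    (φ ψ : X → ℝ) (hφ : Continuous φ) (hψ : Continuous ψ) :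
    ((∀ (x y : X) (n : ℕ), T^[n] x = T^[n] y →
        ∑ k ∈ Finset.range n, (φ (T^[k] x) - ψ (T^[k] x)) =
          ∑ k ∈ Finset.range n, (φ (T^[k] y) - ψ (T^[k] y))) ↔
      (∀ x y : X, (∃ n : ℕ, T^[n] x = T^[n] y) → φ x - ψ x = φ y - ψ y)) ∧
    ((∃ x₀ : X, Dense {y : X | ∃ n : ℕ, T^[n] x₀ = T^[n] y}) →
      ((∀ (x y : X) (n : ℕ), T^[n] x = T^[n] y →
          ∑ k ∈ Finset.range n, (φ (T^[k] x) - ψ (T^[k] x)) =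
            ∑ k ∈ Finset.range n, (φ (T^[k] y) - ψ (T^[k] y))) ↔
        (∃ C : ℝ, ∀ x : X, φ x - ψ x = C))) :=
  cocycle_eq_iff_diff_invariant_general T (hφ.sub hψ)
end

section
/- Let (X_1, μ_1, R_1) and (X_2, μ_2, R_2) be hyperfinite ergodic equivalence relations of type II_1, i.e.: for i = 1, 2, (X_i, B_i) is a standard Borel space with a non-atomic probability measure μ_i, R_i is a hyperfinite Borel equivalence relation with countable classes, μ_i is R_i-invariant, and R_i is ergodic. Then (X_1, μ_1, R_1) and (X_2, μ_2, R_2) are isomorphic: there exist conull Borel sets X_i' ⊆ X_i and a Borel isomorphism θ : X_1' → X_2' such that θ_*μ_1 is equivalent to μ_2 and, for x, y ∈ X_1', x R_1 y if and only if θ(x) R_2 θ(y). -/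
open MeasureTheory

/-- `μ` is quasi-invariant under the countable Borel equivalence relation `R`: every
partial Borel automorphism of `R` maps null sets to null sets. -/
def QuasiInvariantRel {X : Type*} [MeasurableSpace X] (μ : Measure X)
    (R : X → X → Prop) : Prop :=
  ∀ (g : X → X) (A : Set X), Measurable g → MeasurableSet A → Set.InjOn g A →
    (∀ x ∈ A, R x (g x)) →
    ∀ N : Set X, MeasurableSet N → μ N = 0 → μ (g '' (N ∩ A)) = 0

/-- `R` is hyperfinite: on a conull Borel set, `R` is the union of an increasing
sequence of Borel equivalence relations with finite classes. -/
def HyperfiniteRel {X : Type*} [MeasurableSpace X] (μ : Measure X)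
    (R : X → X → Prop) : Prop :=
  ∃ (X₀ : Set X) (S : ℕ → X → X → Prop),
    MeasurableSet X₀ ∧ μ X₀ᶜ = 0 ∧
    (∀ n, MeasurableSet {p : X × X | S n p.1 p.2}) ∧
    (∀ n, ∀ x ∈ X₀, S n x x) ∧
    (∀ n x y, S n x y → S n y x) ∧
    (∀ n x y z, S n x y → S n y z → S n x z) ∧
    (∀ n x y, S n x y → x ∈ X₀ ∧ y ∈ X₀) ∧
    (∀ n x, {y | S n x y}.Finite) ∧
    (∀ n x y, S n x y → S (n + 1) x y) ∧
    (∀ x ∈ X₀, ∀ y ∈ X₀, (R x y ↔ ∃ n, S n x y))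

/-- `μ` is invariant under the countable Borel equivalence relation `R`: every partial
Borel automorphism of `R` preserves the measure. -/
def InvariantRel {X : Type*} [MeasurableSpace X] (μ : Measure X)
    (R : X → X → Prop) : Prop :=
  ∀ (g : X → X) (A : Set X), Measurable g → MeasurableSet A → Set.InjOn g A →
    (∀ x ∈ A, R x (g x)) → μ (g '' A) = μ A

/-- `R` is ergodic: every Borel `R`-invariant set is null or conull. -/
def ErgodicRel {X : Type*} [MeasurableSpace X] (μ : Measure X)
    (R : X → X → Prop) : Prop :=
  ∀ E : Set X, MeasurableSet E → (∀ x ∈ E, ∀ y, R x y → y ∈ E) → μ E = 0 ∨ μ Eᶜ = 0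

/-!
Every hyperfinite ergodic relation `R` of type II₁ is isomorphic to one model: the tail equivalence
of sequences of fair coin tosses.

The isomorphism reads off the address of a point in a refining sequence of dyadic arrays, i.e. of
partitions of `X` into `2 ^ n` floors of equal measure, indexed by binary words and carried onto
each other by partial automorphisms of `R`. Let `R` be the increasing union of the finite relations
`S N`. An array with base `A` is refined by splitting `A` into the columns of a finite relation
`S k` on `A`, with `k` so large that `S k` accounts for nearly all of `S N`. These columns are cut
into pieces of equal dyadic measure, and the small remainder is filled up with further floors, which
ergodicity and invariance allow because any two sets of equal measure are exchanged by a partial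
automorphism. The refined array puts nearly all `S N`-related points into a common column, and its
floors may be chosen to decide membership in any given Borel set up to a small error.

By Borel–Cantelli, almost all points are then separated by their addresses, and are `R`-related if
and only if their addresses agree from some index on. The equal measure of the floors says that the
address is distributed as a sequence of fair coin tosses.
-/

namespace Dye

open Set Filter Topology
open scoped Function

section Analytic

theorem exists_measure_image_le_add {X : Type*} [MeasurableSpace X] (μ : Measure X)
    [IsFiniteMeasure μ] (f : (ℕ → ℕ) → X) (W : Set (ℕ → ℕ)) (n : ℕ) {δ : ENNReal} (hδ : δ ≠ 0) :
    ∃ m : ℕ, μ (f '' W) ≤ μ (f '' (W ∩ {x | x n ≤ m})) + δ := by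
  have iUnion_box : f '' W = ⋃ m : ℕ, f '' (W ∩ {x | x n ≤ m}) := by
    rw [← image_iUnion, ← inter_iUnion, inter_eq_left.2]
    exact fun x _ ↦ mem_iUnion.2 ⟨x n, le_refl (x n)⟩
  have box_mono : Monotone fun m : ℕ ↦ f '' (W ∩ {x | x n ≤ m}) :=
    fun a b hab ↦ image_mono fun x hx ↦ ⟨hx.1, hx.2.trans hab⟩
  have tendsto_box := tendsto_measure_iUnion_atTop (μ := μ) box_mono
  rw [← iUnion_box] at tendsto_box
  rcases eq_or_ne (μ (f '' W)) 0 with h0 | h0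
  · exact ⟨0, h0 ▸ zero_le⟩
  · have hlt : μ (f '' W) - δ < μ (f '' W) := ENNReal.sub_lt_self (measure_ne_top _ _) h0 hδ
    obtain ⟨m, hm⟩ := (tendsto_box.eventually_const_lt hlt).exists
    exact ⟨m, tsub_le_iff_right.1 hm.le⟩

theorem iInter_closure_image_subset_range {X : Type*} [TopologicalSpace X]
    [FirstCountableTopology X] [T2Space X] {f : (ℕ → ℕ) → X} (hf : Continuous f)
    {W : ℕ → Set (ℕ → ℕ)} (hW : Antitone W) {m : ℕ → ℕ}
    (hm : ∀ n, ∀ x ∈ W (n + 1), x n ≤ m n) : ⋂ n, closure (f '' W n) ⊆ range f := by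
  intro y hy
  obtain ⟨U, hU⟩ := (𝓝 y).exists_antitone_basis
  have near (n : ℕ) : ∃ x ∈ W n, f x ∈ U n := by
    obtain ⟨_, hfx, x, hx, rfl⟩ :=
      mem_closure_iff_nhds.1 (mem_iInter.1 hy n) (U n) (hU.1.mem_of_mem trivial)
    exact ⟨x, hx, hfx⟩
  choose x hxW hxU using near
  -- All terms `x n` lie in one compact box: the first few are bounded by hand, the others by `m`.
  let M : ℕ → ℕ := fun i ↦ max (m i) ((Finset.range (i + 1)).sup fun n ↦ x n i)
  have compact_box : IsCompact (pi univ fun i ↦ Iic (M i)) :=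
    isCompact_univ_pi fun i ↦ (finite_Iic (M i)).isCompact
  have mem_box (n : ℕ) : x n ∈ pi univ fun i ↦ Iic (M i) := fun i _ ↦ by
    rcases le_or_gt n i with hni | hin
    · exact le_max_of_le_right
        (Finset.le_sup (f := fun n ↦ x n i) (Finset.mem_range.2 (Nat.lt_succ_of_le hni)))
    · exact le_max_of_le_left (hm i _ (hW hin (hxW n)))
  obtain ⟨a, -, φ, hφ, ha⟩ := compact_box.tendsto_subseq mem_box
  exact ⟨a, tendsto_nhds_unique ((hf.tendsto a).comp ha)
    ((hU.tendsto hxU).comp hφ.tendsto_atTop)⟩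

theorem exists_measurableSet_subset_range_measure_le_add {X : Type*} [TopologicalSpace X]
    [FirstCountableTopology X] [T2Space X] [MeasurableSpace X] [OpensMeasurableSpace X]
    (μ : Measure X) [IsFiniteMeasure μ] {f : (ℕ → ℕ) → X} (hf : Continuous f)
    {ε : ENNReal} (hε : ε ≠ 0) :
    ∃ K, MeasurableSet K ∧ K ⊆ range f ∧ μ (range f) ≤ μ K + ε := by
  obtain ⟨δ, hδ, sum_δ⟩ := ENNReal.exists_pos_sum_of_countable' hε ℕ
  choose m hm using fun (W : Set (ℕ → ℕ)) (n : ℕ) ↦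
    exists_measure_image_le_add μ f W n (hδ n).ne'
  let W : ℕ → Set (ℕ → ℕ) := fun n ↦ Nat.rec univ (fun n W ↦ W ∩ {x | x n ≤ m W n}) n
  have W_anti : Antitone W := antitone_nat_of_succ_le fun n ↦ inter_subset_left
  have measure_W (n : ℕ) : μ (range f) ≤ μ (f '' W n) + ∑ i ∈ Finset.range n, δ i := by
    induction n with
    | zero => simp [W]
    | succ n ih =>
      calc μ (range f) ≤ μ (f '' W n) + ∑ i ∈ Finset.range n, δ i := ih
        _ ≤ μ (f '' W (n + 1)) + δ n + ∑ i ∈ Finset.range n, δ i := by gcongr; exact hm (W n) n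
        _ = _ := by rw [Finset.sum_range_succ, add_assoc, add_comm (δ n)]
  have measure_closure (n : ℕ) : μ (range f) ≤ μ (closure (f '' W n)) + ε :=
    (measure_W n).trans
      (add_le_add (measure_mono subset_closure) ((ENNReal.sum_le_tsum _).trans sum_δ.le))
  refine ⟨⋂ n, closure (f '' W n), .iInter fun n ↦ isClosed_closure.measurableSet,
    iInter_closure_image_subset_range hf W_anti (m := fun n ↦ m (W n) n) fun n x hx ↦ hx.2, ?_⟩
  have tendsto_closure := tendsto_measure_iInter_atTop (μ := μ) (s := fun n ↦ closure (f '' W n))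
    (fun n ↦ isClosed_closure.measurableSet.nullMeasurableSet)
    (fun a b hab ↦ closure_mono (image_mono (W_anti hab))) ⟨0, measure_ne_top _ _⟩
  exact ge_of_tendsto' (tendsto_closure.add_const ε) measure_closure

theorem nullMeasurableSet_of_analyticSet {X : Type*} [TopologicalSpace X]
    [FirstCountableTopology X] [T2Space X] [MeasurableSpace X] [OpensMeasurableSpace X]
    (μ : Measure X) [IsFiniteMeasure μ] {s : Set X} (hs : AnalyticSet s) :
    NullMeasurableSet s μ := by
  rw [AnalyticSet] at hs
  rcases hs with rfl | ⟨f, hf, rfl⟩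
  · exact nullMeasurableSet_empty
  choose K K_meas K_sub measure_K using fun n : ℕ ↦
    exists_measurableSet_subset_range_measure_le_add μ hf (ε := (n : ENNReal)⁻¹) (by simp)
  have measure_iUnion : μ (range f) ≤ μ (⋃ n, K n) := by
    have tendsto_inv := ENNReal.tendsto_inv_nat_nhds_zero.const_add (μ (⋃ n, K n))
    rw [add_zero] at tendsto_inv
    exact ge_of_tendsto' tendsto_inv fun n ↦
      (measure_K n).trans (by gcongr; exact subset_iUnion K n)
  have iUnion_meas : NullMeasurableSet (⋃ n, K n) μ :=
    (MeasurableSet.iUnion K_meas).nullMeasurableSet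
  exact iUnion_meas.congr (ae_eq_of_subset_of_measure_ge (iUnion_subset K_sub) measure_iUnion
    iUnion_meas (measure_ne_top _ _))

theorem nullMeasurableSet_exists_prodMk_mem {X Y : Type*} [MeasurableSpace X]
    [StandardBorelSpace X] [MeasurableSpace Y] [StandardBorelSpace Y] (μ : Measure X)
    [IsFiniteMeasure μ] {P : Set (X × Y)} (hP : MeasurableSet P) :
    NullMeasurableSet {x | ∃ y, (x, y) ∈ P} μ := by
  let := upgradeStandardBorel X
  have image_fst : {x | ∃ y, (x, y) ∈ P} = Prod.fst '' P := by ext x; simp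
  exact image_fst ▸ nullMeasurableSet_of_analyticSet μ (hP.analyticSet_image measurable_fst)

end Analytic

section Uniformization

variable {X Y : Type*} [MeasurableSpace X] [StandardBorelSpace X] [MeasurableSpace Y]
  [StandardBorelSpace Y]

theorem nullMeasurableSet_existsUnique_prodMk_mem (μ : Measure X) [IsFiniteMeasure μ]
    {P : Set (X × Y)} (hP : MeasurableSet P) :
    NullMeasurableSet {x | ∃! y, (x, y) ∈ P} μ := by
  let Q : Set (X × Y × Y) := {q | (q.1, q.2.1) ∈ P ∧ (q.1, q.2.2) ∈ P ∧ q.2.1 ≠ q.2.2}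
  have Q_meas : MeasurableSet Q :=
    (hP.preimage (measurable_fst.prodMk measurable_snd.fst)).inter
      ((hP.preimage (measurable_fst.prodMk measurable_snd.snd)).inter
        (measurableSet_eq_fun measurable_snd.fst measurable_snd.snd).compl)
  have existsUnique_eq : {x | ∃! y, (x, y) ∈ P} =
      {x | ∃ y, (x, y) ∈ P} \ {x | ∃ q, (x, q) ∈ Q} := by
    ext x
    constructor
    · rintro ⟨y, hy, hy'⟩
      exact ⟨⟨y, hy⟩, fun ⟨q, h₁, h₂, hne⟩ ↦ hne ((hy' _ h₁).trans (hy' _ h₂).symm)⟩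
    · rintro ⟨⟨y, hy⟩, hQ⟩
      exact ⟨y, hy, fun z hz ↦ by_contra fun hne ↦ hQ ⟨(z, y), hz, hy, hne⟩⟩
  exact existsUnique_eq ▸ (nullMeasurableSet_exists_prodMk_mem μ hP).diff
    (nullMeasurableSet_exists_prodMk_mem μ Q_meas)

theorem exists_measurable_forall_prodMk_mem [Nonempty Y] {P : Set (X × Y)} (hP : MeasurableSet P)
    {D : Set X} (hD : MeasurableSet D) (hPD : ∀ x ∈ D, ∃! y, (x, y) ∈ P) :
    ∃ f : X → Y, Measurable f ∧ ∀ x ∈ D, (x, f x) ∈ P := by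
  let G : Set (X × Y) := P ∩ Prod.fst ⁻¹' D
  have : StandardBorelSpace G := (hP.inter (measurable_fst hD)).standardBorel
  have fst_injective : Function.Injective fun p : G ↦ p.1.1 := by
    rintro ⟨⟨x, y⟩, hy, hx⟩ ⟨⟨x', z⟩, hz, hx'⟩ (rfl : x = x')
    exact Subtype.ext (Prod.ext rfl ((hPD x hx).unique hy hz))
  have fst_embedding : MeasurableEmbedding fun p : G ↦ p.1.1 :=
    measurable_subtype_coe.fst.measurableEmbedding fst_injective
  obtain ⟨f, hf, hfG⟩ := fst_embedding.exists_measurable_extend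
    (measurable_subtype_coe.snd : Measurable fun p : G ↦ p.1.2) fun _ ↦ inferInstance
  refine ⟨f, hf, fun x hx ↦ ?_⟩
  obtain ⟨y, hy, -⟩ := hPD x hx
  have : f x = y := congrFun hfG ⟨(x, y), hy, hx⟩
  rwa [this]

end Uniformization

section PartialAut

variable {X : Type*} [MeasurableSpace X] {R S : X → X → Prop}

/-- The restriction of `g` to `A` is a partial Borel automorphism of `R`, from `A` onto `g '' A`.
The values of `g` outside `A` play no role. -/
structure IsPartialAut (R : X → X → Prop) (g : X → X) (A : Set X) : Prop where
  measurable : Measurable g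
  measurableSet : MeasurableSet A
  injOn : InjOn g A
  rel : ∀ x ∈ A, R x (g x)

namespace IsPartialAut

variable {g : X → X} {A : Set X}

theorem mono (hg : IsPartialAut R g A) {B : Set X} (hB : MeasurableSet B) (hBA : B ⊆ A) :
    IsPartialAut R g B :=
  ⟨hg.measurable, hB, hg.injOn.mono hBA, fun x hx ↦ hg.rel x (hBA hx)⟩

theorem comp (hg : IsPartialAut R g A) {f : X → X} {B : Set X} (hf : IsPartialAut R f B)
    (hgAB : MapsTo g A B) (hR : ∀ x y z, R x y → R y z → R x z) : IsPartialAut R (f ∘ g) A :=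
  ⟨hf.measurable.comp hg.measurable, hg.measurableSet, hf.injOn.comp hg.injOn hgAB,
    fun x hx ↦ hR _ _ _ (hg.rel x hx) (hf.rel _ (hgAB hx))⟩

theorem measure_image (hg : IsPartialAut R g A) {μ : Measure X} (hμ : InvariantRel μ R) :
    μ (g '' A) = μ A :=
  hμ g A hg.measurable hg.measurableSet hg.injOn hg.rel

theorem measurableSet_image [StandardBorelSpace X] (hg : IsPartialAut R g A) :
    MeasurableSet (g '' A) :=
  hg.measurableSet.image_of_measurable_injOn hg.measurable hg.injOn

end IsPartialAut

theorem isPartialAut_id (hR : ∀ x, R x x) {A : Set X} (hA : MeasurableSet A) :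
    IsPartialAut R id A :=
  ⟨measurable_id, hA, injOn_id A, fun x _ ↦ hR x⟩

theorem exists_isPartialAut_ae [StandardBorelSpace X] (μ : Measure X) [IsFiniteMeasure μ]
    (hS : MeasurableSet {p : X × X | S p.1 p.2}) (symm : ∀ x y, S x y → S y x)
    (trans : ∀ x y z, S x y → S y z → S x z) {U V : Set X} (hU : MeasurableSet U)
    (hV : MeasurableSet V) :
    ∃ (g : X → X) (D : Set X), IsPartialAut S g D ∧
      ∀ᵐ x ∂μ, x ∈ U → (∃! z, S x z ∧ z ∈ U) → (∃! y, S x y ∧ y ∈ V) →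
        x ∈ D ∧ S x (g x) ∧ g x ∈ V := by
  rcases isEmpty_or_nonempty X with _ | _
  · exact ⟨id, univ, ⟨measurable_id, .univ, injOn_id _, isEmptyElim⟩, .of_forall isEmptyElim⟩
  have sect_meas {W : Set X} (hW : MeasurableSet W) :
      MeasurableSet {p : X × X | S p.1 p.2 ∧ p.2 ∈ W} := hS.inter (measurable_snd hW)
  have good_meas : NullMeasurableSet
      (U ∩ ({x | ∃! z, S x z ∧ z ∈ U} ∩ {x | ∃! y, S x y ∧ y ∈ V})) μ :=
    hU.nullMeasurableSet.inter
      ((nullMeasurableSet_existsUnique_prodMk_mem μ (sect_meas hU)).inter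
        (nullMeasurableSet_existsUnique_prodMk_mem μ (sect_meas hV)))
  obtain ⟨D, D_sub, D_meas, D_ae⟩ := good_meas.exists_measurable_subset_ae_eq
  obtain ⟨g, g_meas, hg⟩ := exists_measurable_forall_prodMk_mem (sect_meas hV) D_meas
    fun x hx ↦ (D_sub hx).2.2
  refine ⟨g, D, ⟨g_meas, D_meas, fun x hx y hy hxy ↦ ?_, fun x hx ↦ (hg x hx).1⟩, ?_⟩
  · have rel_xy : S x y := trans _ _ _ (hg x hx).1 (symm _ _ (hxy ▸ (hg y hy).1))
    exact (D_sub hx).2.1.unique ⟨trans _ _ _ rel_xy (symm _ _ rel_xy), (D_sub hx).1⟩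
      ⟨rel_xy, (D_sub hy).1⟩
  · filter_upwards [D_ae.mem_iff] with x hx hxU hxU' hxV
    have hxD : x ∈ D := hx.2 ⟨hxU, hxU', hxV⟩
    exact ⟨hxD, hg x hxD⟩

end PartialAut

section Restrict

variable {X : Type*} {R S : X → X → Prop} {Y : Set X}

/-- The relation that agrees with `R` on `Y` and is equality off `Y`. It allows discarding a null
set while keeping an equivalence relation on the whole space. -/
def restrictRel (R : X → X → Prop) (Y : Set X) (x y : X) : Prop :=
  x = y ∨ (x ∈ Y ∧ y ∈ Y ∧ R x y)

theorem restrictRel_iff (hR : ∀ x, R x x) {x y : X} (hx : x ∈ Y) (hy : y ∈ Y) :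
    restrictRel R Y x y ↔ R x y :=
  ⟨fun h ↦ h.elim (fun hxy ↦ hxy ▸ hR x) fun h ↦ h.2.2, fun h ↦ .inr ⟨hx, hy, h⟩⟩

theorem restrictRel_equivalence (symm : ∀ x y, R x y → R y x)
    (trans : ∀ x y z, R x y → R y z → R x z) : Equivalence (restrictRel R Y) where
  refl _ := .inl rfl
  symm := by
    rintro x y (rfl | ⟨hx, hy, hxy⟩)
    exacts [.inl rfl, .inr ⟨hy, hx, symm _ _ hxy⟩]
  trans := by
    rintro x y z (rfl | ⟨hx, hy, hxy⟩) (rfl | ⟨hy', hz, hyz⟩)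
    exacts [.inl rfl, .inr ⟨hy', hz, hyz⟩, .inr ⟨hx, hy, hxy⟩, .inr ⟨hx, hz, trans _ _ _ hxy hyz⟩]

theorem finite_restrictRel (hR : ∀ x, {y | R x y}.Finite) (x : X) :
    {y | restrictRel R Y x y}.Finite := by
  refine ((hR x).insert x).subset ?_
  rintro y (rfl | ⟨-, -, hxy⟩)
  exacts [mem_insert _ _, mem_insert_of_mem _ hxy]

variable [MeasurableSpace X]

theorem measurableSet_restrictRel [StandardBorelSpace X]
    (hR : MeasurableSet {p : X × X | R p.1 p.2}) (hY : MeasurableSet Y) :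
    MeasurableSet {p : X × X | restrictRel R Y p.1 p.2} :=
  (measurableSet_eq_fun measurable_fst measurable_snd).union
    ((measurable_fst hY).inter ((measurable_snd hY).inter hR))

theorem invariantRel_restrictRel {μ : Measure X} (hμ : InvariantRel μ R) (hR : ∀ x, R x x) :
    InvariantRel μ (restrictRel R Y) := fun g A hg hA hgA hgR ↦
  hμ g A hg hA hgA fun x hx ↦ (hgR x hx).elim (fun h ↦ h ▸ hR x) fun h ↦ h.2.2

end Restrict

section InvariantSeparation

variable {X : Type*} [MeasurableSpace X] [StandardBorelSpace X] {R : X → X → Prop}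

theorem exists_measurableSet_separating_saturation
    (hR : Equivalence R) (hg : MeasurableSet {p : X × X | R p.1 p.2}) {A B : Set X}
    (hA : MeasurableSet A) (hB : MeasurableSet B) (hAB : ∀ x ∈ A, ∀ y ∈ B, ¬ R x y) :
    ∃ C, MeasurableSet C ∧ (∀ x ∈ A, ∀ y, R x y → y ∈ C) ∧ ∀ x ∈ C, ∀ y ∈ B, ¬ R x y := by
  let := upgradeStandardBorel X
  let sat (C : Set X) : Set X := Prod.snd '' ({p : X × X | R p.1 p.2} ∩ Prod.fst ⁻¹' C)
  have sat_analytic {C : Set X} (hC : MeasurableSet C) : AnalyticSet (sat C) :=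
    (hg.inter (measurable_fst hC)).analyticSet_image measurable_snd
  have mem_sat {C : Set X} {x y : X} (hx : x ∈ C) (hxy : R x y) : y ∈ sat C :=
    ⟨(x, y), ⟨hxy, hx⟩, rfl⟩
  have sat_disjoint : Disjoint (sat A) (sat B) := by
    rw [Set.disjoint_left]
    rintro _ ⟨⟨x, y⟩, ⟨hxy, hx⟩, rfl⟩ ⟨⟨z, _⟩, ⟨hzy, hz⟩, rfl⟩
    exact hAB x hx z hz (hR.trans hxy (hR.symm hzy))
  obtain ⟨C, hAC, hBC, hC⟩ :=
    (sat_analytic hA).measurablySeparable (sat_analytic hB) sat_disjoint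
  exact ⟨C, hC, fun x hx y hxy ↦ hAC (mem_sat hx hxy),
    fun x hx y hy hxy ↦ Set.disjoint_left.1 hBC (mem_sat hy (hR.symm hxy)) hx⟩

theorem exists_invariant_separating
    (hR : Equivalence R) (hg : MeasurableSet {p : X × X | R p.1 p.2}) {A B : Set X}
    (hA : MeasurableSet A) (hB : MeasurableSet B) (hAB : ∀ x ∈ A, ∀ y ∈ B, ¬ R x y) :
    ∃ C, MeasurableSet C ∧ A ⊆ C ∧ Disjoint C B ∧ ∀ x ∈ C, ∀ y, R x y → y ∈ C := by
  let Sep := {C : Set X // MeasurableSet C ∧ ∀ x ∈ C, ∀ y ∈ B, ¬ R x y}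
  have enlarge (C : Sep) : ∃ C' : Sep, ∀ x ∈ C.1, ∀ y, R x y → y ∈ C'.1 := by
    obtain ⟨C', hC', hCC', hC'B⟩ :=
      exists_measurableSet_separating_saturation hR hg C.2.1 hB C.2.2
    exact ⟨⟨C', hC', hC'B⟩, hCC'⟩
  choose next hnext using enlarge
  let C : ℕ → Sep := fun n ↦ next^[n] ⟨A, hA, hAB⟩
  have hC (n : ℕ) : ∀ x ∈ (C n).1, ∀ y, R x y → y ∈ (C (n + 1)).1 := by
    simp only [C, Function.iterate_succ_apply']
    exact hnext _
  refine ⟨⋃ n, (C n).1, .iUnion fun n ↦ (C n).2.1, subset_iUnion (fun n ↦ (C n).1) 0,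
    disjoint_iUnion_left.2 fun n ↦ Set.disjoint_left.2 fun x hx hxB ↦
      (C n).2.2 x hx x hxB (hR.refl x), fun x hx y hxy ↦ ?_⟩
  obtain ⟨n, hn⟩ := mem_iUnion.1 hx
  exact mem_iUnion.2 ⟨n + 1, hC n x hn y hxy⟩

theorem ergodicRel_restrictRel {μ : Measure X} (herg : ErgodicRel μ R)
    (hR : Equivalence R) (hg : MeasurableSet {p : X × X | R p.1 p.2}) {Y : Set X}
    (hY : MeasurableSet Y) (hμY : μ Yᶜ = 0) : ErgodicRel μ (restrictRel R Y) := by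
  intro E hE hEinv
  obtain ⟨C, hC, hEC, hCE, hCinv⟩ := exists_invariant_separating hR hg (hE.inter hY)
    (hY.diff hE) fun x hx y hy hxy ↦ hy.2 (hEinv x hx.1 y (.inr ⟨hx.2, hy.1, hxy⟩))
  have E_sub : E ⊆ C ∪ Yᶜ := fun x hx ↦
    (em (x ∈ Y)).imp (fun hxY ↦ hEC ⟨hx, hxY⟩) id
  have compl_sub : Eᶜ ⊆ Cᶜ ∪ Yᶜ := fun x hx ↦
    (em (x ∈ Y)).imp (fun hxY hxC ↦ Set.disjoint_left.1 hCE hxC ⟨hxY, hx⟩) id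
  exact (herg C hC hCinv).imp
    (fun h ↦ measure_mono_null E_sub (measure_union_null h hμY))
    (fun h ↦ measure_mono_null compl_sub (measure_union_null h hμY))

end InvariantSeparation

section Hyperfinite

variable {X : Type*} [MeasurableSpace X] {R : X → X → Prop}

/-- A Borel equivalence relation with finite classes. -/
structure IsFiniteBorelEquiv (S : X → X → Prop) : Prop where
  measurableSet : MeasurableSet {p : X × X | S p.1 p.2}
  equivalence : Equivalence S
  finite : ∀ x, {y | S x y}.Finite

theorem IsFiniteBorelEquiv.restrictRel [StandardBorelSpace X] {S : X → X → Prop}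
    (hS : IsFiniteBorelEquiv S) {Y : Set X} (hY : MeasurableSet Y) :
    IsFiniteBorelEquiv (restrictRel S Y) where
  measurableSet := measurableSet_restrictRel hS.measurableSet hY
  equivalence := restrictRel_equivalence (fun _ _ ↦ hS.equivalence.symm)
    fun _ _ _ ↦ hS.equivalence.trans
  finite := finite_restrictRel hS.finite

/-- `R` is everywhere the increasing union of the finite Borel equivalence relations `S n`. -/
structure IsExhaustion (R : X → X → Prop) (S : ℕ → X → X → Prop) : Prop where
  isFiniteBorelEquiv : ∀ n, IsFiniteBorelEquiv (S n)
  monotone : Monotone S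
  rel_iff : ∀ x y, R x y ↔ ∃ n, S n x y

/-- A sequence of partial Borel automorphisms of `R` whose graphs cover `R`, as produced for
countable Borel equivalence relations by the Feldman–Moore theorem. -/
structure IsGenerating (R : X → X → Prop) (γ : ℕ → X → X) (D : ℕ → Set X) : Prop where
  isPartialAut : ∀ k, IsPartialAut R (γ k) (D k)
  exists_eq : ∀ x y, R x y → ∃ k, x ∈ D k ∧ γ k x = y

/-- The relations to which Dye's argument applies: on the whole space, not just almost everywhere,
`R` is generated by partial automorphisms and exhausted by finite relations. -/
structure IsErgodicHyperfinite (μ : Measure X) (R : X → X → Prop) : Prop where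
  equivalence : Equivalence R
  invariant : InvariantRel μ R
  ergodic : ErgodicRel μ R
  exists_isGenerating : ∃ γ D, IsGenerating R γ D
  exists_isExhaustion : ∃ S, IsExhaustion R S

theorem IsExhaustion.rel {S : ℕ → X → X → Prop} (hS : IsExhaustion R S) {n : ℕ} {x y : X}
    (h : S n x y) : R x y :=
  (hS.rel_iff x y).2 ⟨n, h⟩

theorem exists_isGenerating_restrictRel {γ : ℕ → X → X} {D : ℕ → Set X}
    (hγ : ∀ k, IsPartialAut R (γ k) (D k)) {Y : Set X} (hY : MeasurableSet Y)
    (hYγ : ∀ x ∈ Y, ∀ y, R x y → ∃ k, x ∈ D k ∧ γ k x = y) :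
    ∃ γ' D', IsGenerating (restrictRel R Y) γ' D' := by
  refine ⟨fun k ↦ k.casesOn id γ, fun k ↦ k.casesOn univ fun k ↦ D k ∩ Y ∩ γ k ⁻¹' Y, ?_, ?_⟩
  · rintro (_ | k)
    · exact isPartialAut_id (fun _ ↦ .inl rfl) .univ
    · exact ⟨(hγ k).measurable, ((hγ k).measurableSet.inter hY).inter ((hγ k).measurable hY),
        (hγ k).injOn.mono fun x hx ↦ hx.1.1,
        fun x hx ↦ .inr ⟨hx.1.2, hx.2, (hγ k).rel x hx.1.1⟩⟩
  · rintro x y (rfl | ⟨hx, hy, hxy⟩)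
    · exact ⟨0, mem_univ _, rfl⟩
    · obtain ⟨k, hk, rfl⟩ := hYγ x hx y hxy
      exact ⟨k + 1, ⟨⟨hk, hx⟩, hy⟩, rfl⟩

variable [StandardBorelSpace X]

theorem IsExhaustion.restrictRel {S : ℕ → X → X → Prop} (hS : IsExhaustion R S) {Y : Set X}
    (hY : MeasurableSet Y) :
    IsExhaustion (restrictRel R Y) fun n ↦ restrictRel (S n) Y where
  isFiniteBorelEquiv n := (hS.isFiniteBorelEquiv n).restrictRel hY
  monotone _ _ hmn _ _ h := h.imp_right fun h ↦ ⟨h.1, h.2.1, hS.monotone hmn _ _ h.2.2⟩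
  rel_iff x y := by
    simp only [Dye.restrictRel, hS.rel_iff, exists_or, exists_and_left, exists_const]

theorem exists_isExhaustion_restrictRel {μ : Measure X} (hR : HyperfiniteRel μ R) :
    ∃ Y, MeasurableSet Y ∧ μ Yᶜ = 0 ∧ ∃ S, IsExhaustion (restrictRel R Y) S := by
  obtain ⟨Y, S, hY, hμY, S_meas, -, S_symm, S_trans, -, S_fin, S_succ, rel_iff⟩ := hR
  refine ⟨Y, hY, hμY, fun n ↦ restrictRel (S n) Y, fun n ↦ ⟨measurableSet_restrictRel (S_meas n) hY,
    restrictRel_equivalence (S_symm n) (S_trans n), finite_restrictRel (S_fin n)⟩, ?_,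
    fun x y ↦ ?_⟩
  · exact monotone_nat_of_le_succ fun n x y h ↦
      h.imp_right fun h ↦ ⟨h.1, h.2.1, S_succ n x y h.2.2⟩
  · simp only [restrictRel, exists_or, exists_and_left, exists_const]
    exact or_congr_right (and_congr_right fun hx ↦ and_congr_right fun hy ↦ rel_iff x hx y hy)

theorem exists_mem_countableBasis_existsUnique {X : Type*} [TopologicalSpace X]
    [SecondCountableTopology X] [T1Space X] {F : Set X} (hF : F.Finite) {x : X} (hx : x ∈ F) :
    ∃ U ∈ TopologicalSpace.countableBasis X, x ∈ U ∧ ∃! z, z ∈ F ∧ z ∈ U := by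
  have isOpen_compl : IsOpen (F \ {x})ᶜ := (hF.subset sdiff_subset).isClosed.isOpen_compl
  obtain ⟨U, hU, hxU, hUF⟩ := (TopologicalSpace.isBasis_countableBasis X).exists_subset_of_mem_open
    (show x ∈ (F \ {x})ᶜ from fun h ↦ h.2 rfl) isOpen_compl
  exact ⟨U, hU, hxU, x, ⟨hx, hxU⟩, fun z hz ↦ by_contra fun hne ↦ hUF hz.2 ⟨hz.1, hne⟩⟩

theorem IsExhaustion.exists_isPartialAut_ae (μ : Measure X) [IsFiniteMeasure μ]
    {S : ℕ → X → X → Prop} (hS : IsExhaustion R S) :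
    ∃ (γ : ℕ → X → X) (D : ℕ → Set X), (∀ k, IsPartialAut R (γ k) (D k)) ∧
      ∀ᵐ x ∂μ, ∀ y, R x y → ∃ k, x ∈ D k ∧ γ k x = y := by
  rcases isEmpty_or_nonempty X with _ | _
  · exact ⟨fun _ ↦ id, fun _ ↦ ∅, fun _ ↦ ⟨measurable_id, .empty, injOn_id _, isEmptyElim⟩,
      .of_forall isEmptyElim⟩
  let := upgradeStandardBorel X
  let 𝓑 := TopologicalSpace.countableBasis X
  have basis_meas (U : 𝓑) : MeasurableSet U.1 :=
    (TopologicalSpace.isOpen_of_mem_countableBasis U.2).measurableSet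
  have equiv (n : ℕ) := (hS.isFiniteBorelEquiv n).equivalence
  choose g D hg hgD using fun i : ℕ × 𝓑 × 𝓑 ↦
    Dye.exists_isPartialAut_ae μ (hS.isFiniteBorelEquiv i.1).measurableSet
      (fun _ _ ↦ (equiv i.1).symm) (fun _ _ _ ↦ (equiv i.1).trans)
      (basis_meas i.2.1) (basis_meas i.2.2)
  obtain ⟨U₀, hU₀, -⟩ :=
    exists_mem_countableBasis_existsUnique (finite_singleton (Classical.arbitrary X)) rfl
  have : Nonempty 𝓑 := ⟨U₀, hU₀⟩
  obtain ⟨enum, enum_surj⟩ := exists_surjective_nat (ℕ × 𝓑 × 𝓑)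
  refine ⟨fun k ↦ g (enum k), fun k ↦ D (enum k), fun k ↦ ?_, ?_⟩
  · have := hg (enum k)
    exact ⟨this.measurable, this.measurableSet, this.injOn, fun x hx ↦ hS.rel (this.rel x hx)⟩
  filter_upwards [ae_all_iff.2 hgD] with x hx y hxy
  obtain ⟨n, hn⟩ := (hS.rel_iff x y).1 hxy
  have class_finite := (hS.isFiniteBorelEquiv n).finite x
  obtain ⟨U, hU, hxU, hxU'⟩ :=
    exists_mem_countableBasis_existsUnique class_finite ((equiv n).refl x)
  obtain ⟨V, hV, hyV, hyV'⟩ := exists_mem_countableBasis_existsUnique class_finite hn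
  obtain ⟨k, hk⟩ := enum_surj (n, ⟨U, hU⟩, ⟨V, hV⟩)
  obtain ⟨hxD, hxg, hgV⟩ := hx (n, ⟨U, hU⟩, ⟨V, hV⟩) hxU hxU' hyV'
  exact ⟨k, hk ▸ hxD, hk ▸ hyV'.unique ⟨hxg, hgV⟩ ⟨hn, hyV⟩⟩

theorem exists_isErgodicHyperfinite_restrictRel {μ : Measure X} [IsFiniteMeasure μ]
    (hR : Equivalence R) (hg : MeasurableSet {p : X × X | R p.1 p.2}) (hinv : InvariantRel μ R)
    (herg : ErgodicRel μ R) (hhyp : HyperfiniteRel μ R) :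
    ∃ (Y : Set X) (R' : X → X → Prop), MeasurableSet Y ∧ μ Yᶜ = 0 ∧
      (∀ x ∈ Y, ∀ y ∈ Y, (R' x y ↔ R x y)) ∧ IsErgodicHyperfinite μ R' := by
  obtain ⟨Z, hZ, hμZ, S, hS⟩ := exists_isExhaustion_restrictRel hhyp
  set T := restrictRel R Z with hT
  have equiv : Equivalence T :=
    restrictRel_equivalence (fun _ _ ↦ hR.symm) fun _ _ _ ↦ hR.trans
  obtain ⟨γ, D, hγ, hγ_ae⟩ := hS.exists_isPartialAut_ae μ
  obtain ⟨W, W_ae, W_meas, W_sub⟩ := hγ_ae.exists_measurable_mem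
  refine ⟨Z ∩ W, restrictRel T W, hZ.inter W_meas, ?_, fun x hx y hy ↦ ?_, ?_⟩
  · rw [compl_inter]; exact measure_union_null hμZ W_ae
  · rw [restrictRel_iff equiv.refl hx.2 hy.2, hT, restrictRel_iff hR.refl hx.1 hy.1]
  · exact ⟨restrictRel_equivalence (fun _ _ ↦ equiv.symm) fun _ _ _ ↦ equiv.trans,
      invariantRel_restrictRel (invariantRel_restrictRel hinv hR.refl) equiv.refl,
      ergodicRel_restrictRel (ergodicRel_restrictRel herg hR hg hZ hμZ) equiv
        (measurableSet_restrictRel hg hZ) W_meas W_ae,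
      exists_isGenerating_restrictRel hγ W_meas W_sub,
      _, hS.restrictRel W_meas⟩

end Hyperfinite

section Array

variable {X ι : Type*} [MeasurableSpace X] {R : X → X → Prop} {f : ι → X → X} {C : ι → Set X}

/-- A family of partial automorphisms `f i : C i → X` of `R` whose images, the *floors*, are
pairwise disjoint. The sources may overlap: in a Rokhlin tower they are all equal. -/
structure IsArray (R : X → X → Prop) (f : ι → X → X) (C : ι → Set X) : Prop where
  isPartialAut : ∀ i, IsPartialAut R (f i) (C i)
  disjoint : Pairwise (Disjoint on fun i ↦ f i '' C i)

namespace IsArray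

theorem eq_of_apply_eq (h : IsArray R f C) {i j : ι} {x y : X} (hx : x ∈ C i) (hy : y ∈ C j)
    (hxy : f i x = f j y) : i = j ∧ x = y := by
  obtain rfl : i = j := by_contra fun hij ↦
    Set.disjoint_left.1 (h.disjoint hij) ⟨x, hx, rfl⟩ ⟨y, hy, hxy.symm⟩
  exact ⟨rfl, (h.isPartialAut i).injOn hx hy hxy⟩

theorem exists_glue [Countable ι] [Nonempty ι] (h : IsArray R f C)
    (hC : Pairwise (Disjoint on C)) :
    ∃ g, IsPartialAut R g (⋃ i, C i) ∧ ∀ i, EqOn g (f i) (C i) := by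
  obtain ⟨g, hg, hgf⟩ := exists_measurable_piecewise C (fun i ↦ (h.isPartialAut i).measurableSet) f
    (fun i ↦ (h.isPartialAut i).measurable)
    fun i j hij x hx ↦ (Set.disjoint_left.1 (hC hij) hx.1 hx.2).elim
  refine ⟨g, ⟨hg, .iUnion fun i ↦ (h.isPartialAut i).measurableSet, fun x hx y hy hxy ↦ ?_,
    fun x hx ↦ ?_⟩, hgf⟩
  · obtain ⟨i, hi⟩ := mem_iUnion.1 hx
    obtain ⟨j, hj⟩ := mem_iUnion.1 hy
    rw [hgf i hi, hgf j hj] at hxy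
    exact (h.eq_of_apply_eq hi hj hxy).2
  · obtain ⟨i, hi⟩ := mem_iUnion.1 hx
    exact hgf i hi ▸ (h.isPartialAut i).rel x hi

end IsArray

end Array

section Comparison

variable {X : Type*} {R : X → X → Prop} {γ : ℕ → X → X} {D : ℕ → Set X} {A B : Set X}

/-- The part of `A` that `γ k` sends into `B` in the greedy construction of a partial injection from
`A` to `B`: points already used as arguments or as values at an earlier stage are left out. -/
def greedyPiece (γ : ℕ → X → X) (D : ℕ → Set X) (A B : Set X) : ℕ → Set X
  | k => {x ∈ A ∩ D k | γ k x ∈ B ∧ ∀ j : Fin k,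
      x ∉ greedyPiece γ D A B j ∧ γ k x ∉ γ j '' greedyPiece γ D A B j}

theorem mem_greedyPiece {k : ℕ} {x : X} :
    x ∈ greedyPiece γ D A B k ↔ (x ∈ A ∧ x ∈ D k) ∧ γ k x ∈ B ∧
      ∀ j < k, x ∉ greedyPiece γ D A B j ∧ γ k x ∉ γ j '' greedyPiece γ D A B j := by
  rw [greedyPiece]
  exact and_congr_right fun _ ↦ and_congr_right fun _ ↦ Fin.forall_iff

theorem greedyPiece_disjoint : Pairwise (Disjoint on (greedyPiece γ D A B)) :=
  (pairwise_disjoint_on _).2 fun _ _ hjk ↦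
    Set.disjoint_left.2 fun _ hj hk ↦ ((mem_greedyPiece.1 hk).2.2 _ hjk).1 hj

theorem exists_mem_greedyPiece {k : ℕ} {x : X} (hxA : x ∈ A) (hxD : x ∈ D k) (hxB : γ k x ∈ B) :
    ∃ j, x ∈ greedyPiece γ D A B j ∨ γ k x ∈ γ j '' greedyPiece γ D A B j := by
  by_contra! h
  exact (h k).1 (mem_greedyPiece.2 ⟨⟨hxA, hxD⟩, hxB, fun j _ ↦ h j⟩)

variable [MeasurableSpace X] [StandardBorelSpace X]

theorem isPartialAut_greedyPiece (hγ : ∀ k, IsPartialAut R (γ k) (D k)) (hA : MeasurableSet A)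
    (hB : MeasurableSet B) (k : ℕ) : IsPartialAut R (γ k) (greedyPiece γ D A B k) := by
  induction k using Nat.strong_induction_on with
  | h k ih =>
    refine (hγ k).mono ?_ fun x hx ↦ (mem_greedyPiece.1 hx).1.2
    have unused_meas : MeasurableSet {x | ∀ j : Fin k, x ∉ greedyPiece γ D A B j ∧
        γ k x ∉ γ j '' greedyPiece γ D A B j} :=
      measurableSet_setOfPred.2 <| .forall fun j ↦ .and (ih j j.2).measurableSet.compl.mem
        ((hγ k).measurable (ih j j.2).measurableSet_image.compl).mem
    rw [greedyPiece]
    exact (hA.inter (hγ k).measurableSet).inter (((hγ k).measurable hB).inter unused_meas)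

theorem isArray_greedyPiece (hγ : ∀ k, IsPartialAut R (γ k) (D k)) (hA : MeasurableSet A)
    (hB : MeasurableSet B) : IsArray R γ (greedyPiece γ D A B) where
  isPartialAut := isPartialAut_greedyPiece hγ hA hB
  disjoint := (pairwise_disjoint_on _).2 fun j k hjk ↦ by
    rw [Set.disjoint_left]
    rintro _ hj ⟨x, hx, rfl⟩
    exact ((mem_greedyPiece.1 hx).2.2 j hjk).2 hj

theorem IsGenerating.exists_maximal_isPartialAut (hγ : IsGenerating R γ D) (hA : MeasurableSet A)
    (hB : MeasurableSet B) :
    ∃ g A', IsPartialAut R g A' ∧ A' ⊆ A ∧ MapsTo g A' B ∧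
      ∀ x ∈ A \ A', ∀ y ∈ B \ g '' A', ¬ R x y := by
  obtain ⟨g, hg, hgγ⟩ :=
    (isArray_greedyPiece hγ.isPartialAut hA hB).exists_glue greedyPiece_disjoint
  refine ⟨g, _, hg, iUnion_subset fun k x hx ↦ (mem_greedyPiece.1 hx).1.1, fun x hx ↦ ?_, ?_⟩
  · obtain ⟨k, hk⟩ := mem_iUnion.1 hx
    exact hgγ k hk ▸ (mem_greedyPiece.1 hk).2.1
  · intro x ⟨hxA, hx⟩ y ⟨hyB, hy⟩ hxy
    obtain ⟨k, hk, rfl⟩ := hγ.exists_eq x y hxy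
    obtain ⟨j, hj | ⟨z, hz, hzx⟩⟩ := exists_mem_greedyPiece hxA hk hyB
    · exact hx (mem_iUnion.2 ⟨j, hj⟩)
    · exact hy ⟨z, mem_iUnion.2 ⟨j, hz⟩, (hgγ j hz).trans hzx⟩

theorem IsGenerating.measurableSet_saturation (hγ : IsGenerating R γ D) (hA : MeasurableSet A) :
    MeasurableSet {y | ∃ x ∈ A, R x y} := by
  have saturation_eq : {y | ∃ x ∈ A, R x y} = ⋃ k, γ k '' (A ∩ D k) := by
    ext y
    rw [mem_iUnion]
    constructor
    · rintro ⟨x, hx, hxy⟩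
      obtain ⟨k, hk, rfl⟩ := hγ.exists_eq x y hxy
      exact ⟨k, x, ⟨hx, hk⟩, rfl⟩
    · rintro ⟨k, x, hx, rfl⟩
      exact ⟨x, hx.1, (hγ.isPartialAut k).rel x hx.2⟩
  rw [saturation_eq]
  exact .iUnion fun k ↦ ((hγ.isPartialAut k).mono
    (hA.inter (hγ.isPartialAut k).measurableSet) inter_subset_right).measurableSet_image

theorem IsErgodicHyperfinite.measure_eq_zero_or {μ : Measure X} (hR : IsErgodicHyperfinite μ R)
    (hA : MeasurableSet A) (hAB : ∀ x ∈ A, ∀ y ∈ B, ¬ R x y) : μ A = 0 ∨ μ B = 0 := by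
  obtain ⟨γ, D, hγ⟩ := hR.exists_isGenerating
  have invariant : ∀ y ∈ {y | ∃ x ∈ A, R x y}, ∀ z, R y z → z ∈ {y | ∃ x ∈ A, R x y} :=
    fun y ⟨x, hx, hxy⟩ z hyz ↦ ⟨x, hx, hR.equivalence.trans hxy hyz⟩
  refine (hR.ergodic _ (hγ.measurableSet_saturation hA) invariant).imp (measure_mono_null ?_)
    (measure_mono_null ?_)
  · exact fun x hx ↦ ⟨x, hx, hR.equivalence.refl x⟩
  · exact fun y hy ⟨x, hx, hxy⟩ ↦ hAB x hx y hy hxy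

theorem IsErgodicHyperfinite.exists_isPartialAut_of_measure_eq {μ : Measure X} [IsFiniteMeasure μ]
    (hR : IsErgodicHyperfinite μ R) (hA : MeasurableSet A) (hB : MeasurableSet B)
    (hAB : μ A = μ B) :
    ∃ g A', IsPartialAut R g A' ∧ A' ⊆ A ∧ μ (A \ A') = 0 ∧ MapsTo g A' B := by
  obtain ⟨γ, D, hγ⟩ := hR.exists_isGenerating
  obtain ⟨g, A', hg, hA', hgB, unrelated⟩ := hγ.exists_maximal_isPartialAut hA hB
  have measure_diff : μ (B \ g '' A') = μ (A \ A') := by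
    rw [measure_sdiff hA' hg.measurableSet.nullMeasurableSet (measure_ne_top _ _),
      measure_sdiff hgB.image_subset hg.measurableSet_image.nullMeasurableSet (measure_ne_top _ _),
      hAB, hg.measure_image hR.invariant]
  refine ⟨g, A', hg, hA', ?_, hgB⟩
  exact (hR.measure_eq_zero_or (hA.diff hg.measurableSet) unrelated).elim id
    fun h ↦ measure_diff ▸ h

end Comparison

section Cutting

theorem continuous_measureReal_Iic (ν : Measure ℝ) [IsFiniteMeasure ν] [NullSingletonClass ν] :
    Continuous fun r ↦ ν.real (Iic r) := by
  have primitive_eq (r : ℝ) :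
      ∫ _ in (0 : ℝ)..r, (1 : ℝ) ∂ν = ν.real (Iic r) - ν.real (Iic 0) := by
    rw [intervalIntegral.integral_const_of_cdf, smul_eq_mul, mul_one]
  have continuous_primitive := (integrable_const (μ := ν) (1 : ℝ)).continuous_primitive 0
  simp only [primitive_eq] at continuous_primitive
  simpa using continuous_primitive.add_const (ν.real (Iic 0))

theorem exists_measurableSet_real_measureReal_eq (ν : Measure ℝ) [IsFiniteMeasure ν]
    [NullSingletonClass ν] {t : ℝ} (ht₀ : 0 ≤ t) (ht : t ≤ ν.real univ) :
    ∃ B, MeasurableSet B ∧ ν.real B = t := by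
  rcases ht₀.eq_or_lt with rfl | ht₀
  · exact ⟨∅, .empty, measureReal_empty⟩
  rcases ht.eq_or_lt with rfl | ht
  · exact ⟨univ, .univ, rfl⟩
  have tendsto_atTop : Tendsto (fun r ↦ ν.real (Iic r)) atTop (𝓝 (ν.real univ)) :=
    (ENNReal.tendsto_toReal (measure_ne_top _ _)).comp (tendsto_measure_Iic_atTop ν)
  have tendsto_atBot : Tendsto (fun r ↦ ν.real (Iic r)) atBot (𝓝 0) := by
    have := tendsto_measure_iInter_atBot (μ := ν) (s := fun r : ℝ ↦ Iic r)
      (fun r ↦ measurableSet_Iic.nullMeasurableSet) monotone_Iic ⟨0, measure_ne_top _ _⟩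
    rw [iInter_Iic_eq_empty_iff.2 (by simp), measure_empty] at this
    exact (ENNReal.tendsto_toReal ENNReal.zero_ne_top).comp this
  obtain ⟨r, hr⟩ := mem_range_of_exists_le_of_exists_ge (continuous_measureReal_Iic ν)
    ((tendsto_atBot.eventually_le_const ht₀).exists) ((tendsto_atTop.eventually_const_le ht).exists)
  exact ⟨Iic r, measurableSet_Iic, hr⟩

theorem exists_subset_measureReal_eq {X : Type*} [MeasurableSpace X] [StandardBorelSpace X]
    (μ : Measure X) [IsFiniteMeasure μ] [NullSingletonClass μ] {A : Set X} (hA : MeasurableSet A)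
    {t : ℝ} (ht₀ : 0 ≤ t) (ht : t ≤ μ.real A) : ∃ B ⊆ A, MeasurableSet B ∧ μ.real B = t := by
  obtain ⟨e, he⟩ := exists_measurableEmbedding_real X
  have map_real {B : Set ℝ} (hB : MeasurableSet B) :
      ((μ.restrict A).map e).real B = μ.real (e ⁻¹' B ∩ A) := by
    rw [map_measureReal_apply he.measurable hB, measureReal_restrict_apply (he.measurable hB)]
  have : NullSingletonClass ((μ.restrict A).map e) := ⟨fun r ↦ by
    rw [Measure.map_apply he.measurable (measurableSet_singleton r)]
    exact (subsingleton_singleton.preimage he.injective).measure_zero _⟩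
  obtain ⟨B, hB, hBt⟩ := exists_measurableSet_real_measureReal_eq ((μ.restrict A).map e) ht₀
    (by rwa [map_real .univ, preimage_univ, univ_inter])
  exact ⟨e ⁻¹' B ∩ A, inter_subset_right, (he.measurable hB).inter hA, map_real hB ▸ hBt⟩

theorem exists_disjoint_subsets_measureReal_eq {X : Type*} [MeasurableSpace X]
    [StandardBorelSpace X] (μ : Measure X) [IsFiniteMeasure μ] [NullSingletonClass μ] {δ : ℝ}
    (hδ : 0 ≤ δ) (N : ℕ) {A : Set X} (hA : MeasurableSet A) (hN : N * δ ≤ μ.real A) :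
    ∃ B : Fin N → Set X, (∀ q, MeasurableSet (B q) ∧ B q ⊆ A ∧ μ.real (B q) = δ) ∧
      Pairwise (Disjoint on B) := by
  induction N generalizing A with
  | zero => exact ⟨Fin.elim0, fun q ↦ q.elim0, fun q ↦ q.elim0⟩
  | succ N ih =>
    push_cast at hN
    obtain ⟨C, hCA, hC, hCδ⟩ := exists_subset_measureReal_eq μ hA hδ
      (show δ ≤ μ.real A by nlinarith [N.cast_nonneg (α := ℝ)])
    obtain ⟨B, hB, hBdisj⟩ := ih (hA.diff hC) (by rw [measureReal_sdiff hCA hC]; linarith)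
    have hCB (q : Fin N) : Disjoint C (B q) := disjoint_sdiff_right.mono_right (hB q).2.1
    refine ⟨Fin.cons C B, fun q ↦ ?_, fun p q hpq ↦ ?_⟩
    · induction q using Fin.cases with
      | zero => exact ⟨hC, hCA, hCδ⟩
      | succ q => exact ⟨(hB q).1, (hB q).2.1.trans sdiff_subset, (hB q).2.2⟩
    · induction p using Fin.cases <;> induction q using Fin.cases
      · exact (hpq rfl).elim
      · exact hCB _
      · exact (hCB _).symm
      · exact hBdisj (ne_of_apply_ne Fin.succ hpq)

end Cutting

section Castle

variable {X Q Λ : Type*} {K : Q → Type*} [MeasurableSpace X] {R S : X → X → Prop} {P : X → Λ}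
  {A : Set X} {f : (q : Q) → K q → X → X} {C : Q → Set X}

namespace IsArray

variable {ι κ : Type*} {f : ι → X → X} {C : ι → Set X}

theorem mono (h : IsArray R f C) {B : ι → Set X} (hB : ∀ i, MeasurableSet (B i))
    (hBC : ∀ i, B i ⊆ C i) : IsArray R f B where
  isPartialAut i := (h.isPartialAut i).mono (hB i) (hBC i)
  disjoint _ _ hij := (h.disjoint hij).mono (image_mono (hBC _)) (image_mono (hBC _))

theorem comp_injective (h : IsArray R f C) {e : κ → ι} (he : e.Injective) :
    IsArray R (fun k ↦ f (e k)) fun k ↦ C (e k) where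
  isPartialAut k := h.isPartialAut (e k)
  disjoint := h.disjoint.comp_of_injective he

theorem comp_isPartialAut (h : IsArray R f C) {g : ι → X → X} {A : Set X}
    (hg : ∀ i, IsPartialAut R (g i) A) (hgC : ∀ i, MapsTo (g i) A (C i))
    (hR : ∀ x y z, R x y → R y z → R x z) : IsArray R (fun i ↦ f i ∘ g i) fun _ ↦ A where
  isPartialAut i := (hg i).comp (h.isPartialAut i) (hgC i) hR
  disjoint i j hij := by
    have floor_subset (i : ι) : f i ∘ g i '' A ⊆ f i '' C i := by
      rw [image_comp]
      exact image_mono (hgC i).image_subset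
    exact (h.disjoint hij).mono (floor_subset i) (floor_subset j)

theorem comp_isArray {A B : Set X} {f : ι → X → X} {g : κ → X → X} (hf : IsArray R f fun _ ↦ A)
    (hg : IsArray R g fun _ ↦ B) (hgA : ∀ k, MapsTo (g k) B A)
    (hR : ∀ x y z, R x y → R y z → R x z) :
    IsArray R (fun p : ι × κ ↦ f p.1 ∘ g p.2) fun _ ↦ B where
  isPartialAut p := (hg.isPartialAut p.2).comp (hf.isPartialAut p.1) (hgA p.2) hR
  disjoint p q hpq := by
    refine Set.disjoint_left.2 ?_
    rintro _ ⟨x, hx, rfl⟩ ⟨y, hy, hxy⟩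
    obtain ⟨index_eq, hxy⟩ := hf.eq_of_apply_eq (hgA _ hy) (hgA _ hx) hxy
    exact hpq (Prod.ext index_eq (hg.eq_of_apply_eq hy hx hxy).1).symm

theorem sumElim (h : IsArray R f C) {g : κ → X → X} {D : κ → Set X} (h' : IsArray R g D)
    (hd : ∀ i j, Disjoint (f i '' C i) (g j '' D j)) :
    IsArray R (Sum.elim f g) (Sum.elim C D) where
  isPartialAut := Sum.rec h.isPartialAut h'.isPartialAut
  disjoint := by
    rintro (i | i) (j | j) hij
    · exact h.disjoint fun hij' ↦ hij (congrArg _ hij')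
    · exact hd i j
    · exact (hd j i).symm
    · exact h'.disjoint fun hij' ↦ hij (congrArg _ hij')

variable [StandardBorelSpace X] [Countable ι]

theorem measurableSet_iUnion (h : IsArray R f C) : MeasurableSet (⋃ i, f i '' C i) :=
  .iUnion fun i ↦ (h.isPartialAut i).measurableSet_image

theorem hasSum_measureReal (h : IsArray R f C) {μ : Measure X} [IsFiniteMeasure μ]
    (hμ : InvariantRel μ R) : HasSum (fun i ↦ μ.real (C i)) (μ.real (⋃ i, f i '' C i)) := by
  have measure_eq : μ (⋃ i, f i '' C i) = ∑' i, μ (C i) := by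
    rw [measure_iUnion h.disjoint fun i ↦ (h.isPartialAut i).measurableSet_image]
    exact tsum_congr fun i ↦ (h.isPartialAut i).measure_image hμ
  have hasSum := ENNReal.hasSum_toReal (measure_eq ▸ measure_ne_top μ _)
  rwa [← ENNReal.tsum_toReal_eq fun i ↦ measure_ne_top μ _, ← measure_eq] at hasSum

end IsArray

/-- A castle in `A`: columns indexed by `q : Q`, with base `C q` and floors `f q k '' C q`, all
floors being pairwise disjoint subsets of `A`. It is required to be adapted to a function `P` and a
relation `S` on `X`: `P` is constant on every floor, and a point of `A` which is `S`-related to a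
point of the castle lies in the same column above the same point of the base. -/
structure IsCastle (R S : X → X → Prop) (P : X → Λ) (A : Set X) (f : (q : Q) → K q → X → X)
    (C : Q → Set X) : Prop where
  measurableSet : ∀ q, MeasurableSet (C q)
  isArray : IsArray R (fun i : Σ q, K q ↦ f i.1 i.2) fun i ↦ C i.1
  mapsTo : ∀ q k, MapsTo (f q k) (C q) A
  eq_of_mem : ∀ q k, ∀ x ∈ C q, ∀ y ∈ C q, P (f q k x) = P (f q k y)
  exists_eq : ∀ q k, ∀ x ∈ C q, ∀ y ∈ A, S (f q k x) y → ∃ k', f q k' x = y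

namespace IsCastle

theorem subdivide (h : IsCastle R S P A f C) {Q' : Type*} {r : Q' → Q} {B : Q' → Set X}
    (hB : ∀ q, MeasurableSet (B q)) (hBC : ∀ q, B q ⊆ C (r q))
    (hBdisj : ∀ p q, p ≠ q → r p = r q → Disjoint (B p) (B q)) :
    IsCastle R S P A (fun q ↦ f (r q)) B where
  measurableSet := hB
  isArray :=
    { isPartialAut := fun i ↦ (h.isArray.isPartialAut ⟨r i.1, i.2⟩).mono (hB _) (hBC _)
      disjoint := by
        rintro ⟨p, k⟩ ⟨q, l⟩ hpq
        refine Set.disjoint_left.2 ?_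
        rintro _ ⟨x, hx, rfl⟩ ⟨y, hy, hxy⟩
        obtain ⟨heq, rfl⟩ := h.isArray.eq_of_apply_eq (i := ⟨r q, l⟩) (j := ⟨r p, k⟩)
          (hBC q hy) (hBC p hx) hxy
        obtain ⟨hr, hkl⟩ := Sigma.mk.inj heq
        obtain rfl : p = q := by_contra fun hne ↦
          Set.disjoint_left.1 (hBdisj p q hne hr.symm) hx hy
        exact hpq (congrArg _ (eq_of_heq hkl).symm) }
  mapsTo q k := (h.mapsTo (r q) k).mono_left (hBC q)
  eq_of_mem q k x hx y hy := h.eq_of_mem (r q) k x (hBC q hx) y (hBC q hy)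
  exists_eq q k x hx := h.exists_eq (r q) k x (hBC q hx)

theorem comp_isPartialAut (h : IsCastle R S P A f C) {g : Q → X → X} {A' : Set X}
    (hg : ∀ q, IsPartialAut R (g q) A') (hgC : ∀ q, MapsTo (g q) A' (C q))
    (hR : ∀ x y z, R x y → R y z → R x z) :
    IsCastle R S P A (fun q k ↦ f q k ∘ g q) fun _ ↦ A' where
  measurableSet q := (hg q).measurableSet
  isArray := h.isArray.comp_isPartialAut (fun i ↦ hg i.1) (fun i ↦ hgC i.1) hR
  mapsTo q k := (h.mapsTo q k).comp (hgC q)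
  eq_of_mem q k _ hx _ hy := h.eq_of_mem q k _ (hgC q hx) _ (hgC q hy)
  exists_eq q k _ hx := h.exists_eq q k _ (hgC q hx)

end IsCastle

end Castle

section Columns

variable {X Λ : Type*} {R S : X → X → Prop} {γ : ℕ → X → X} {D : ℕ → Set X} {A T : Set X}
  {P : X → Λ}

/-- The points `x ∈ D l` for which `γ l x` belongs to `A` and to the `S`-class of `x`, and is not
already the image of `x` under a `γ j` with `j < l`. -/
def firstReach (S : X → X → Prop) (γ : ℕ → X → X) (D : ℕ → Set X) (A : Set X) (l : ℕ) : Set X :=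
  {x ∈ D l | γ l x ∈ A ∧ S x (γ l x) ∧ ∀ j < l, x ∈ D j → γ j x ≠ γ l x}

theorem eq_of_mem_firstReach {l m : ℕ} {x : X} (hl : x ∈ firstReach S γ D A l)
    (hm : x ∈ firstReach S γ D A m) (h : γ l x = γ m x) : l = m :=
  le_antisymm (not_lt.1 fun hml ↦ hl.2.2.2 m hml hm.1 h.symm)
    (not_lt.1 fun hlm ↦ hm.2.2.2 l hlm hl.1 h)

/-- The part of `T` above which the points of `A` reached within the `S`-class are described by the
finite set `t`: a pair `(l, v) ∈ t` stands for a point reached by `γ l` and labelled `v` by `P`. -/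
def columnBase (S : X → X → Prop) (γ : ℕ → X → X) (D : ℕ → Set X) (P : X → Λ) (A T : Set X)
    (t : Finset (ℕ × Λ)) : Set X :=
  {x ∈ T | ∀ ξ : ℕ × Λ, ξ ∈ t ↔ x ∈ firstReach S γ D A ξ.1 ∧ P (γ ξ.1 x) = ξ.2}

theorem eq_of_mem_columnBase {t u : Finset (ℕ × Λ)} {x : X} (ht : x ∈ columnBase S γ D P A T t)
    (hu : x ∈ columnBase S γ D P A T u) : t = u :=
  Finset.ext fun ξ ↦ (ht.2 ξ).trans (hu.2 ξ).symm

theorem exists_mem_columnBase (hS : ∀ x, {y | S x y}.Finite) {x : X} (hx : x ∈ T) :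
    ∃ t, x ∈ columnBase S γ D P A T t := by
  have finite : {ξ : ℕ × Λ | x ∈ firstReach S γ D A ξ.1 ∧ P (γ ξ.1 x) = ξ.2}.Finite := by
    refine .of_finite_image (f := fun ξ ↦ γ ξ.1 x) ((hS x).subset ?_) ?_
    · rintro _ ⟨ξ, hξ, rfl⟩
      exact hξ.1.2.2.1
    · intro ξ hξ ζ hζ hξζ
      have index_eq : ξ.1 = ζ.1 := eq_of_mem_firstReach hξ.1 hζ.1 hξζ
      exact Prod.ext index_eq (by rw [← hξ.2, ← hζ.2, index_eq])
  exact ⟨finite.toFinset, hx, fun ξ ↦ by simp⟩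

variable [MeasurableSpace X]

theorem IsGenerating.exists_mem_firstReach (hγ : IsGenerating R γ D) (hSR : ∀ x y, S x y → R x y)
    {x y : X} (hy : y ∈ A) (hxy : S x y) : ∃ l, x ∈ firstReach S γ D A l ∧ γ l x = y := by
  classical
  have reached := hγ.exists_eq x y (hSR x y hxy)
  obtain ⟨hD, hy_eq⟩ := Nat.find_spec reached
  refine ⟨Nat.find reached, ⟨hD, hy_eq.symm ▸ hy, hy_eq.symm ▸ hxy, fun j hj hxj heq ↦ ?_⟩, hy_eq⟩
  exact Nat.find_min reached hj ⟨hxj, heq.trans hy_eq⟩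

variable [StandardBorelSpace X]

theorem IsGenerating.measurableSet_firstReach (hγ : IsGenerating R γ D) (hS : IsFiniteBorelEquiv S)
    (hA : MeasurableSet A) (l : ℕ) : MeasurableSet (firstReach S γ D A l) := by
  have meas (j : ℕ) : Measurable (γ j) := (hγ.isPartialAut j).measurable
  have first_meas : MeasurableSet {x | ∀ j < l, x ∈ D j → γ j x ≠ γ l x} :=
    measurableSet_setOfPred.2 <| .forall fun j ↦ .forall fun _ ↦
      .imp (hγ.isPartialAut j).measurableSet.mem (.not (measurableSet_eq_fun (meas j) (meas l)).mem)
  exact (hγ.isPartialAut l).measurableSet.inter ((meas l hA).inter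
    ((measurable_id.prodMk (meas l) hS.measurableSet).inter first_meas))

theorem IsGenerating.measurableSet_columnBase (hγ : IsGenerating R γ D)
    (hS : IsFiniteBorelEquiv S) [Countable Λ] [MeasurableSpace Λ] [MeasurableSingletonClass Λ]
    (hP : Measurable P) (hA : MeasurableSet A) (hT : MeasurableSet T) (t : Finset (ℕ × Λ)) :
    MeasurableSet (columnBase S γ D P A T t) :=
  hT.inter <| measurableSet_setOfPred.2 <| .forall fun ξ ↦ .iff measurable_const <|
    .and (hγ.measurableSet_firstReach hS hA ξ.1).mem
      ((hP.comp (hγ.isPartialAut ξ.1).measurable) (measurableSet_singleton ξ.2)).mem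

theorem IsGenerating.exists_measurableSet_transversal (hγ : IsGenerating R γ D)
    (hS : IsFiniteBorelEquiv S) (hSR : ∀ x y, S x y → R x y) (hA : MeasurableSet A) :
    ∃ T ⊆ A, MeasurableSet T ∧ (∀ x ∈ T, ∀ y ∈ T, S x y → x = y) ∧ ∀ y ∈ A, ∃ x ∈ T, S x y := by
  obtain ⟨e, he⟩ := exists_measurableEmbedding_real X
  have minimal_meas : MeasurableSet {x | ∀ l, x ∈ firstReach S γ D A l → e x ≤ e (γ l x)} :=
    measurableSet_setOfPred.2 <| .forall fun l ↦ .imp (hγ.measurableSet_firstReach hS hA l).mem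
      (measurableSet_le he.measurable (he.measurable.comp (hγ.isPartialAut l).measurable)).mem
  refine ⟨_, inter_subset_left, hA.inter minimal_meas, ?_, fun y hy ↦ ?_⟩
  · have le : ∀ x ∈ A ∩ {x | ∀ l, x ∈ firstReach S γ D A l → e x ≤ e (γ l x)}, ∀ y ∈ A,
        S x y → e x ≤ e y := by
      intro x hx y hy hxy
      obtain ⟨l, hl, rfl⟩ := hγ.exists_mem_firstReach hSR hy hxy
      exact hx.2 l hl
    exact fun x hx y hy hxy ↦ he.injective
      ((le x hx y hy.1 hxy).antisymm (le y hy x hx.1 (hS.equivalence.symm hxy)))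
  · obtain ⟨x, ⟨hxA, hyx⟩, hmin⟩ := Set.exists_min_image (A ∩ {z | S y z}) e
      ((hS.finite y).subset inter_subset_right) ⟨y, hy, hS.equivalence.refl y⟩
    exact ⟨x, ⟨hxA, fun l hl ↦ hmin _ ⟨hl.2.1, hS.equivalence.trans hyx hl.2.2.1⟩⟩,
      hS.equivalence.symm hyx⟩

theorem IsGenerating.isArray_columnBase (hγ : IsGenerating R γ D) (hS : IsFiniteBorelEquiv S)
    [Countable Λ] [MeasurableSpace Λ] [MeasurableSingletonClass Λ] (hP : Measurable P)
    (hA : MeasurableSet A) (hT : MeasurableSet T) (hTS : ∀ x ∈ T, ∀ y ∈ T, S x y → x = y) :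
    IsArray R (fun i : Σ t : Finset (ℕ × Λ), t ↦ γ i.2.1.1)
      fun i ↦ columnBase S γ D P A T i.1 where
  isPartialAut i := (hγ.isPartialAut _).mono (hγ.measurableSet_columnBase hS hP hA hT _)
    fun x hx ↦ ((hx.2 _).1 i.2.2).1.1
  disjoint := by
    rintro ⟨t, ξ, hξ⟩ ⟨u, ζ, hζ⟩ hne
    refine Set.disjoint_left.2 ?_
    rintro _ ⟨x, hx, rfl⟩ ⟨y, hy, hyx⟩
    obtain ⟨hxξ, hξv⟩ := (hx.2 ξ).1 hξ
    obtain ⟨hyζ, hζv⟩ := (hy.2 ζ).1 hζ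
    obtain rfl : y = x := hTS y hy.1 x hx.1 (hS.equivalence.trans hyζ.2.2.1
      ((congrArg (S · x) hyx).mpr (hS.equivalence.symm hxξ.2.2.1)))
    obtain rfl := eq_of_mem_columnBase hx hy
    obtain rfl : ξ = ζ := Prod.ext (eq_of_mem_firstReach hxξ hyζ hyx.symm)
      (by rw [← hξv, ← hζv]; exact congrArg P hyx.symm)
    exact hne rfl

theorem IsGenerating.exists_isCastle (hγ : IsGenerating R γ D) (hS : IsFiniteBorelEquiv S)
    (hSR : ∀ x y, S x y → R x y) [Countable Λ] [MeasurableSpace Λ] [MeasurableSingletonClass Λ]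
    (hP : Measurable P) (hA : MeasurableSet A) :
    ∃ C : Finset (ℕ × Λ) → Set X,
      IsCastle R S P A (fun (t : Finset (ℕ × Λ)) (ξ : t) ↦ γ ξ.1.1) C ∧
      ⋃ i : Σ t : Finset (ℕ × Λ), t, γ i.2.1.1 '' C i.1 = A := by
  obtain ⟨T, -, hT, hTS, hTA⟩ := hγ.exists_measurableSet_transversal hS hSR hA
  refine ⟨columnBase S γ D P A T, ⟨hγ.measurableSet_columnBase hS hP hA hT,
    hγ.isArray_columnBase hS hP hA hT hTS, ?_, ?_, ?_⟩,
    subset_antisymm (iUnion_subset ?_) fun y hy ↦ ?_⟩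
  · exact fun t ξ x hx ↦ ((hx.2 ξ).1 ξ.2).1.2.1
  · exact fun t ξ x hx y hy ↦ ((hx.2 ξ).1 ξ.2).2.trans ((hy.2 ξ).1 ξ.2).2.symm
  · intro t ξ x hx y hy hxy
    obtain ⟨l, hl, rfl⟩ := hγ.exists_mem_firstReach hSR hy
      (hS.equivalence.trans ((hx.2 ξ).1 ξ.2).1.2.2.1 hxy)
    exact ⟨⟨(l, P (γ l x)), (hx.2 _).2 ⟨hl, rfl⟩⟩, rfl⟩
  · rintro ⟨t, ξ⟩ _ ⟨x, hx, rfl⟩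
    exact ((hx.2 ξ).1 ξ.2).1.2.1
  · obtain ⟨x, hx, hxy⟩ := hTA y hy
    obtain ⟨l, hl, rfl⟩ := hγ.exists_mem_firstReach hSR hy hxy
    obtain ⟨t, ht⟩ := exists_mem_columnBase hS.finite hx
    exact mem_iUnion.2 ⟨⟨t, (l, P (γ l x)), (ht.2 _).2 ⟨hl, rfl⟩⟩, x, ht, rfl⟩

end Columns

section Refinement

theorem exists_dyadic_approx {Q : Type*} {h : Q → ℕ} {a : Q → ℝ} {s ε : ℝ} (ha : ∀ q, 0 ≤ a q)
    (hs : 0 < s) (hsum : HasSum (fun q ↦ h q * a q) s) (hε : 0 < ε) :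
    ∃ m > 0, ∃ t : Finset Q, s - ε ≤ (∑ q ∈ t, h q * ⌊a q / (s / 2 ^ m)⌋₊) * (s / 2 ^ m) := by
  obtain ⟨t, ht⟩ := (hsum.eventually_const_lt (sub_lt_self s hε)).exists
  have pow_atTop : Tendsto (fun m : ℕ ↦ (2 : ℝ) ^ m / s) atTop atTop :=
    (tendsto_pow_atTop_atTop_of_one_lt one_lt_two).atTop_div_const hs
  have tendsto_term (q : Q) :
      Tendsto (fun m : ℕ ↦ h q * ⌊a q / (s / 2 ^ m)⌋₊ * (s / 2 ^ m)) atTop (𝓝 (h q * a q)) := by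
    refine (((tendsto_nat_floor_mul_div_atTop (ha q)).comp pow_atTop).const_mul
      (h q : ℝ)).congr fun m ↦ ?_
    simp only [Function.comp_apply, div_div_eq_mul_div, mul_div_assoc', mul_assoc]
  have tendsto_sum := tendsto_finsetSum t fun q _ ↦ tendsto_term q
  obtain ⟨m, hm, hm₀⟩ :=
    ((tendsto_sum.eventually_const_lt ht).and (eventually_gt_atTop 0)).exists
  exact ⟨m, hm₀, t, by simpa [Finset.sum_mul] using hm.le⟩

variable {X Q Λ : Type*} {K : Q → Type*} [MeasurableSpace X] [StandardBorelSpace X]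
  {μ : Measure X} [IsFiniteMeasure μ] {R S : X → X → Prop} {P : X → Λ} {A : Set X}
  {f : (q : Q) → K q → X → X} {C : Q → Set X}

theorem IsCastle.exists_subdivision [NullSingletonClass μ] [Countable Q] [∀ q, Fintype (K q)]
    (h : IsCastle R S P A f C) (hμ : InvariantRel μ R)
    (hcover : ⋃ i : Σ q, K q, f i.1 i.2 '' C i.1 = A) (hA : 0 < μ.real A) {ε : ℝ} (hε : 0 < ε) :
    ∃ m > 0, ∃ (t : Finset Q) (N : t → ℕ) (B : (Σ q : t, Fin (N q)) → Set X),
      IsCastle R S P A (fun p ↦ f p.1) B ∧ (∀ p, μ.real (B p) = μ.real A / 2 ^ m) ∧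
      μ.real A - ε ≤ Fintype.card (Σ p : Σ q : t, Fin (N q), K p.1) * (μ.real A / 2 ^ m) := by
  have hasSum := h.isArray.hasSum_measureReal hμ
  rw [hcover] at hasSum
  replace hasSum := hasSum.sigma fun q ↦ hasSum_fintype fun _ : K q ↦ μ.real (C q)
  simp only [Finset.sum_const, Finset.card_univ, nsmul_eq_mul] at hasSum
  obtain ⟨m, hm, t, ht⟩ := exists_dyadic_approx (fun _ ↦ measureReal_nonneg) hA hasSum hε
  set δ := μ.real A / 2 ^ m
  have hδ : 0 < δ := by positivity
  choose B hB hBdisj using fun q : t ↦ exists_disjoint_subsets_measureReal_eq μ hδ.le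
    ⌊μ.real (C q) / δ⌋₊ (h.measurableSet q)
    ((le_div_iff₀ hδ).1 (Nat.floor_le (div_nonneg measureReal_nonneg hδ.le)))
  refine ⟨m, hm, t, fun q ↦ ⌊μ.real (C q) / δ⌋₊, fun p ↦ B p.1 p.2,
    h.subdivide (fun p ↦ (hB p.1 p.2).1) (fun p ↦ (hB p.1 p.2).2.1) ?_,
    fun p ↦ (hB p.1 p.2).2.2, ?_⟩
  · rintro ⟨p, k⟩ ⟨q, l⟩ hne hpq
    obtain rfl := Subtype.ext hpq
    exact hBdisj p fun hkl ↦ hne (congrArg _ hkl)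
  · convert ht using 2
    rw [Fintype.card_sigma, Fintype.sum_sigma, ← Finset.sum_coe_sort t]
    push_cast
    refine Finset.sum_congr rfl fun q _ ↦ ?_
    change ∑ _ : Fin _, (Fintype.card (K q) : ℝ) = _
    simp [mul_comm]

theorem IsErgodicHyperfinite.exists_common_base {ι : Type*} [Countable ι] {C : ι → Set X}
    (hR : IsErgodicHyperfinite μ R) (hC : ∀ i, MeasurableSet (C i)) {i₀ : ι}
    (hμC : ∀ i, μ (C i₀) = μ (C i)) :
    ∃ A', μ A' = μ (C i₀) ∧
      ∃ g : ι → X → X, ∀ i, IsPartialAut R (g i) A' ∧ MapsTo (g i) A' (C i) := by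
  choose g A hg hA hμA hgC using fun i ↦
    hR.exists_isPartialAut_of_measure_eq (hC i₀) (hC i) (hμC i)
  have meas : MeasurableSet (⋂ i, A i) := .iInter fun i ↦ (hg i).measurableSet
  have subset (i : ι) : ⋂ i, A i ⊆ A i := iInter_subset A i
  refine ⟨⋂ i, A i, measure_congr ?_, g, fun i ↦ ⟨(hg i).mono meas (subset i),
    (hgC i).mono_left (subset i)⟩⟩
  refine Filter.EventuallyLE.antisymm ((subset i₀).trans (hA i₀)).eventuallyLE ?_
  rw [ae_le_set, sdiff_iInter]
  exact measure_iUnion_null hμA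

theorem IsArray.exists_fill {ι : Type*} [Fintype ι] {f : ι → X → X} {C : ι → Set X} {M : ℕ} {δ : ℝ}
    [NullSingletonClass μ] (h : IsArray R f C) (hμ : InvariantRel μ R) (hR : ∀ x, R x x)
    (hA : MeasurableSet A) (hfA : ∀ i, MapsTo (f i) (C i) A) (hδ : 0 < δ)
    (hC : ∀ i, μ.real (C i) = δ) (hM : M * δ = μ.real A) :
    ∃ (N : ℕ) (B : Fin N → Set X), Fintype.card ι + N = M ∧ (∀ j, B j ⊆ A) ∧
      (∀ j, μ.real (B j) = δ) ∧ IsArray R (Sum.elim f fun _ ↦ id) (Sum.elim C B) := by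
  have measure_floors : μ.real (⋃ i, f i '' C i) = Fintype.card ι * δ := by
    rw [(h.hasSum_measureReal hμ).unique (hasSum_fintype _)]
    simp [hC]
  have floors_subset : ⋃ i, f i '' C i ⊆ A := iUnion_subset fun i ↦ (hfA i).image_subset
  have card_le : Fintype.card ι ≤ M := by
    have := measureReal_mono (μ := μ) floors_subset
    rw [measure_floors, ← hM] at this
    exact_mod_cast le_of_mul_le_mul_right this hδ
  obtain ⟨B, hB, hBdisj⟩ := exists_disjoint_subsets_measureReal_eq μ hδ.le (M - Fintype.card ι)
    (hA.diff h.measurableSet_iUnion) (by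
      rw [measureReal_sdiff floors_subset h.measurableSet_iUnion, measure_floors, ← hM,
        Nat.cast_sub card_le, sub_mul])
  refine ⟨_, B, by omega, fun j ↦ (hB j).2.1.trans sdiff_subset, fun j ↦ (hB j).2.2, ?_⟩
  refine h.sumElim ⟨fun j ↦ isPartialAut_id hR (hB j).1, ?_⟩ fun i j ↦ ?_
  · simpa only [image_id] using hBdisj
  · rw [image_id]
    exact (disjoint_sdiff_right.mono_right (hB j).2.1).mono_left
      (subset_iUnion (fun i ↦ f i '' C i) i)

theorem IsCastle.exists_dyadic_array [NullSingletonClass μ] [Finite Q] [∀ q, Finite (K q)]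
    (h : IsCastle R S P A f C) (hR : IsErgodicHyperfinite μ R) (hA : MeasurableSet A)
    (hA₀ : 0 < μ.real A) {m : ℕ} (hC : ∀ q, μ.real (C q) = μ.real A / 2 ^ m) :
    ∃ (A' : Set X) (ψ : (Fin m → Bool) → X → X) (g : Q → X → X), IsArray R ψ (fun _ ↦ A') ∧
      (∀ w, MapsTo (ψ w) A' A) ∧ μ.real A' = μ.real A / 2 ^ m ∧
      (∀ q, IsPartialAut R (g q) A' ∧ MapsTo (g q) A' (C q)) ∧
      ∀ q k, ∃ w, ψ w = f q k ∘ g q := by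
  have := Fintype.ofFinite (Σ q, K q)
  have hδ : 0 < μ.real A / 2 ^ m := by positivity
  obtain ⟨N, B, hN, hBA, hB, hfill⟩ := h.isArray.exists_fill (M := 2 ^ m) hR.invariant
    hR.equivalence.refl hA (fun i ↦ h.mapsTo i.1 i.2) hδ (fun i ↦ hC i.1)
    (by push_cast; field_simp)
  let e : (Fin m → Bool) ≃ (Σ q, K q) ⊕ Fin N := Fintype.equivOfCardEq (by simp [← hN])
  let col : (Σ q, K q) ⊕ Fin N → Q ⊕ Fin N := Sum.map Sigma.fst id
  have measure_base (i : Q ⊕ Fin N) : μ.real (Sum.elim C B i) = μ.real A / 2 ^ m := by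
    rcases i with q | j
    exacts [hC q, hB j]
  have measurable_base (i : Q ⊕ Fin N) : MeasurableSet (Sum.elim C B i) := by
    rcases i with q | j
    exacts [h.measurableSet q, (hfill.isPartialAut (.inr j)).measurableSet]
  obtain ⟨A', hA', g, hg⟩ := hR.exists_common_base measurable_base (i₀ := col (e default)) fun i ↦
    (measureReal_eq_measureReal_iff).1 ((measure_base _).trans (measure_base i).symm)
  have mapsTo_base (i : (Σ q, K q) ⊕ Fin N) :
      MapsTo (g (col i)) A' (Sum.elim (fun i : Σ q, K q ↦ C i.1) B i) := by
    rcases i with i | j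
    exacts [(hg _).2, (hg _).2]
  refine ⟨A', _, fun q ↦ g (.inl q), (hfill.comp_isPartialAut (fun i ↦ (hg (col i)).1) mapsTo_base
    fun _ _ _ ↦ hR.equivalence.trans).comp_injective e.injective, fun w ↦ ?_, ?_,
    fun q ↦ hg (.inl q), fun q k ↦ ⟨e.symm (.inl ⟨q, k⟩), ?_⟩⟩
  · refine MapsTo.comp ?_ (mapsTo_base (e w))
    rcases e w with i | j
    exacts [h.mapsTo i.1 i.2, hBA j]
  · rw [measureReal_def, hA', ← measureReal_def, measure_base]
  · simp only [e.apply_symm_apply]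
    rfl

theorem IsErgodicHyperfinite.exists_dyadic_refinement [NullSingletonClass μ]
    (hR : IsErgodicHyperfinite μ R) (hS : IsFiniteBorelEquiv S) (hSR : ∀ x y, S x y → R x y)
    [Countable Λ] [MeasurableSpace Λ] [MeasurableSingletonClass Λ] (hP : Measurable P)
    (hA : MeasurableSet A) (hA₀ : 0 < μ.real A) {ε : ℝ} (hε : 0 < ε) :
    ∃ m > 0, ∃ (A' : Set X) (ψ : (Fin m → Bool) → X → X) (G : Set X), IsArray R ψ (fun _ ↦ A') ∧
      (∀ w, MapsTo (ψ w) A' A) ∧ μ.real A' * 2 ^ m = μ.real A ∧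
      MeasurableSet G ∧ G ⊆ A ∧ μ.real (A \ G) ≤ ε ∧
      (∀ x ∈ G, ∀ y ∈ G, S x y → ∃ a ∈ A', ∃ w w', ψ w a = x ∧ ψ w' a = y) ∧
      ∀ w, ∀ a ∈ A', ∀ b ∈ A', ψ w a ∈ G → P (ψ w a) = P (ψ w b) := by
  obtain ⟨γ, D, hγ⟩ := hR.exists_isGenerating
  obtain ⟨C, hC, hCA⟩ := hγ.exists_isCastle hS hSR hP hA
  obtain ⟨m, hm, t, N, B, hB, hμB, hcard⟩ := hC.exists_subdivision hR.invariant hCA hA₀ hε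
  obtain ⟨A', ψ, g, hψ, hψA, hμA', hg, hψg⟩ := hB.exists_dyadic_array hR hA hA₀ hμB
  have castle := hB.comp_isPartialAut (fun q ↦ (hg q).1) (fun q ↦ (hg q).2)
    fun _ _ _ ↦ hR.equivalence.trans
  refine ⟨m, hm, A', ψ, _, hψ, hψA, by rw [hμA']; field_simp, castle.isArray.measurableSet_iUnion,
    iUnion_subset fun i ↦ (castle.mapsTo _ _).image_subset, ?_, fun x hx y hy hxy ↦ ?_,
    fun w a ha b hb hw ↦ ?_⟩
  · rw [measureReal_sdiff (iUnion_subset fun i ↦ (castle.mapsTo _ _).image_subset)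
      castle.isArray.measurableSet_iUnion,
      (castle.isArray.hasSum_measureReal hR.invariant).unique (hasSum_fintype _)]
    simp only [hμA', Finset.sum_const, Finset.card_univ, nsmul_eq_mul]
    linarith
  · obtain ⟨⟨q, k⟩, a, ha, rfl⟩ := mem_iUnion.1 hx
    have hyA : y ∈ A := (iUnion_subset fun i ↦ (castle.mapsTo _ _).image_subset) hy
    obtain ⟨k', rfl⟩ := castle.exists_eq q k a ha y hyA hxy
    obtain ⟨w, hw⟩ := hψg q k
    obtain ⟨w', hw'⟩ := hψg q k'
    exact ⟨a, ha, w, w', congrFun hw a, congrFun hw' a⟩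
  · obtain ⟨⟨q, k⟩, c, hc, hca⟩ := mem_iUnion.1 hw
    obtain ⟨w', hw'⟩ := hψg q k
    obtain ⟨rfl, -⟩ := hψ.eq_of_apply_eq ha hc (hca.symm.trans (congrFun hw' c).symm)
    rw [hw']
    exact castle.eq_of_mem q k a ha b hb

end Refinement

section DyadicArray

theorem IsExhaustion.exists_subrel_of_notMem {X : Type*} [MeasurableSpace X] {μ : Measure X}
    [IsFiniteMeasure μ] {R T : X → X → Prop} {S : ℕ → X → X → Prop} {γ : ℕ → X → X} {D : ℕ → Set X}
    (hS : IsExhaustion R S) (hγ : IsGenerating R γ D)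
    (hT : MeasurableSet {p : X × X | T p.1 p.2}) (hTR : ∀ x y, T x y → R x y)
    (hTfin : ∀ x, {y | T x y}.Finite) {ε : ℝ} (hε : 0 < ε) :
    ∃ (k : ℕ) (E : Set X), MeasurableSet E ∧ μ.real E ≤ ε ∧ ∀ x ∉ E, ∀ y, T x y → S k x y := by
  let E (k : ℕ) : Set X := {x | ∃ l, x ∈ D l ∧ T x (γ l x) ∧ ¬ S k x (γ l x)}
  have measurableSet_E (k : ℕ) : MeasurableSet (E k) := by
    have measurable_graph (l : ℕ) : Measurable fun x ↦ (x, γ l x) :=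
      measurable_id.prodMk (hγ.isPartialAut l).measurable
    exact measurableSet_setOfPred.2 <| .exists fun l ↦ (hγ.isPartialAut l).measurableSet.mem.and <|
      (measurable_graph l hT).mem.and
        (measurable_graph l (hS.isFiniteBorelEquiv k).measurableSet).mem.not
  have antitone_E : Antitone E := fun k k' hk x ⟨l, hl, hT, hnS⟩ ↦
    ⟨l, hl, hT, fun h ↦ hnS (hS.monotone hk _ _ h)⟩
  have iInter_E : ⋂ k, E k = ∅ := by
    refine eq_empty_of_forall_notMem fun x hx ↦ ?_
    have eventually_rel : ∀ y ∈ {y | T x y}, ∀ᶠ k in atTop, S k x y := fun y hy ↦ by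
      obtain ⟨k, hk⟩ := (hS.rel_iff x y).1 (hTR x y hy)
      exact (eventually_ge_atTop k).mono fun k' hk' ↦ hS.monotone hk' _ _ hk
    obtain ⟨k, hk⟩ := ((eventually_all_finite (hTfin x)).2 eventually_rel).exists
    obtain ⟨l, -, hT, hnS⟩ := mem_iInter.1 hx k
    exact hnS (hk _ hT)
  have tendsto_E := tendsto_measure_iInter_atTop (μ := μ)
    (fun k ↦ (measurableSet_E k).nullMeasurableSet) antitone_E ⟨0, measure_ne_top _ _⟩
  rw [iInter_E, measure_empty] at tendsto_E
  obtain ⟨k, hk⟩ := (tendsto_E.eventually_lt_const (ENNReal.ofReal_pos.2 hε)).exists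
  refine ⟨k, E k, measurableSet_E k, ENNReal.toReal_le_of_le_ofReal hε.le hk.le,
    fun x hx y hxy ↦ by_contra fun hnS ↦ hx ?_⟩
  obtain ⟨l, hl, rfl⟩ := hγ.exists_eq x y (hTR x y hxy)
  exact ⟨l, hl, hxy, hnS⟩

variable {X : Type*} [MeasurableSpace X] {μ : Measure X} {R : X → X → Prop}

theorem IsArray.exists_rel_of_rel_apply {ι : Type*} [Finite ι] {f : ι → X → X} {A : Set X}
    [IsFiniteMeasure μ] {S : ℕ → X → X → Prop} (h : IsArray R f fun _ ↦ A) (hA : MeasurableSet A)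
    (hR : IsErgodicHyperfinite μ R) (hS : IsExhaustion R S) (N : ℕ) {ε : ℝ} (hε : 0 < ε) :
    ∃ (k : ℕ) (E : Set X), MeasurableSet E ∧ μ.real E ≤ ε ∧
      ∀ a ∈ A \ E, ∀ b ∈ A, ∀ i j, S N (f i a) (f j b) → S k a b := by
  let T (a b : X) : Prop := a ∈ A ∧ b ∈ A ∧ ∃ i j, S N (f i a) (f j b)
  have measurableSet_T : MeasurableSet {p : X × X | T p.1 p.2} := by
    have measurableSet_rel (i j : ι) : MeasurableSet {p : X × X | S N (f i p.1) (f j p.2)} :=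
      ((h.isPartialAut i).measurable.prodMap (h.isPartialAut j).measurable)
        (hS.isFiniteBorelEquiv N).measurableSet
    exact measurableSet_setOfPred.2 <| (measurable_fst hA).mem.and <| (measurable_snd hA).mem.and <|
      .exists fun i ↦ .exists fun j ↦ (measurableSet_rel i j).mem
  have rel_of_T : ∀ a b, T a b → R a b := by
    rintro a b ⟨ha, hb, i, j, hab⟩
    exact hR.equivalence.trans ((h.isPartialAut i).rel a ha)
      (hR.equivalence.trans (hS.rel hab) (hR.equivalence.symm ((h.isPartialAut j).rel b hb)))
  have finite_T (a : X) : {b | T a b}.Finite := by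
    have finite_section (i j : ι) : (A ∩ f j ⁻¹' {y | S N (f i a) y}).Finite :=
      .of_finite_image (((hS.isFiniteBorelEquiv N).finite (f i a)).subset
        (image_subset_iff.2 inter_subset_right)) ((h.isPartialAut j).injOn.mono inter_subset_left)
    refine (finite_iUnion fun i ↦ finite_iUnion fun j ↦ finite_section i j).subset ?_
    rintro b ⟨-, hb, i, j, hab⟩
    exact mem_iUnion₂.2 ⟨i, j, hb, hab⟩
  obtain ⟨γ, D, hγ⟩ := hR.exists_isGenerating
  obtain ⟨k, E, hE, hμE, hSk⟩ :=
    hS.exists_subrel_of_notMem (μ := μ) hγ measurableSet_T rel_of_T finite_T hε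
  exact ⟨k, E, hE, hμE, fun a ha b hb i j hab ↦ hSk a ha.2 b ⟨ha.1, hb, i, j, hab⟩⟩

/-- A Rokhlin tower for `R` of full measure whose `2 ^ depth` floors are indexed by binary words. -/
structure DyadicArray (μ : Measure X) (R : X → X → Prop) where
  depth : ℕ
  base : Set X
  map : (Fin depth → Bool) → X → X
  isArray : IsArray R map fun _ ↦ base
  measureReal_base : μ.real base * 2 ^ depth = 1

namespace DyadicArray

/-- `t` refines `s` if each column of `t` is cut into columns of `s`, obtained by fixing the bits
of the index from position `s.depth` on, while the first `s.depth` bits index the floors of `s`. -/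
structure Refines (t s : DyadicArray μ R) : Prop where
  depth_le : s.depth ≤ t.depth
  exists_eq : ∀ a ∈ t.base, ∀ w : Fin t.depth → Bool, ∃ b ∈ s.base, ∀ w' : Fin t.depth → Bool,
    (∀ i : Fin t.depth, s.depth ≤ i → w' i = w i) →
      t.map w' a = s.map (w' ∘ Fin.castLE depth_le) b

instance : Preorder (DyadicArray μ R) where
  le s t := t.Refines s
  le_refl t := ⟨le_rfl, fun a ha _ ↦ ⟨a, ha, fun _ _ ↦ rfl⟩⟩
  le_trans r s t hrs hst := by
    refine ⟨hrs.depth_le.trans hst.depth_le, fun a ha w ↦ ?_⟩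
    obtain ⟨b, hb, hab⟩ := hst.exists_eq a ha w
    obtain ⟨c, hc, hbc⟩ := hrs.exists_eq b hb (w ∘ Fin.castLE hst.depth_le)
    refine ⟨c, hc, fun w' hw' ↦ ?_⟩
    rw [hab w' fun i hi ↦ hw' i (hrs.depth_le.trans hi),
      hbc (w' ∘ Fin.castLE hst.depth_le) fun i hi ↦ hw' (Fin.castLE hst.depth_le i) hi]
    rfl

section Refines

variable {s t : DyadicArray μ R} {a b : X} {v : Fin s.depth → Bool} {w : Fin t.depth → Bool}

theorem eq_comp_castLE_of_map_eq (hst : s ≤ t) (ha : a ∈ t.base) (hb : b ∈ s.base)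
    (h : t.map w a = s.map v b) : w ∘ Fin.castLE hst.depth_le = v := by
  obtain ⟨c, hc, hac⟩ := hst.exists_eq a ha w
  exact (s.isArray.eq_of_apply_eq hc hb ((hac w fun _ _ ↦ rfl).symm.trans h)).1

theorem eq_of_depth_le_of_map_eq {a' : X} {v' : Fin s.depth → Bool} {w' : Fin t.depth → Bool}
    (hst : s ≤ t) (ha : a ∈ t.base) (ha' : a' ∈ t.base) (hb : b ∈ s.base)
    (h : t.map w a = s.map v b) (h' : t.map w' a' = s.map v' b) {i : Fin t.depth}
    (hi : s.depth ≤ i) : w i = w' i := by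
  obtain ⟨c, hc, hac⟩ := hst.exists_eq a ha w
  obtain ⟨-, rfl⟩ := s.isArray.eq_of_apply_eq hc hb ((hac w fun _ _ ↦ rfl).symm.trans h)
  let u (j : Fin t.depth) : Bool := if hj : (j : ℕ) < s.depth then v' ⟨j, hj⟩ else w j
  have u_low : u ∘ Fin.castLE hst.depth_le = v' := funext fun j ↦ dif_pos j.2
  have u_high (j : Fin t.depth) (hj : s.depth ≤ j) : u j = w j := dif_neg (not_lt.2 hj)
  have map_u : t.map u a = t.map w' a' := by rw [hac u u_high, u_low, h']
  rw [← (t.isArray.eq_of_apply_eq ha ha' map_u).1, u_high i hi]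

end Refines

/-- The dyadic array obtained from `t` and an array `ψ` filling its base: the new bits, which come
last, index the floors of `ψ`. -/
def extend (t : DyadicArray μ R) {m : ℕ} {A : Set X} {ψ : (Fin m → Bool) → X → X}
    (hψ : IsArray R ψ fun _ ↦ A) (hψt : ∀ w, MapsTo (ψ w) A t.base)
    (hA : μ.real A * 2 ^ m = μ.real t.base) (hR : ∀ x y z, R x y → R y z → R x z) :
    DyadicArray μ R where
  depth := t.depth + m
  base := A
  map w := t.map (w ∘ Fin.castAdd m) ∘ ψ (w ∘ Fin.natAdd t.depth)
  isArray := (t.isArray.comp_isArray hψ hψt hR).comp_injective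
    (Fin.appendEquiv t.depth m).symm.injective
  measureReal_base := by rw [pow_add, mul_left_comm, hA, mul_comm, t.measureReal_base]

theorem measurableSet_base (t : DyadicArray μ R) : MeasurableSet t.base :=
  (t.isArray.isPartialAut default).measurableSet

theorem measureReal_base_pos (t : DyadicArray μ R) : 0 < μ.real t.base :=
  pos_of_mul_pos_left (t.measureReal_base ▸ one_pos) (by positivity)

section Extend

variable {t : DyadicArray μ R} {m : ℕ} {A : Set X} {ψ : (Fin m → Bool) → X → X}
  {hψ : IsArray R ψ fun _ ↦ A} {hψt : ∀ w, MapsTo (ψ w) A t.base}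
  {hA : μ.real A * 2 ^ m = μ.real t.base} {hR : ∀ x y z, R x y → R y z → R x z}

theorem le_extend : t ≤ t.extend hψ hψt hA hR := by
  refine ⟨Nat.le_add_right _ _, fun a ha w ↦ ⟨ψ (w ∘ Fin.natAdd t.depth) a, hψt _ ha,
    fun w' hw' ↦ ?_⟩⟩
  have high_eq : w' ∘ Fin.natAdd t.depth = w ∘ Fin.natAdd t.depth :=
    funext fun i ↦ hw' _ (Nat.le_add_right _ _)
  change t.map _ (ψ (w' ∘ Fin.natAdd t.depth) a) = _
  rw [high_eq]
  rfl

theorem extend_map_append (v : Fin t.depth → Bool) (w : Fin m → Bool) (a : X) :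
    (t.extend hψ hψt hA hR).map (Fin.append v w) a = t.map v (ψ w a) := by
  have low_eq : Fin.append v w ∘ Fin.castAdd m = v := funext (Fin.append_left v w)
  have high_eq : Fin.append v w ∘ Fin.natAdd t.depth = w := funext (Fin.append_right v w)
  change t.map (Fin.append v w ∘ Fin.castAdd m) (ψ (Fin.append v w ∘ Fin.natAdd t.depth) a) = _
  rw [low_eq, high_eq]

end Extend

/-- Any two `S`-related points of `G` lie in the same column of `t`. -/
def CapturesOn (t : DyadicArray μ R) (S : X → X → Prop) (G : Set X) : Prop :=
  ∀ x ∈ G, ∀ y ∈ G, S x y → ∃ a ∈ t.base, ∃ w w', t.map w a = x ∧ t.map w' a = y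

/-- Every floor of `t` that meets `G` lies inside `B` or outside `B`. -/
def DecidesOn (t : DyadicArray μ R) (B G : Set X) : Prop :=
  ∀ w, ∀ a ∈ t.base, ∀ b ∈ t.base, t.map w a ∈ G → (t.map w a ∈ B ↔ t.map w b ∈ B)

theorem measurableSet_iUnion_image [StandardBorelSpace X] (t : DyadicArray μ R) {C : Set X}
    (hC : MeasurableSet C) (hCt : C ⊆ t.base) : MeasurableSet (⋃ w, t.map w '' C) :=
  (t.isArray.mono (fun _ ↦ hC) fun _ ↦ hCt).measurableSet_iUnion

theorem measureReal_compl_iUnion_image [StandardBorelSpace X] [IsProbabilityMeasure μ]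
    (hμ : InvariantRel μ R) (t : DyadicArray μ R) {C : Set X} (hC : MeasurableSet C)
    (hCt : C ⊆ t.base) :
    μ.real (⋃ w, t.map w '' C)ᶜ = μ.real (t.base \ C) * 2 ^ t.depth := by
  rw [probReal_compl_eq_one_sub (t.measurableSet_iUnion_image hC hCt),
    ((t.isArray.mono (fun _ ↦ hC) fun _ ↦ hCt).hasSum_measureReal hμ).unique (hasSum_fintype _),
    measureReal_sdiff hCt hC, sub_mul, t.measureReal_base]
  simp [mul_comm]

theorem exists_refinement [StandardBorelSpace X] [IsProbabilityMeasure μ] [NullSingletonClass μ]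
    (hR : IsErgodicHyperfinite μ R) {S : ℕ → X → X → Prop} (hS : IsExhaustion R S)
    (t : DyadicArray μ R) (N : ℕ) {B : Set X} (hB : MeasurableSet B) {ε : ℝ} (hε : 0 < ε) :
    ∃ (t' : DyadicArray μ R) (G : Set X), t ≤ t' ∧ t.depth < t'.depth ∧ μ.real Gᶜ ≤ ε ∧
      t'.CapturesOn (S N) G ∧ t'.DecidesOn B G := by
  have hδ : 0 < ε / 2 / 2 ^ t.depth := by positivity
  obtain ⟨k, E, hE, hμE, hSk⟩ :=
    t.isArray.exists_rel_of_rel_apply t.measurableSet_base hR hS N hδ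
  have measurable_B (v : Fin t.depth → Bool) : Measurable fun a ↦ t.map v a ∈ B :=
    ((t.isArray.isPartialAut v).measurable hB).mem
  obtain ⟨m, hm, A, ψ, G, hψ, hψt, hμA, hG, hGt, hμG, hcapt, hdec⟩ := hR.exists_dyadic_refinement
    (hS.isFiniteBorelEquiv k) (fun _ _ ↦ hS.rel) (measurable_pi_lambda _ measurable_B)
    t.measurableSet_base t.measureReal_base_pos hδ
  have hGEt : G \ E ⊆ t.base := sdiff_subset.trans hGt
  refine ⟨t.extend hψ hψt hμA fun _ _ _ ↦ hR.equivalence.trans, ⋃ v, t.map v '' (G \ E),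
    le_extend, Nat.lt_add_of_pos_right hm, ?_, ?_, ?_⟩
  · rw [t.measureReal_compl_iUnion_image hR.invariant (hG.diff hE) hGEt,
      ← le_div_iff₀ (by positivity)]
    calc μ.real (t.base \ (G \ E))
        ≤ μ.real (t.base \ G ∪ E) := measureReal_mono fun x hx ↦ by
          by_cases x ∈ E <;> simp_all
      _ ≤ μ.real (t.base \ G) + μ.real E := measureReal_union_le _ _
      _ ≤ ε / 2 / 2 ^ t.depth + ε / 2 / 2 ^ t.depth := add_le_add hμG hμE
      _ = ε / 2 ^ t.depth := by rw [← add_div, add_halves]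
  · intro x hx y hy hxy
    obtain ⟨v, a, ha, rfl⟩ := mem_iUnion.1 hx
    obtain ⟨v', b, hb, rfl⟩ := mem_iUnion.1 hy
    obtain ⟨c, hc, w, w', rfl, rfl⟩ :=
      hcapt a ha.1 b hb.1 (hSk a ⟨hGEt ha, ha.2⟩ b (hGEt hb) v v' hxy)
    exact ⟨c, hc, Fin.append v w, Fin.append v' w', extend_map_append .., extend_map_append ..⟩
  · intro w a ha b hb hwa
    obtain ⟨v, c, hc, hca⟩ := mem_iUnion.1 hwa
    obtain ⟨-, rfl⟩ := t.isArray.eq_of_apply_eq (hGEt hc) (hψt _ ha) hca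
    exact iff_of_eq (congrFun (hdec _ a ha b hb hc.1) _)

end DyadicArray

end DyadicArray

section Coding

variable {X : Type*} [MeasurableSpace X] {μ : Measure X} {R : X → X → Prop}
  {S : ℕ → X → X → Prop} {B G : ℕ → Set X} {t : ℕ → DyadicArray μ R}

/-- A sequence of dyadic arrays, each refining the previous one, whose member of index `N + 1`
captures `S N` and decides `B N` on a set `G N` of measure at least `1 - 2 ^ (-N)`. -/
structure IsResolving (S : ℕ → X → X → Prop) (B G : ℕ → Set X) (t : ℕ → DyadicArray μ R) :
    Prop where
  monotone : Monotone t
  strictMono_depth : StrictMono fun N ↦ (t N).depth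
  measureReal_compl_le : ∀ N, μ.real (G N)ᶜ ≤ (1 / 2) ^ N
  capturesOn : ∀ N, (t (N + 1)).CapturesOn (S N) (G N)
  decidesOn : ∀ N, (t (N + 1)).DecidesOn (B N) (G N)

/-- The dyadic array of depth `0`, with the whole space as its only floor. -/
def DyadicArray.trivial (μ : Measure X) [IsProbabilityMeasure μ] (hR : ∀ x, R x x) :
    DyadicArray μ R where
  depth := 0
  base := univ
  map _ := id
  isArray := ⟨fun _ ↦ isPartialAut_id hR .univ, Subsingleton.pairwise⟩
  measureReal_base := by simp

theorem exists_isResolving [StandardBorelSpace X] [IsProbabilityMeasure μ] [NullSingletonClass μ]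
    (hR : IsErgodicHyperfinite μ R) (hS : IsExhaustion R S) (hB : ∀ N, MeasurableSet (B N)) :
    ∃ (t : ℕ → DyadicArray μ R) (G : ℕ → Set X), IsResolving S B G t := by
  choose next G le_next depth_lt hμG hcapt hdec using fun (N : ℕ) (t : DyadicArray μ R) ↦
    t.exists_refinement hR hS N (hB N) (ε := (1 / 2) ^ N) (by positivity)
  let t : ℕ → DyadicArray μ R := Nat.rec (.trivial μ hR.equivalence.refl) next
  exact ⟨t, fun N ↦ G N (t N), monotone_nat_of_le_succ fun N ↦ le_next N (t N),
    strictMono_nat_of_lt_succ fun N ↦ depth_lt N (t N), fun N ↦ hμG N (t N), fun N ↦ hcapt N (t N),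
    fun N ↦ hdec N (t N)⟩

open Classical in
/-- The binary sequence whose first `(t N).depth` terms form the index of the floor of `t N`
containing `x`, for every `N`. Terms not determined by any floor are `false`. -/
noncomputable def code (t : ℕ → DyadicArray μ R) (x : X) (i : ℕ) : Bool :=
  decide (∃ N w, (∃ hi : i < (t N).depth, w ⟨i, hi⟩ = true) ∧ x ∈ (t N).map w '' (t N).base)

theorem code_eq_true_iff {x : X} {i : ℕ} : code t x i = true ↔
    ∃ N w, (∃ hi : i < (t N).depth, w ⟨i, hi⟩ = true) ∧ x ∈ (t N).map w '' (t N).base := by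
  classical
  exact decide_eq_true_iff

theorem code_map (ht : Monotone t) {N : ℕ} {a : X} (ha : a ∈ (t N).base)
    (w : Fin (t N).depth → Bool) (i : Fin (t N).depth) : code t ((t N).map w a) i = w i := by
  refine Bool.eq_iff_iff.2 (code_eq_true_iff.trans ⟨?_, fun hw ↦ ⟨N, w, ⟨i.2, hw⟩, a, ha, rfl⟩⟩)
  rintro ⟨M, v, ⟨hi, hv⟩, b, hb, hab⟩
  rcases le_total N M with hNM | hMN
  · rwa [← DyadicArray.eq_comp_castLE_of_map_eq (ht hNM) hb ha hab]
  · rwa [← DyadicArray.eq_comp_castLE_of_map_eq (ht hMN) ha hb hab.symm] at hv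

theorem measurable_code [StandardBorelSpace X] : Measurable (code t) := by
  refine measurable_pi_lambda _ fun i ↦ measurable_to_bool ?_
  change MeasurableSet {x | code t x i = true}
  simp only [code_eq_true_iff]
  exact measurableSet_setOfPred.2 <| .exists fun N ↦ .exists fun w ↦
    .and measurable_const ((t N).isArray.isPartialAut w).measurableSet_image.mem

/-- The points that lie on a floor of every `t N`, so that `code t` records all of these floors. -/
def commonSupport (t : ℕ → DyadicArray μ R) : Set X :=
  ⋂ N, ⋃ w, (t N).map w '' (t N).base

theorem exists_map_eq_of_mem_commonSupport {x : X} (hx : x ∈ commonSupport t) (N : ℕ) :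
    ∃ w, ∃ a ∈ (t N).base, (t N).map w a = x :=
  mem_iUnion.1 (mem_iInter.1 hx N)

theorem ae_mem_commonSupport [StandardBorelSpace X] [IsProbabilityMeasure μ] (hμ : InvariantRel μ R)
    (t : ℕ → DyadicArray μ R) : ∀ᵐ x ∂μ, x ∈ commonSupport t := by
  simp only [commonSupport, mem_iInter]
  refine ae_all_iff.2 fun N ↦ ?_
  have measure_compl := (t N).measureReal_compl_iUnion_image hμ (t N).measurableSet_base subset_rfl
  rwa [sdiff_self, measureReal_empty, zero_mul, measureReal_eq_zero_iff] at measure_compl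

theorem code_eq_code_of_depth_le (ht : Monotone t) (hdepth : StrictMono fun N ↦ (t N).depth)
    {N i : ℕ} {a : X} {v w : Fin (t N).depth → Bool} (ha : a ∈ (t N).base)
    (hv : (t N).map v a ∈ commonSupport t) (hw : (t N).map w a ∈ commonSupport t)
    (hi : (t N).depth ≤ i) : code t ((t N).map v a) i = code t ((t N).map w a) i := by
  obtain ⟨M, hNM, hiM⟩ : ∃ M ≥ N, i < (t M).depth :=
    ((eventually_ge_atTop N).and (hdepth.tendsto_atTop.eventually_gt_atTop i)).exists
  obtain ⟨v', b, hb, hv'⟩ := exists_map_eq_of_mem_commonSupport hv M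
  obtain ⟨w', c, hc, hw'⟩ := exists_map_eq_of_mem_commonSupport hw M
  calc code t ((t N).map v a) i
      = v' ⟨i, hiM⟩ := by rw [← hv']; exact code_map ht hb v' ⟨i, hiM⟩
    _ = w' ⟨i, hiM⟩ := DyadicArray.eq_of_depth_le_of_map_eq (ht hNM) hb hc ha hv' hw' hi
    _ = code t ((t N).map w a) i := by rw [← hw']; exact (code_map ht hc w' ⟨i, hiM⟩).symm

theorem measureReal_preimage_code_cylinder [StandardBorelSpace X] [IsProbabilityMeasure μ]
    (hμ : InvariantRel μ R) (ht : Monotone t) (N : ℕ) (z : ℕ → Bool) :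
    μ.real (code t ⁻¹' PiNat.cylinder z (t N).depth) = (1 / 2) ^ (t N).depth := by
  have ae_eq : code t ⁻¹' PiNat.cylinder z (t N).depth =ᵐ[μ]
      (t N).map (fun i ↦ z i) '' (t N).base := by
    filter_upwards [ae_mem_commonSupport hμ t] with x hx
    obtain ⟨w, a, ha, rfl⟩ := exists_map_eq_of_mem_commonSupport hx N
    refine propext ⟨fun hz ↦ ⟨a, ha, ?_⟩, ?_⟩
    · congr
      funext i
      exact ((code_map ht ha w i).symm.trans (PiNat.mem_cylinder_iff.1 hz i i.2)).symm
    · rintro ⟨b, hb, hab⟩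
      obtain ⟨rfl, -⟩ := (t N).isArray.eq_of_apply_eq hb ha hab
      exact PiNat.mem_cylinder_iff.2 fun i hi ↦ code_map ht ha _ ⟨i, hi⟩
  rw [measureReal_congr ae_eq, measureReal_def,
    ((t N).isArray.isPartialAut _).measure_image hμ, ← measureReal_def, one_div_pow,
    eq_one_div_of_mul_eq_one_left (t N).measureReal_base]

end Coding

section CodingInjective

variable {X : Type*} [MeasurableSpace X] {μ : Measure X} {R : X → X → Prop}
  {S : ℕ → X → X → Prop} {B G : ℕ → Set X} {t : ℕ → DyadicArray μ R}

/-- The points at which a resolving sequence of arrays eventually does its job: they lie on a floor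
of every `t N` and in all but finitely many of the sets `G N`. -/
def resolvedSet (t : ℕ → DyadicArray μ R) (G : ℕ → Set X) : Set X :=
  commonSupport t ∩ {x | ∀ᶠ N in atTop, x ∈ G N}

theorem IsResolving.ae_mem_resolvedSet [StandardBorelSpace X] [IsProbabilityMeasure μ]
    (ht : IsResolving S B G t) (hμ : InvariantRel μ R) : ∀ᵐ x ∂μ, x ∈ resolvedSet t G := by
  have measure_compl_le (N : ℕ) : μ (G N)ᶜ ≤ (1 / 2) ^ N := by
    rw [← ofReal_measureReal]
    refine (ENNReal.ofReal_le_ofReal (ht.measureReal_compl_le N)).trans_eq ?_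
    rw [ENNReal.ofReal_pow (by positivity), ENNReal.ofReal_div_of_pos two_pos]
    simp
  have tsum_ne_top : ∑' N, μ (G N)ᶜ ≠ ⊤ := by
    refine ne_top_of_le_ne_top ?_ (ENNReal.tsum_le_tsum measure_compl_le)
    rw [one_div, ENNReal.tsum_geometric_two]
    exact ENNReal.ofNat_ne_top
  filter_upwards [ae_mem_commonSupport hμ t, ae_eventually_notMem tsum_ne_top] with x hx hxG
  exact ⟨hx, hxG.mono fun N ↦ not_not.1⟩

theorem IsResolving.injOn_code (ht : IsResolving S B G t)
    (hB : ∀ x y, x ≠ y → ∃ᶠ N in atTop, ¬(x ∈ B N ↔ y ∈ B N)) :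
    InjOn (code t) (resolvedSet t G) := by
  intro x hx y hy hxy
  by_contra hne
  obtain ⟨N, hN, hxG⟩ := ((hB x y hne).and_eventually hx.2).exists
  obtain ⟨v, a, ha, rfl⟩ := exists_map_eq_of_mem_commonSupport hx.1 (N + 1)
  obtain ⟨w, b, hb, rfl⟩ := exists_map_eq_of_mem_commonSupport hy.1 (N + 1)
  obtain rfl : v = w := funext fun i ↦ by
    rw [← code_map ht.monotone ha v i, ← code_map ht.monotone hb w i, hxy]
  exact hN (ht.decidesOn N v a ha b hb hxG)

theorem IsResolving.code_eventuallyEq_of_rel (ht : IsResolving S B G t) (hS : IsExhaustion R S)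
    {x y : X} (hx : x ∈ resolvedSet t G) (hy : y ∈ resolvedSet t G) (hxy : R x y) :
    code t x =ᶠ[atTop] code t y := by
  obtain ⟨M, hM⟩ := (hS.rel_iff x y).1 hxy
  obtain ⟨N, hMN, hxN, hyN⟩ := ((eventually_ge_atTop M).and (hx.2.and hy.2)).exists
  obtain ⟨a, ha, v, w, rfl, rfl⟩ := ht.capturesOn N x hxN y hyN (hS.monotone hMN x y hM)
  filter_upwards [eventually_ge_atTop (t (N + 1)).depth] with i hi
  exact code_eq_code_of_depth_le ht.monotone ht.strictMono_depth ha hx.1 hy.1 hi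

-- The point `z` over the base point of `x`, on the floor of `y`, has the same code as `y`.
theorem IsResolving.rel_of_code_eventuallyEq (ht : IsResolving S B G t) (hR : Equivalence R)
    {Y : Set X} (hYR : ∀ x ∈ Y, ∀ y, R x y → y ∈ Y) (hY : Y ⊆ commonSupport t)
    (hinj : InjOn (code t) Y) {x y : X} (hx : x ∈ Y) (hy : y ∈ Y)
    (hxy : code t x =ᶠ[atTop] code t y) : R x y := by
  obtain ⟨M, hM⟩ := eventually_atTop.1 hxy
  obtain ⟨N, hMN⟩ := (ht.strictMono_depth.tendsto_atTop.eventually_ge_atTop M).exists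
  obtain ⟨v, a, ha, rfl⟩ := exists_map_eq_of_mem_commonSupport (hY hx) N
  obtain ⟨w, b, hb, rfl⟩ := exists_map_eq_of_mem_commonSupport (hY hy) N
  set z := (t N).map w a
  have rel_map (u) : R a ((t N).map u a) := ((t N).isArray.isPartialAut u).rel a ha
  have hxz : R ((t N).map v a) z := hR.trans (hR.symm (rel_map v)) (rel_map w)
  have hzY : z ∈ Y := hYR _ hx z hxz
  suffices z = (t N).map w b from this ▸ hxz
  refine hinj hzY hy (funext fun i ↦ ?_)
  rcases lt_or_ge i (t N).depth with hi | hi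
  · exact (code_map ht.monotone ha w ⟨i, hi⟩).trans (code_map ht.monotone hb w ⟨i, hi⟩).symm
  · exact (code_eq_code_of_depth_le ht.monotone ht.strictMono_depth ha (hY hzY) (hY hx) hi).trans
      (hM i (hMN.trans hi))

theorem IsGenerating.exists_invariant_subset {γ : ℕ → X → X} {D : ℕ → Set X}
    (hγ : IsGenerating R γ D) (hR : Equivalence R) (hμ : InvariantRel μ R) {Z : Set X}
    (hZ : ∀ᵐ x ∂μ, x ∈ Z) :
    ∃ Y ⊆ Z, MeasurableSet Y ∧ μ Yᶜ = 0 ∧ ∀ x ∈ Y, ∀ y, R x y → y ∈ Y := by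
  obtain ⟨W, W_ae, W_meas, hWZ⟩ := Filter.Eventually.exists_measurable_mem hZ
  let E (k : ℕ) : Set X := D k ∩ γ k ⁻¹' Wᶜ
  have measurableSet_E (k : ℕ) : MeasurableSet (E k) :=
    (hγ.isPartialAut k).measurableSet.inter ((hγ.isPartialAut k).measurable W_meas.compl)
  have measure_E (k : ℕ) : μ (E k) = 0 := by
    rw [← ((hγ.isPartialAut k).mono (measurableSet_E k) inter_subset_left).measure_image hμ]
    exact measure_mono_null (image_subset_iff.2 fun x hx ↦ hx.2) W_ae
  have mem_of_rel {x y : X} (hx : x ∈ (⋃ k, E k)ᶜ) (hxy : R x y) : y ∈ W := by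
    obtain ⟨k, hk, rfl⟩ := hγ.exists_eq x y hxy
    exact by_contra fun hy ↦ hx (mem_iUnion.2 ⟨k, hk, hy⟩)
  refine ⟨(⋃ k, E k)ᶜ, fun x hx ↦ hWZ x (mem_of_rel hx (hR.refl x)),
    (MeasurableSet.iUnion measurableSet_E).compl, ?_, fun x hx y hxy hy ↦ ?_⟩
  · rw [compl_compl]
    exact measure_iUnion_null measure_E
  · obtain ⟨k, hk, hkW⟩ := mem_iUnion.1 hy
    exact hkW (mem_of_rel hx (hR.trans hxy ((hγ.isPartialAut k).rel y hk)))

theorem exists_seq_measurableSet_frequently_separating (X : Type*) [MeasurableSpace X]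
    [MeasurableSpace.CountablySeparated X] :
    ∃ B : ℕ → Set X, (∀ N, MeasurableSet (B N)) ∧
      ∀ x y, x ≠ y → ∃ᶠ N in atTop, ¬(x ∈ B N ↔ y ∈ B N) := by
  obtain ⟨C, hC, separating⟩ :=
    exists_seq_separating X (p := MeasurableSet) MeasurableSet.empty univ
  refine ⟨fun N ↦ C N.unpair.1, fun N ↦ hC _, fun x y hne ↦ ?_⟩
  obtain ⟨j, hj⟩ : ∃ j, ¬(x ∈ C j ↔ y ∈ C j) := by
    by_contra! h
    exact hne (separating x trivial y trivial h)
  exact frequently_atTop.2 fun M ↦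
    ⟨Nat.pair j M, Nat.right_le_pair j M, by simpa only [Nat.unpair_pair]⟩

end CodingInjective

section CoinTossing

theorem measure_ext_of_cylinder {E : ℕ → Type*} [∀ i, TopologicalSpace (E i)]
    [∀ i, DiscreteTopology (E i)] [∀ i, Countable (E i)] [∀ i, MeasurableSpace (E i)]
    [∀ i, BorelSpace (E i)] {μ ν : Measure (∀ i, E i)} [IsProbabilityMeasure μ]
    [IsProbabilityMeasure ν] {d : ℕ → ℕ} (hd : Tendsto d atTop atTop)
    (h : ∀ N z, μ (PiNat.cylinder z (d N)) = ν (PiNat.cylinder z (d N))) : μ = ν := by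
  let 𝒞 : Set (Set (∀ i, E i)) := {s | ∃ z N, s = PiNat.cylinder z (d N)}
  have isTopologicalBasis : TopologicalSpace.IsTopologicalBasis 𝒞 := by
    refine TopologicalSpace.isTopologicalBasis_of_isOpen_of_nhds ?_ fun z U hzU hU ↦ ?_
    · rintro _ ⟨z, N, rfl⟩
      exact PiNat.isOpen_cylinder E z (d N)
    · obtain ⟨_, ⟨y, n, rfl⟩, hz, hyU⟩ :=
        (PiNat.isTopologicalBasis_cylinders E).exists_subset_of_mem_open hzU hU
      obtain ⟨N, hnN⟩ := (hd.eventually_ge_atTop n).exists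
      rw [← PiNat.mem_cylinder_iff_eq.1 hz] at hyU
      exact ⟨_, ⟨z, N, rfl⟩, PiNat.self_mem_cylinder z _, (PiNat.cylinder_anti z hnN).trans hyU⟩
  have isPiSystem : IsPiSystem 𝒞 := by
    rintro _ ⟨y, M, rfl⟩ _ ⟨z, N, rfl⟩ ⟨x, hxy, hxz⟩
    rw [PiNat.mem_cylinder_iff_eq] at hxy hxz
    rw [← hxy, ← hxz]
    rcases le_total (d M) (d N) with hMN | hNM
    · exact ⟨x, N, inter_eq_right.2 (PiNat.cylinder_anti x hMN)⟩
    · exact ⟨x, M, inter_eq_left.2 (PiNat.cylinder_anti x hNM)⟩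
  refine ext_of_generate_finite 𝒞 ?_ isPiSystem ?_ (by simp)
  · rw [BorelSpace.measurable_eq (α := ∀ i, E i), isTopologicalBasis.borel_eq_generateFrom]
  · rintro _ ⟨z, N, rfl⟩
    exact h N z

/-- The law of a sequence of independent fair coin tosses. -/
noncomputable def coinMeasure : Measure (ℕ → Bool) :=
  .infinitePi fun _ ↦ (PMF.uniformOfFintype Bool).toMeasure

instance : IsProbabilityMeasure coinMeasure :=
  inferInstanceAs (IsProbabilityMeasure (Measure.infinitePi _))

theorem coinMeasure_cylinder (z : ℕ → Bool) (n : ℕ) :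
    coinMeasure (PiNat.cylinder z n) = (1 / 2) ^ n := by
  have cylinder_eq : PiNat.cylinder z n = (Finset.range n : Set ℕ).pi fun i ↦ {z i} := by
    simp only [PiNat.cylinder_eq_pi, Finset.coe_range]
  rw [cylinder_eq, coinMeasure, Measure.infinitePi_pi _ fun _ _ ↦ measurableSet_singleton _]
  simp [PMF.uniformOfFintype_apply]

end CoinTossing

section Isomorphism

variable {X Y Z : Type*} [MeasurableSpace X] [MeasurableSpace Y] [MeasurableSpace Z]
  {μ : Measure X} {ν : Measure Y} {ρ : Measure Z} {R : X → X → Prop} {E : Y → Y → Prop}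
  {F : Z → Z → Prop} {f : X → Y} {A : Set X}

/-- `f` is a measure-preserving isomorphism from the relation `R` to the relation `E`, defined up to
null sets: on the conull set `A` it is injective and carries `R` to `E`. -/
structure IsAEIso (μ : Measure X) (R : X → X → Prop) (ν : Measure Y) (E : Y → Y → Prop) (f : X → Y)
    (A : Set X) : Prop where
  measurePreserving : MeasurePreserving f μ ν
  measurableSet : MeasurableSet A
  measure_compl : μ Aᶜ = 0
  injOn : InjOn f A
  rel_iff : ∀ x ∈ A, ∀ y ∈ A, (R x y ↔ E (f x) (f y))

theorem IsAEIso.measurableSet_image [StandardBorelSpace X] [MeasurableSpace.CountablySeparated Y]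
    (h : IsAEIso μ R ν E f A) : MeasurableSet (f '' A) :=
  h.measurableSet.image_of_measurable_injOn h.measurePreserving.measurable h.injOn

theorem IsAEIso.measure_compl_image [StandardBorelSpace X]
    [MeasurableSpace.CountablySeparated Y] (h : IsAEIso μ R ν E f A) : ν (f '' A)ᶜ = 0 := by
  rw [← h.measurePreserving.measure_preimage h.measurableSet_image.compl.nullMeasurableSet]
  exact measure_mono_null (compl_subset_compl.2 (subset_preimage_image f A)) h.measure_compl

theorem IsAEIso.comp {g : Y → Z} {B : Set Y} (hg : IsAEIso ν E ρ F g B)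
    (hf : IsAEIso μ R ν E f A) : IsAEIso μ R ρ F (g ∘ f) (A ∩ f ⁻¹' B) where
  measurePreserving := hg.measurePreserving.comp hf.measurePreserving
  measurableSet := hf.measurableSet.inter (hf.measurePreserving.measurable hg.measurableSet)
  measure_compl := by
    rw [compl_inter, ← preimage_compl]
    refine measure_union_null hf.measure_compl ?_
    rw [hf.measurePreserving.measure_preimage hg.measurableSet.compl.nullMeasurableSet]
    exact hg.measure_compl
  injOn := hg.injOn.comp (hf.injOn.mono inter_subset_left) fun _ hx ↦ hx.2
  rel_iff x hx y hy := (hf.rel_iff x hx.1 y hy.1).trans (hg.rel_iff _ hx.2 _ hy.2)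

theorem exists_measurable_leftInvOn [StandardBorelSpace X] [Nonempty X]
    [MeasurableSpace.CountablySeparated Y] (hf : Measurable f) (hA : MeasurableSet A)
    (hfA : InjOn f A) : ∃ g : Y → X, Measurable g ∧ LeftInvOn g f A := by
  have := hA.standardBorel
  have measurableEmbedding : MeasurableEmbedding (A.domRestrict f) :=
    (hf.comp measurable_subtype_coe).measurableEmbedding hfA.injective
  obtain ⟨g, hg, hgf⟩ := measurableEmbedding.exists_measurable_extend measurable_subtype_coe
    fun _ ↦ ‹Nonempty X›
  exact ⟨g, hg, fun x hx ↦ congr_fun hgf ⟨x, hx⟩⟩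

theorem IsAEIso.exists_symm [StandardBorelSpace X] [MeasurableSpace.CountablySeparated Y]
    [Nonempty X] (h : IsAEIso μ R ν E f A) :
    ∃ g, IsAEIso ν E μ R g (f '' A) := by
  have f_meas := h.measurePreserving.measurable
  obtain ⟨g, hg, hgf⟩ := exists_measurable_leftInvOn f_meas h.measurableSet h.injOn
  have ae_eq : g ∘ f =ᵐ[μ] id := by
    filter_upwards [show ∀ᵐ x ∂μ, x ∈ A from h.measure_compl] with x hx using hgf hx
  refine ⟨g, ⟨hg, ?_⟩, h.measurableSet_image, h.measure_compl_image, ?_, ?_⟩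
  · rw [← h.measurePreserving.map_eq, Measure.map_map hg f_meas, Measure.map_congr ae_eq,
      Measure.map_id]
  · rintro _ ⟨x, hx, rfl⟩ _ ⟨y, hy, rfl⟩ hxy
    rw [hgf hx, hgf hy] at hxy
    rw [hxy]
  · rintro _ ⟨x, hx, rfl⟩ _ ⟨y, hy, rfl⟩
    rw [hgf hx, hgf hy, h.rel_iff x hx y hy]

end Isomorphism

section Classification

variable {X : Type*} [MeasurableSpace X] [StandardBorelSpace X] {μ : Measure X}
  [IsProbabilityMeasure μ] {R : X → X → Prop}

theorem measurePreserving_code {t : ℕ → DyadicArray μ R} (hμ : InvariantRel μ R)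
    (ht : Monotone t) (hdepth : StrictMono fun N ↦ (t N).depth) :
    MeasurePreserving (code t) μ coinMeasure := by
  have := Measure.isProbabilityMeasure_map (μ := μ) (measurable_code (t := t)).aemeasurable
  refine ⟨measurable_code, measure_ext_of_cylinder hdepth.tendsto_atTop fun N z ↦ ?_⟩
  rw [Measure.map_apply measurable_code (PiNat.isOpen_cylinder _ z _).measurableSet,
    coinMeasure_cylinder, ← ofReal_measureReal, measureReal_preimage_code_cylinder hμ ht,
    ENNReal.ofReal_pow (by positivity), ENNReal.ofReal_div_of_pos two_pos]
  simp

variable [NullSingletonClass μ]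

theorem IsErgodicHyperfinite.exists_isAEIso_coinMeasure (hR : IsErgodicHyperfinite μ R) :
    ∃ f A, IsAEIso μ R coinMeasure (· =ᶠ[atTop] ·) f A := by
  obtain ⟨S, hS⟩ := hR.exists_isExhaustion
  obtain ⟨γ, D, hγ⟩ := hR.exists_isGenerating
  obtain ⟨B, hB, separating⟩ := exists_seq_measurableSet_frequently_separating X
  obtain ⟨t, G, ht⟩ := exists_isResolving hR hS hB
  obtain ⟨A, hAG, hA, hμA, hAR⟩ := hγ.exists_invariant_subset hR.equivalence hR.invariant
    (ht.ae_mem_resolvedSet hR.invariant)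
  have injOn : InjOn (code t) A := (ht.injOn_code separating).mono hAG
  exact ⟨code t, A, measurePreserving_code hR.invariant ht.monotone ht.strictMono_depth, hA, hμA,
    injOn, fun x hx y hy ↦ ⟨ht.code_eventuallyEq_of_rel hS (hAG hx) (hAG hy),
    ht.rel_of_code_eventuallyEq hR.equivalence hAR (hAG.trans inter_subset_left) injOn hx hy⟩⟩

theorem exists_isAEIso_coinMeasure (hR : Equivalence R)
    (hg : MeasurableSet {p : X × X | R p.1 p.2}) (hinv : InvariantRel μ R)
    (herg : ErgodicRel μ R) (hhyp : HyperfiniteRel μ R) :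
    ∃ f A, IsAEIso μ R coinMeasure (· =ᶠ[atTop] ·) f A := by
  obtain ⟨Y, R', hY, hμY, rel_iff, hR'⟩ :=
    exists_isErgodicHyperfinite_restrictRel hR hg hinv herg hhyp
  obtain ⟨f, A, hf⟩ := hR'.exists_isAEIso_coinMeasure
  refine ⟨f, A ∩ Y, hf.measurePreserving, hf.measurableSet.inter hY, ?_,
    hf.injOn.mono inter_subset_left, fun x hx y hy ↦ ?_⟩
  · rw [compl_inter]
    exact measure_union_null hf.measure_compl hμY
  · rw [← rel_iff x hx.2 y hy.2, hf.rel_iff x hx.1 y hy.1]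

end Classification

end Dye

/-- **Dye's theorem.** Any two hyperfinite ergodic measured equivalence relations of
type `II₁` (hyperfinite, countable classes, invariant non-atomic probability measure,
ergodic, on a standard Borel space) are isomorphic: there is a Borel isomorphism `θ`
between conull Borel subsets carrying the first measure class to the second and the
first relation to the second. -/
theorem dye_theorem
    {X₁ : Type*} [MeasurableSpace X₁] [StandardBorelSpace X₁]
    {X₂ : Type*} [MeasurableSpace X₂] [StandardBorelSpace X₂]
    (μ₁ : Measure X₁) (hμ₁ : IsProbabilityMeasure μ₁) (hna₁ : NoAtoms μ₁)
    (μ₂ : Measure X₂) (hμ₂ : IsProbabilityMeasure μ₂) (hna₂ : NoAtoms μ₂)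
    (R₁ : X₁ → X₁ → Prop) (hR₁ : Equivalence R₁)
    (hgraph₁ : MeasurableSet {p : X₁ × X₁ | R₁ p.1 p.2})
    (hcount₁ : ∀ x, {y | R₁ x y}.Countable)
    (hinv₁ : InvariantRel μ₁ R₁) (herg₁ : ErgodicRel μ₁ R₁)
    (hhyp₁ : HyperfiniteRel μ₁ R₁)
    (R₂ : X₂ → X₂ → Prop) (hR₂ : Equivalence R₂)
    (hgraph₂ : MeasurableSet {p : X₂ × X₂ | R₂ p.1 p.2})
    (hcount₂ : ∀ x, {y | R₂ x y}.Countable)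
    (hinv₂ : InvariantRel μ₂ R₂) (herg₂ : ErgodicRel μ₂ R₂)
    (hhyp₂ : HyperfiniteRel μ₂ R₂) :
    ∃ (X₁' : Set X₁) (X₂' : Set X₂) (θ : X₁ → X₂),
      MeasurableSet X₁' ∧ μ₁ X₁'ᶜ = 0 ∧ MeasurableSet X₂' ∧ μ₂ X₂'ᶜ = 0 ∧
      Measurable θ ∧ Set.InjOn θ X₁' ∧ θ '' X₁' = X₂' ∧
      (∀ B : Set X₂, MeasurableSet B → (μ₁ (θ ⁻¹' B) = 0 ↔ μ₂ B = 0)) ∧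
      (∀ x ∈ X₁', ∀ y ∈ X₁', (R₁ x y ↔ R₂ (θ x) (θ y))) := by
  have : NullSingletonClass μ₁ := hna₁
  have : NullSingletonClass μ₂ := hna₂
  have : Nonempty X₂ := nonempty_of_isProbabilityMeasure μ₂
  obtain ⟨f₁, A₁, hf₁⟩ := Dye.exists_isAEIso_coinMeasure hR₁ hgraph₁ hinv₁ herg₁ hhyp₁
  obtain ⟨f₂, A₂, hf₂⟩ := Dye.exists_isAEIso_coinMeasure hR₂ hgraph₂ hinv₂ herg₂ hhyp₂
  obtain ⟨g, hg⟩ := hf₂.exists_symm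
  have hθ := hg.comp hf₁
  refine ⟨_, _, g ∘ f₁, hθ.measurableSet, hθ.measure_compl, hθ.measurableSet_image,
    hθ.measure_compl_image, hθ.measurePreserving.measurable, hθ.injOn, rfl, fun B hB ↦ ?_,
    hθ.rel_iff⟩
  rw [hθ.measurePreserving.measure_preimage hB.nullMeasurableSet]
end
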